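/- Let B be a brace that contains a conformal bisubdivision of K_{3,3} (equivalently, contains K_{3,3} as a matching minor), and let C be a cycle of length four in B. Then there exists a conformal bisubdivision of K_{3,3} in B that contains C as a subgraph. -/

import Mathlib

namespace Paper

open SimpleGraph

variable {V : Type*} {W : Type*}

/-- `M` is a perfect matching of the vertex set `S` in the graph `G`:
a set of pairwise disjoint edges of `G`, all within `S`, covering every vertex of `S`. -/
def IsPMOn (G : SimpleGraph V) (S : Set V) (M : Set (Sym2 V)) : Prop :=
  (∀ e ∈ M, e ∈ G.edgeSet) ∧ (∀ e ∈ M, ∀ v ∈ e, v ∈ S) ∧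
    ∀ v ∈ S, ∃! e, e ∈ M ∧ v ∈ e

/-- `M` is a perfect matching of `G`. -/
def IsPM (G : SimpleGraph V) (M : Set (Sym2 V)) : Prop :=
  IsPMOn G Set.univ M

/-- The edges in `F` are pairwise vertex-disjoint. -/
def PairwiseDisjointEdges (F : Set (Sym2 V)) : Prop :=
  ∀ e ∈ F, ∀ f ∈ F, e ≠ f → ∀ x : V, x ∈ e → x ∉ f

/-- All edges of `G` have both endpoints in `S`. -/
def EdgesWithin (G : SimpleGraph V) (S : Set V) : Prop :=
  ∀ ⦃x y : V⦄, G.Adj x y → x ∈ S ∧ y ∈ S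

def ConnectedOn (G : SimpleGraph V) (S : Set V) : Prop :=
  S.Nonempty ∧ ∀ x ∈ S, ∀ y ∈ S, G.Reachable x y

/-- The graph `G` with vertex set `S` is a brace: it is connected and every matching of
size at most two extends to a perfect matching. -/
def IsBraceOn (G : SimpleGraph V) (S : Set V) : Prop :=
  EdgesWithin G S ∧ ConnectedOn G S ∧
    ∀ F : Set (Sym2 V), F ⊆ G.edgeSet → PairwiseDisjointEdges F → F.ncard ≤ 2 →
      ∃ M, IsPMOn G S M ∧ F ⊆ M

def IsBrace (G : SimpleGraph V) : Prop :=
  IsBraceOn G Set.univ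

def IsBipartitionOf (G : SimpleGraph V) (V1 V2 : Set V) : Prop :=
  Disjoint V1 V2 ∧ V1 ∪ V2 = Set.univ ∧ ∀ ⦃x y : V⦄, G.Adj x y → (x ∈ V1 ↔ y ∈ V2)

def IsBipartite (G : SimpleGraph V) : Prop :=
  ∃ V1 V2 : Set V, IsBipartitionOf G V1 V2

def MatchingCoveredOn (G : SimpleGraph V) (S : Set V) : Prop :=
  EdgesWithin G S ∧ ConnectedOn G S ∧ ∀ e ∈ G.edgeSet, ∃ M, IsPMOn G S M ∧ e ∈ M

def MatchingCovered (G : SimpleGraph V) : Prop :=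
  MatchingCoveredOn G Set.univ

/-- Every vertex of `A` is covered exactly once by an edge of `M ∩ Es`;
i.e. `M ∩ Es` is a perfect matching of the subgraph with vertex set `A` and edge set `Es`. -/
def MatchesExactly (M Es : Set (Sym2 V)) (A : Set V) : Prop :=
  ∀ v ∈ A, ∃! e, e ∈ M ∧ e ∈ Es ∧ v ∈ e

/-- `M` restricted to the edges of `P` with both endpoints in `A` is a
perfect matching of `A`; i.e. `M ∩ E(P ∩ A)` is a perfect matching of `P ∩ A`. -/
def WalkMConfOn (G : SimpleGraph V) (M : Set (Sym2 V)) {u v : V} (P : G.Walk u v)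
    (A : Set V) : Prop :=
  ∀ x ∈ A, ∃! e : Sym2 V, e ∈ M ∧ e ∈ P.edges ∧ (∀ y ∈ e, y ∈ A) ∧ x ∈ e

/-- The path `P` is `M`-conformal: `M ∩ E(P)` is a perfect matching of `P`. -/
def MConformalWalk (G : SimpleGraph V) (M : Set (Sym2 V)) {u v : V} (P : G.Walk u v) : Prop :=
  WalkMConfOn G M P {x | x ∈ P.support}

/-- The path `P` is internally `M`-conformal: removing both endpoints leaves
an `M`-conformal path. -/
def InternallyMConformal (G : SimpleGraph V) (M : Set (Sym2 V)) {u v : V}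
    (P : G.Walk u v) : Prop :=
  WalkMConfOn G M P {x | x ∈ P.support ∧ x ≠ u ∧ x ≠ v}

/-- The path `P` is `M`-alternating: there is a set `S` of endpoints of `P`
such that `P − S` is `M`-conformal. -/
def MAlternating (G : SimpleGraph V) (M : Set (Sym2 V)) {u v : V} (P : G.Walk u v) : Prop :=
  ∃ S ⊆ ({u, v} : Set V), WalkMConfOn G M P {x | x ∈ P.support ∧ x ∉ S}

/-- The cycle `C` is `M`-conformal: `M ∩ E(C)` is a perfect matching of `C`. -/
def MConformalCycle (G : SimpleGraph V) (M : Set (Sym2 V)) {c : V} (C : G.Walk c c) : Prop :=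
  ∀ x ∈ C.support, ∃! e, e ∈ M ∧ e ∈ C.edges ∧ x ∈ e

/-- The cycle `C` is conformal in the graph `G` with vertex set `S`:
`G − V(C)` has a perfect matching. -/
def ConformalCycleOn (G : SimpleGraph V) (S : Set V) {c : V} (C : G.Walk c c) : Prop :=
  ∃ M, IsPMOn G (S \ {x | x ∈ C.support}) M

def ConformalCycle (G : SimpleGraph V) {c : V} (C : G.Walk c c) : Prop :=
  ConformalCycleOn G Set.univ C

/-- The four vertices appear on the cycle `C` in the listed cyclic order. -/
def InCyclicOrder (G : SimpleGraph V) {c : V} (C : G.Walk c c) (s1 s2 t1 t2 : V) : Prop :=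
  ∃ n : ℕ, List.Sublist [s1, s2, t1, t2] (C.support.tail.rotate n) ∨
    List.Sublist [s1, s2, t1, t2] (C.support.tail.reverse.rotate n)

/-- The paths `P1` (from `s1` to `t1`) and `P2` (from `s2` to `t2`) form a matching
cross over the cycle `C` with respect to the perfect matching `M` of `(G, S)`. -/
def IsMatchingCrossOn (G : SimpleGraph V) (S : Set V) {c s1 t1 s2 t2 : V}
    (C : G.Walk c c) (M : Set (Sym2 V)) (P1 : G.Walk s1 t1) (P2 : G.Walk s2 t2) : Prop :=
  IsPMOn G S M ∧ [s1, s2, t1, t2].Nodup ∧ InCyclicOrder G C s1 s2 t1 t2 ∧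
    P1.IsPath ∧ P2.IsPath ∧ MAlternating G M P1 ∧ MAlternating G M P2 ∧
    (∀ x : V, x ∈ P1.support → x ∉ P2.support) ∧
    (∀ x ∈ P1.support, x ≠ s1 → x ≠ t1 → x ∉ C.support) ∧
    (∀ x ∈ P2.support, x ≠ s2 → x ≠ t2 → x ∉ C.support)

def HasMatchingCrossOn (G : SimpleGraph V) (S : Set V) {c : V} (C : G.Walk c c) : Prop :=
  ∃ (M : Set (Sym2 V)) (s1 t1 s2 t2 : V) (P1 : G.Walk s1 t1) (P2 : G.Walk s2 t2),
    IsMatchingCrossOn G S C M P1 P2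

def HasMatchingCross (G : SimpleGraph V) {c : V} (C : G.Walk c c) : Prop :=
  HasMatchingCrossOn G Set.univ C

/-- `C + P1 + P2` is a conformal subgraph of `(G, S)`. -/
def CrossConformalOn (G : SimpleGraph V) (S : Set V) {c s1 t1 s2 t2 : V}
    (C : G.Walk c c) (P1 : G.Walk s1 t1) (P2 : G.Walk s2 t2) : Prop :=
  ∃ N, IsPMOn G S N ∧
    MatchesExactly N
      ({f | f ∈ C.edges} ∪ {f | f ∈ P1.edges} ∪ {f | f ∈ P2.edges})
      ({x | x ∈ C.support} ∪ {x | x ∈ P1.support} ∪ {x | x ∈ P2.support})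

/-- There is a conformal cross over the cycle `C` in `G`. -/
def HasConformalCross (G : SimpleGraph V) {c : V} (C : G.Walk c c) : Prop :=
  ∃ (M : Set (Sym2 V)) (s1 t1 s2 t2 : V) (P1 : G.Walk s1 t1) (P2 : G.Walk s2 t2),
    IsMatchingCrossOn G Set.univ C M P1 P2 ∧ CrossConformalOn G Set.univ C P1 P2

/-- A bisubdivision of the graph `H` inside the graph `G`: every edge of `H` is replaced
by a path of odd length (i.e., subdivided an even number of times), and those paths
pairwise meet only in branch vertices. -/
structure Bisubdivision (H : SimpleGraph W) (G : SimpleGraph V) where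
  bv : W → V
  bv_inj : Function.Injective bv
  link : ∀ ⦃x y : W⦄, H.Adj x y → G.Walk (bv x) (bv y)
  link_isPath : ∀ ⦃x y : W⦄ (h : H.Adj x y), (link h).IsPath
  link_odd : ∀ ⦃x y : W⦄ (h : H.Adj x y), Odd (link h).length
  link_symm : ∀ ⦃x y : W⦄ (h : H.Adj x y), link h.symm = (link h).reverse
  link_branch : ∀ ⦃x y : W⦄ (h : H.Adj x y) (z : W), bv z ∈ (link h).support → z = x ∨ z = y
  link_meet : ∀ ⦃x y x' y' : W⦄ (h : H.Adj x y) (h' : H.Adj x' y'), s(x, y) ≠ s(x', y') →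
    ∀ v : V, v ∈ (link h).support → v ∈ (link h').support →
      (v = bv x ∨ v = bv y) ∧ (v = bv x' ∨ v = bv y')

def Bisubdivision.verts {H : SimpleGraph W} {G : SimpleGraph V}
    (L : Bisubdivision H G) : Set V :=
  {v | ∃ (x y : W) (h : H.Adj x y), v ∈ (L.link h).support}

def Bisubdivision.edgeSet {H : SimpleGraph W} {G : SimpleGraph V}
    (L : Bisubdivision H G) : Set (Sym2 V) :=
  {e | ∃ (x y : W) (h : H.Adj x y), e ∈ (L.link h).edges}

/-- The bisubdivision `L` is an `M`-conformal subgraph of `G`. -/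
def Bisubdivision.MConformal {H : SimpleGraph W} {G : SimpleGraph V}
    (L : Bisubdivision H G) (M : Set (Sym2 V)) : Prop :=
  MatchesExactly M L.edgeSet L.verts

/-- The bisubdivision `L` is a conformal subgraph of `(G, S)`. -/
def Bisubdivision.ConformalOn {H : SimpleGraph W} {G : SimpleGraph V}
    (L : Bisubdivision H G) (S : Set V) : Prop :=
  ∃ M, IsPMOn G S M ∧ L.MConformal M

abbrev K33 : SimpleGraph (Fin 3 ⊕ Fin 3) := completeBipartiteGraph (Fin 3) (Fin 3)

/-- `G` contains a conformal bisubdivision of `K_{3,3}`. -/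
def ContainsK33 (G : SimpleGraph V) : Prop :=
  ∃ L : Bisubdivision K33 G, L.ConformalOn Set.univ

def K33Free (G : SimpleGraph V) : Prop :=
  ¬ ContainsK33 G

def C4verts (a1 b1 a2 b2 : V) : Set V := {a1, b1, a2, b2}

def C4edges (a1 b1 a2 b2 : V) : Set (Sym2 V) := {s(a1, b1), s(b1, a2), s(a2, b2), s(b2, a1)}

/-- `a1 b1 a2 b2` is a cycle of length four in `G`. -/
def IsC4In (G : SimpleGraph V) (a1 b1 a2 b2 : V) : Prop :=
  [a1, b1, a2, b2].Nodup ∧ G.Adj a1 b1 ∧ G.Adj b1 a2 ∧ G.Adj a2 b2 ∧ G.Adj b2 a1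

/-- `B` is a 4-cycle sum of the graphs `Bi i` (with vertex sets `Si i`)
at the common conformal 4-cycle `a1 b1 a2 b2`. -/
def IsFourCycleSum {ℓ : ℕ} (B : SimpleGraph V) (Bi : Fin ℓ → SimpleGraph V)
    (Si : Fin ℓ → Set V) (a1 b1 a2 b2 : V) : Prop :=
  (∀ i, EdgesWithin (Bi i) (Si i)) ∧
  (∀ i, IsC4In (Bi i) a1 b1 a2 b2) ∧
  (∀ i, ∃ M, IsPMOn (Bi i) (Si i \ C4verts a1 b1 a2 b2) M) ∧
  (∀ i j, i ≠ j → Si i ∩ Si j = C4verts a1 b1 a2 b2) ∧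
  (⋃ i, Si i) = Set.univ ∧
  ∃ D ⊆ C4edges a1 b1 a2 b2, B.edgeSet = (⋃ i, (Bi i).edgeSet) \ D

/-- `B` is a maximal 4-cycle sum of the braces `Bi i` at the 4-cycle `a1 b1 a2 b2`. -/
def IsMaxFourCycleSumOfBraces {ℓ : ℕ} (B : SimpleGraph V) (Bi : Fin ℓ → SimpleGraph V)
    (Si : Fin ℓ → Set V) (a1 b1 a2 b2 : V) : Prop :=
  IsFourCycleSum B Bi Si a1 b1 a2 b2 ∧ (∀ i, IsBraceOn (Bi i) (Si i)) ∧
    ¬ ∃ ℓ' : ℕ, ℓ < ℓ' ∧ ∃ (Hi : Fin ℓ' → SimpleGraph V) (Ti : Fin ℓ' → Set V),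
      IsFourCycleSum B Hi Ti a1 b1 a2 b2 ∧ ∀ i, IsBraceOn (Hi i) (Ti i)

/-- `∂(X)`: the set of edges of `G` with exactly one endpoint in `X`. -/
def edgeCut (G : SimpleGraph V) (X : Set V) : Set (Sym2 V) :=
  {e | e ∈ G.edgeSet ∧ ∃ x y : V, e = s(x, y) ∧ x ∈ X ∧ y ∉ X}

/-- `∂(X)` is a tight cut of the graph `G` with vertex set `S`. -/
def IsTightCutOn (G : SimpleGraph V) (S X : Set V) : Prop :=
  ∀ M, IsPMOn G S M → (edgeCut G X ∩ M).ncard = 1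

def IsTightCut (G : SimpleGraph V) (X : Set V) : Prop :=
  IsTightCutOn G Set.univ X

/-- The minority of `X` with respect to the colour classes `V1`, `V2`. -/
noncomputable def minority (V1 V2 X : Set V) : Set V :=
  if (X ∩ V1).ncard < (X ∩ V2).ncard then X ∩ V1 else X ∩ V2

/-- `P1` and `P2` are `M`-alternating paths of the same type. -/
def SameType (G : SimpleGraph V) (M : Set (Sym2 V)) {s1 t1 s2 t2 : V}
    (P1 : G.Walk s1 t1) (P2 : G.Walk s2 t2) : Prop :=
  (InternallyMConformal G M P1 ∧ InternallyMConformal G M P2) ∨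
  (MConformalWalk G M P1 ∧ MConformalWalk G M P2) ∨
  ((¬ InternallyMConformal G M P1 ∧ ¬ MConformalWalk G M P1) ∧
    (¬ InternallyMConformal G M P2 ∧ ¬ MConformalWalk G M P2))

/-- There is a strong matching cross over `C` in `(G, S)` w.r.t. colour classes `V1, V2`. -/
def HasStrongMatchingCrossOn (G : SimpleGraph V) (S V1 V2 : Set V) {c : V}
    (C : G.Walk c c) : Prop :=
  ∃ (M : Set (Sym2 V)) (s1 t1 s2 t2 : V) (P1 : G.Walk s1 t1) (P2 : G.Walk s2 t2),
    IsMatchingCrossOn G S C M P1 P2 ∧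
    (V1 ∩ {s1, s2, t1, t2}).ncard = (V2 ∩ {s1, s2, t1, t2}).ncard ∧
    SameType G M P1 P2

/-- `s1 s2 t1 t2` appear in this cyclic order on the 4-cycle `a1 b1 a2 b2`. -/
def CyclicOrderC4 (a1 b1 a2 b2 s1 s2 t1 t2 : V) : Prop :=
  ∃ n : ℕ, [s1, s2, t1, t2] = [a1, b1, a2, b2].rotate n ∨
    [s1, s2, t1, t2] = [b2, a2, b1, a1].rotate n

/-- `P1, P2` form a matching cross over the 4-cycle `a1 b1 a2 b2` w.r.t. `M`. -/
def IsCrossOverC4 (G : SimpleGraph V) (M : Set (Sym2 V)) (a1 b1 a2 b2 : V)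
    {s1 t1 s2 t2 : V} (P1 : G.Walk s1 t1) (P2 : G.Walk s2 t2) : Prop :=
  [s1, s2, t1, t2].Nodup ∧ CyclicOrderC4 a1 b1 a2 b2 s1 s2 t1 t2 ∧
    P1.IsPath ∧ P2.IsPath ∧ MAlternating G M P1 ∧ MAlternating G M P2 ∧
    (∀ z : V, z ∈ P1.support → z ∉ P2.support) ∧
    (∀ z ∈ P1.support, z ≠ s1 → z ≠ t1 → z ∉ C4verts a1 b1 a2 b2) ∧
    (∀ z ∈ P2.support, z ≠ s2 → z ≠ t2 → z ∉ C4verts a1 b1 a2 b2)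

/-- The Heawood graph on `ZMod 14`. -/
def heawood : SimpleGraph (ZMod 14) :=
  SimpleGraph.fromRel fun i j => j = i + 1 ∨ (Even i.val ∧ j = i + 5)

/-- The Rotunda: three cubes glued along a common 4-cycle whose edges are then deleted. -/
def rotunda : SimpleGraph (Fin 4 ⊕ Fin 3 × Fin 4) :=
  SimpleGraph.fromRel fun x y =>
    match x, y with
    | Sum.inl j, Sum.inr p => j = p.2
    | Sum.inr p, Sum.inr q => p.1 = q.1 ∧ q.2 = p.2 + 1
    | _, _ => False

/-- `F` is an `S`-cover in `G`. -/
def IsSCover (G : SimpleGraph V) (S : Set V) (F : Set (Sym2 V)) : Prop :=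
  F ⊆ G.edgeSet ∧ (∀ e ∈ F, ∃ v ∈ S, v ∈ e) ∧ ∀ v ∈ S, ∃ e ∈ F, v ∈ e

/-- `F` is contained in some perfect matching of `G`. -/
def Extendible (G : SimpleGraph V) (F : Set (Sym2 V)) : Prop :=
  ∃ M, IsPM G M ∧ F ⊆ M

/-- `(G, S)` is an `F`-instance of 2-MLP for `(a1, a2)` and `(b1, b2)`. -/
def TwoMLPInstanceOn (G : SimpleGraph V) (S : Set V) (a1 a2 b1 b2 : V)
    (F : Set (Sym2 V)) : Prop :=
  ∃ M, IsPMOn G S M ∧ F ⊆ M ∧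
    ∃ (P1 : G.Walk a1 b1) (P2 : G.Walk a2 b2), P1.IsPath ∧ P2.IsPath ∧
      InternallyMConformal G M P1 ∧ InternallyMConformal G M P2 ∧
      ∀ x : V, x ∈ P1.support → x ∉ P2.support

/-- `B − u − v + pq`: delete the vertices `u, v` and add the edge `pq`. -/
def deleteAdd (B : SimpleGraph V) (u v p q : V) : SimpleGraph V :=
  SimpleGraph.fromRel fun x y =>
    (B.Adj x y ∨ (x = p ∧ y = q)) ∧ x ≠ u ∧ x ≠ v ∧ y ≠ u ∧ y ≠ v

/-- `B` plus two new vertices `x = Sum.inr 0` and `y = Sum.inr 1` together with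
the edges `xy, x b1, x b2, y a1, y a2`. -/
def plusXY (B : SimpleGraph V) (a1 a2 b1 b2 : V) : SimpleGraph (V ⊕ Fin 2) :=
  SimpleGraph.fromRel fun p q =>
    (∃ a b : V, p = Sum.inl a ∧ q = Sum.inl b ∧ B.Adj a b) ∨
    (p = Sum.inr 0 ∧ q = Sum.inr 1) ∨
    (p = Sum.inr 0 ∧ (q = Sum.inl b1 ∨ q = Sum.inl b2)) ∨
    (p = Sum.inr 1 ∧ (q = Sum.inl a1 ∨ q = Sum.inl a2))

/-- The endpoints `q1, q2` (on the 4-cycle) belong to the same colour class. -/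
def PrecrossDaring (V1 V2 : Set V) (q1 q2 : V) : Prop :=
  (q1 ∈ V1 ∧ q2 ∈ V1) ∨ (q1 ∈ V2 ∧ q2 ∈ V2)

/-- `(P1, P2, Q, M)` is a diffuse `C'`-`M`-precross through the 4-cycle `a1 b1 a2 b2`
in the graph `G` with vertex set `S` and colour classes `V1, V2`. -/
def DiffusePrecross (G : SimpleGraph V) (S V1 V2 : Set V) (a1 b1 a2 b2 : V)
    {c p1 q1 p2 q2 x1 x2 : V} (C' : G.Walk c c) (M : Set (Sym2 V))
    (P1 : G.Walk p1 q1) (P2 : G.Walk p2 q2) (Q : G.Walk x1 x2) : Prop :=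
  IsPMOn G S M ∧ P1.IsPath ∧ P2.IsPath ∧ Q.IsPath ∧
  MAlternating G M P1 ∧ MAlternating G M P2 ∧ MAlternating G M Q ∧
  (∀ z : V, z ∈ P1.support → z ∉ P2.support) ∧
  (∀ z : V, z ∈ P1.support → z ∉ Q.support) ∧
  (∀ z : V, z ∈ P2.support → z ∉ Q.support) ∧
  (∀ z ∈ P1.support, z ≠ p1 → z ≠ q1 → z ∉ C'.support) ∧
  (∀ z ∈ P2.support, z ≠ p2 → z ≠ q2 → z ∉ C'.support) ∧
  (∀ z ∈ Q.support, z ≠ x1 → z ≠ x2 → z ∉ C'.support) ∧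
  x1 ∈ C'.support ∧ x2 ∈ C'.support ∧
  p1 ∈ C'.support ∧ q1 ∈ C4verts a1 b1 a2 b2 ∧
  p2 ∈ C'.support ∧ q2 ∈ C4verts a1 b1 a2 b2 ∧
  (∀ Wk : G.Walk p1 p2, (∀ e ∈ Wk.edges, e ∈ C'.edges) → ∃ z ∈ Wk.support, z ∈ Q.support) ∧
  (∀ U ∈ ({V1, V2} : Set (Set V)), (q1 ∈ U ∨ q2 ∈ U) →
    ∃ q : V, (q = q1 ∨ q = q2) ∧ q ∈ U ∧ ∃ e ∈ M, e ∈ C4edges a1 b1 a2 b2 ∧ q ∈ e)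

/-- A daring diffuse precross is successful. -/
def PrecrossSuccessful (G : SimpleGraph V) (V1 V2 : Set V) (M : Set (Sym2 V))
    {p1 q1 p2 q2 : V} (P1 : G.Walk p1 q1) (P2 : G.Walk p2 q2) : Prop :=
  PrecrossDaring V1 V2 q1 q2 ∧
  ((InternallyMConformal G M P1 ∧ MConformalWalk G M P2) ∨
   (InternallyMConformal G M P2 ∧ MConformalWalk G M P1) ∨
   (Even P1.length ∧ Even P2.length ∧
     ((∃ e ∈ M, e ∈ P1.edges ∧ p1 ∈ e) ↔ ¬ ∃ e ∈ M, e ∈ P2.edges ∧ p2 ∈ e)))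

/-!
Colour the two classes of `B` black and white. A conformal bisubdivision of `K₃,₃` is a special case
of a model: three disjoint barycentric trees (all leaves black, all white vertices of degree two)
and three white hubs, each attached to all three trees, with a matchable rest. Since a barycentric
tree minus any black vertex has a perfect matching, a model can be traded for a system of disjoint
paths with a matchable rest.

In a brace, Hall's condition holds with surplus. Hence a region explored from a black vertex, whose
black vertices can all be reached while the rest of it stays matchable, has a further white
neighbour outside until it meets the model. This expansion argument is used three times: to absorb
the matchable rest, so that the model becomes spanning and the vertex `b1` of the four-cycle
`a b1 a' b2` becomes one of its hubs; to find in such a model an `a`-`a'` path and a disjoint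
`b1`-`b2` path with a matchable rest; and to find an ear joining a white vertex `y` of the first
path to a black vertex `x` of the second. The four-cycle, the two paths and the ear form the
required bisubdivision, with branch vertices `a, a', x` and `b1, b2, y`.
-/

/-! ### Barycentric trees -/

/-- A bipartite graph given by its black vertices and its edges, each oriented from its black end
to its white end. Subgraphs are represented by multisets of vertices, so that being disjoint and
spanning means summing to the multiset of all vertices. -/
structure Bigraph (V : Type*) where
  Black : V → Prop
  Edge : V → V → Prop
  black_left : ∀ {x y}, Edge x y → Black x
  white_right : ∀ {x y}, Edge x y → ¬ Black y

namespace Bigraph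

variable (g : Bigraph V)

/-- The white vertex `b` has a black neighbour in `P`. -/
def Attached (b : V) (P : Multiset V) : Prop := ∃ x ∈ P, g.Edge x b

/-- `P` carries a barycentric tree: a tree whose leaves are black and whose white vertices all
have degree two. -/
inductive BarycentricTree : Multiset V → Prop
  | single {a : V} (ha : g.Black a) : BarycentricTree {a}
  | join {P Q : Multiset V} {b : V} (hP : BarycentricTree P) (hQ : BarycentricTree Q)
      (hbP : g.Attached b P) (hbQ : g.Attached b Q) : BarycentricTree (P + {b} + Q)

/-- `Z` carries a perfect matching. -/
inductive Matchable : Multiset V → Prop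
  | zero : Matchable 0
  | add_pair {Z : Multiset V} {x y : V} (hZ : Matchable Z) (hxy : g.Edge x y) :
      Matchable (Z + {x} + {y})

/-- Adjacency, regardless of colours. -/
def Adj (x y : V) : Prop := g.Edge x y ∨ g.Edge y x

/-- `G` is the vertex multiset of a walk from `s` to `t`. -/
inductive PathOn (s : V) : V → Multiset V → Prop
  | nil : PathOn s s {s}
  | snoc {t u : V} {G : Multiset V} (h : PathOn s t G) (htu : g.Adj t u) : PathOn s u (G + {u})

/-- `N` splits into a path from `s` to `t` and a matchable rest. -/
def Connects (s t : V) (N : Multiset V) : Prop :=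
  ∃ G Z, g.PathOn s t G ∧ g.Matchable Z ∧ N = G + Z

variable {g}

theorem Attached.not_black {b : V} {P : Multiset V} (h : g.Attached b P) : ¬ g.Black b := by
  obtain ⟨x, _, hxb⟩ := h
  exact g.white_right hxb

theorem attached_add {b : V} {P Q : Multiset V} :
    g.Attached b (P + Q) ↔ g.Attached b P ∨ g.Attached b Q := by
  simp only [Attached, Multiset.mem_add, or_and_right, exists_or]

theorem attached_singleton {b x : V} : g.Attached b {x} ↔ g.Edge x b := by
  simp [Attached]

theorem not_attached_singleton {b e : V} (he : ¬ g.Black e) : ¬ g.Attached b {e} :=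
  fun h => he (g.black_left (attached_singleton.1 h))

theorem Attached.add_right {b : V} {P : Multiset V} (h : g.Attached b P) (Q : Multiset V) :
    g.Attached b (P + Q) :=
  attached_add.2 (.inl h)

theorem Attached.add_left {b : V} {P : Multiset V} (h : g.Attached b P) (Q : Multiset V) :
    g.Attached b (Q + P) :=
  attached_add.2 (.inr h)

theorem Matchable.add {Z Z' : Multiset V} (h : g.Matchable Z) (h' : g.Matchable Z') :
    g.Matchable (Z + Z') := by
  induction h' with
  | zero => simpa using h
  | add_pair _ hxy ih => simpa only [add_assoc] using ih.add_pair hxy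

theorem Matchable.pair {x y : V} (hxy : g.Edge x y) : g.Matchable ({x} + {y}) := by
  simpa using Matchable.zero.add_pair hxy

theorem PathOn.cons {s t u : V} {G : Multiset V} (hst : g.Adj s t) (h : g.PathOn t u G) :
    g.PathOn s u ({s} + G) := by
  induction h with
  | nil => exact PathOn.nil.snoc hst
  | snoc _ huv ih => simpa only [add_assoc] using ih.snoc huv

theorem PathOn.append {s t u v : V} {G H : Multiset V} (h : g.PathOn s t G)
    (h' : g.PathOn u v H) (htu : g.Adj t u) : g.PathOn s v (G + H) := by
  induction h' with
  | nil => exact h.snoc htu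
  | snoc _ huv ih => simpa only [add_assoc] using ih.snoc huv

theorem PathOn.symm {s t : V} {G : Multiset V} (h : g.PathOn s t G) : g.PathOn t s G := by
  induction h with
  | nil => exact .nil
  | snoc _ htu ih => simpa only [add_comm] using ih.cons (Or.symm htu)

theorem PathOn.glue {s e t : V} {G H : Multiset V} (h : g.PathOn s e G)
    (h' : g.PathOn t e (H + {e})) : g.PathOn s t (G + H) := by
  generalize hK : H + {e} = K at h'
  cases h' with
  | nil =>
    obtain rfl : H = 0 := by simpa using congrArg Multiset.card hK
    simpa using h
  | snoc hL hadj =>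
    obtain rfl := add_right_cancel hK
    exact h.append hL.symm (Or.symm hadj)

theorem Connects.symm {s t : V} {N : Multiset V} (h : g.Connects s t N) : g.Connects t s N := by
  obtain ⟨G, Z, hG, hZ, hN⟩ := h
  exact ⟨G, Z, hG.symm, hZ, hN⟩

theorem Connects.add_matchable {s t : V} {N Z : Multiset V} (h : g.Connects s t N)
    (hZ : g.Matchable Z) : g.Connects s t (N + Z) := by
  obtain ⟨G, Z', hG, hZ', rfl⟩ := h
  exact ⟨G, Z' + Z, hG, hZ'.add hZ, by abel⟩

theorem Connects.snoc {s x e : V} {N : Multiset V} (h : g.Connects s x N) (hxe : g.Edge x e) :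
    g.Connects s e (N + {e}) := by
  obtain ⟨G, Z, hG, hZ, rfl⟩ := h
  exact ⟨G + {e}, Z, hG.snoc (.inl hxe), hZ, by abel⟩

theorem Connects.refl (s : V) : g.Connects s s {s} :=
  ⟨{s}, 0, .nil, .zero, by simp⟩

theorem Connects.append {s x y t : V} {N N' : Multiset V} (h : g.Connects s x N)
    (h' : g.Connects y t N') (hyx : g.Adj x y) : g.Connects s t (N + N') := by
  obtain ⟨G, Z, hG, hZ, rfl⟩ := h
  obtain ⟨G', Z', hG', hZ', rfl⟩ := h'
  exact ⟨G + G', Z + Z', hG.append hG' hyx, hZ.add hZ', by abel⟩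

theorem Connects.glue {s e t : V} {M N : Multiset V} (h : g.Connects s e M)
    (h' : g.Connects t e (N + {e})) : g.Connects s t (M + N) := by
  obtain ⟨G, Z, hG, hZ, rfl⟩ := h
  obtain ⟨G', Z', hG', hZ', hN⟩ := h'
  obtain ⟨G0, rfl⟩ : ∃ G0, G' = G0 + {e} := by
    cases hG' with
    | nil => exact ⟨0, by simp⟩
    | snoc => exact ⟨_, rfl⟩
  refine ⟨G + G0, Z + Z', hG.glue hG', hZ.add hZ', ?_⟩
  rw [add_right_cancel (hN.trans (add_right_comm G0 {e} Z'))]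
  abel

namespace BarycentricTree

theorem exists_black {P : Multiset V} (hP : g.BarycentricTree P) : ∃ a ∈ P, g.Black a := by
  induction hP with
  | single ha => exact ⟨_, Multiset.mem_singleton_self _, ha⟩
  | join _ _ _ _ ih _ =>
    obtain ⟨a, ha, hA⟩ := ih
    exact ⟨a, by simp [ha], hA⟩

theorem split {P : Multiset V} (hP : g.BarycentricTree P) {e : V} (he : e ∈ P)
    (heW : ¬ g.Black e) :
    ∃ U1 U2, g.BarycentricTree U1 ∧ g.BarycentricTree U2 ∧
      g.Attached e U1 ∧ g.Attached e U2 ∧ P = U1 + {e} + U2 := by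
  induction hP with
  | single ha =>
    obtain rfl := Multiset.mem_singleton.1 he
    exact absurd ha heW
  | @join P Q b hP hQ hbP hbQ ihP ihQ =>
    simp only [Multiset.mem_add, Multiset.mem_singleton] at he
    rcases he with (he | rfl) | he
    · obtain ⟨U1, U2, t1, t2, e1, e2, rfl⟩ := ihP he
      simp only [attached_add, not_attached_singleton heW, or_false] at hbP
      rcases hbP with hb | hb
      · exact ⟨U1 + {b} + Q, U2, .join t1 hQ hb hbQ, t2, by simp [attached_add, e1], e2, by abel⟩
      · exact ⟨U1, U2 + {b} + Q, t1, .join t2 hQ hb hbQ, e1, by simp [attached_add, e2], by abel⟩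
    · exact ⟨P, Q, hP, hQ, hbP, hbQ, rfl⟩
    · obtain ⟨U1, U2, t1, t2, e1, e2, rfl⟩ := ihQ he
      simp only [attached_add, not_attached_singleton heW, or_false] at hbQ
      rcases hbQ with hb | hb
      · exact ⟨P + {b} + U1, U2, .join hP t1 hbP hb, t2, by simp [attached_add, e1], e2, by abel⟩
      · exact ⟨U1, P + {b} + U2, t1, .join hP t2 hbP hb, e1, by simp [attached_add, e2], by abel⟩

theorem split_mem {P : Multiset V} (hP : g.BarycentricTree P) {e a : V} (he : e ∈ P)
    (heW : ¬ g.Black e) (ha : a ∈ P) (hA : g.Black a) :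
    ∃ U1 U2, g.BarycentricTree U1 ∧ g.BarycentricTree U2 ∧
      g.Attached e U1 ∧ g.Attached e U2 ∧ P = U1 + {e} + U2 ∧ a ∈ U1 := by
  obtain ⟨U1, U2, t1, t2, e1, e2, rfl⟩ := hP.split he heW
  simp only [Multiset.mem_add, Multiset.mem_singleton] at ha
  rcases ha with (ha | rfl) | ha
  · exact ⟨U1, U2, t1, t2, e1, e2, rfl, ha⟩
  · exact absurd hA heW
  · exact ⟨U2, U1, t2, t1, e2, e1, by abel, ha⟩

theorem split_attached {P : Multiset V} (hP : g.BarycentricTree P) {e c : V} (he : e ∈ P)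
    (heW : ¬ g.Black e) (hc : g.Attached c P) :
    ∃ U1 U2, g.BarycentricTree U1 ∧ g.BarycentricTree U2 ∧
      g.Attached e U1 ∧ g.Attached e U2 ∧ P = U1 + {e} + U2 ∧ g.Attached c U1 := by
  obtain ⟨x, hx, hxc⟩ := hc
  obtain ⟨U1, U2, t1, t2, e1, e2, h, hx'⟩ := hP.split_mem he heW hx (g.black_left hxc)
  exact ⟨U1, U2, t1, t2, e1, e2, h, x, hx', hxc⟩

theorem matchable_compl {P : Multiset V} (hP : g.BarycentricTree P) {a : V} (ha : a ∈ P)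
    (hA : g.Black a) : ∃ Z, g.Matchable Z ∧ P = {a} + Z := by
  induction hP generalizing a with
  | single =>
    obtain rfl := Multiset.mem_singleton.1 ha
    exact ⟨0, .zero, by simp⟩
  | @join P Q b _ _ hbP hbQ ihP ihQ =>
    have hbW := hbP.not_black
    obtain ⟨x, hx, hxb⟩ := hbP
    obtain ⟨y, hy, hyb⟩ := hbQ
    simp only [Multiset.mem_add, Multiset.mem_singleton] at ha
    rcases ha with (ha | rfl) | ha
    · obtain ⟨Z, hZ, rfl⟩ := ihP ha hA
      obtain ⟨Z', hZ', rfl⟩ := ihQ hy (g.black_left hyb)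
      exact ⟨Z + Z' + ({y} + {b}), (hZ.add hZ').add (.pair hyb), by abel⟩
    · exact absurd hA hbW
    · obtain ⟨Z, hZ, rfl⟩ := ihP hx (g.black_left hxb)
      obtain ⟨Z', hZ', rfl⟩ := ihQ ha hA
      exact ⟨Z + Z' + ({x} + {b}), (hZ.add hZ').add (.pair hxb), by abel⟩

theorem matchable_add {P : Multiset V} (hP : g.BarycentricTree P) {b : V}
    (hb : g.Attached b P) : g.Matchable (P + {b}) := by
  obtain ⟨x, hx, hxb⟩ := hb
  obtain ⟨Z, hZ, rfl⟩ := hP.matchable_compl hx (g.black_left hxb)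
  simpa only [add_comm Z] using hZ.add_pair hxb

theorem connects {P : Multiset V} (hP : g.BarycentricTree P) {a a' : V} (ha : a ∈ P)
    (hA : g.Black a) (ha' : a' ∈ P) (hA' : g.Black a') : g.Connects a a' P := by
  induction hP generalizing a a' with
  | single =>
    obtain rfl := Multiset.mem_singleton.1 ha
    obtain rfl := Multiset.mem_singleton.1 ha'
    exact .refl _
  | @join P Q b hP hQ hbP hbQ ihP ihQ =>
    have hbW := hbP.not_black
    have across : ∀ {a a'}, a ∈ P → g.Black a → a' ∈ Q → g.Black a' →
        g.Connects a a' (P + {b} + Q) := fun ha hA ha' hA' => by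
      obtain ⟨x, hx, hxb⟩ := hbP
      obtain ⟨y, hy, hyb⟩ := hbQ
      exact ((ihP ha hA hx (g.black_left hxb)).snoc hxb).append
        (ihQ hy (g.black_left hyb) ha' hA') (.inr hyb)
    simp only [Multiset.mem_add, Multiset.mem_singleton] at ha ha'
    rcases ha with (ha | rfl) | ha <;> rcases ha' with (ha' | rfl) | ha' <;>
      try contradiction
    · have := (ihP ha hA ha' hA').add_matchable (hQ.matchable_add hbQ)
      convert this using 1
      abel
    · exact across ha hA ha' hA'
    · exact (across ha' hA' ha hA).symm
    · have := (ihQ ha hA ha' hA').add_matchable (hP.matchable_add hbP)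
      convert this using 1
      abel

end BarycentricTree

theorem Connects.connects_mem {s e a : V} {M P : Multiset V} (h : g.Connects s e M)
    (hP : g.BarycentricTree P) (he : g.Attached e P) (ha : a ∈ P) (hA : g.Black a) :
    g.Connects s a (M + P) := by
  obtain ⟨x, hx, hxe⟩ := he
  exact h.append (hP.connects hx (g.black_left hxe) ha hA) (.inr hxe)

theorem Connects.through {s e p : V} {M P : Multiset V} (h : g.Connects s e M)
    (hP : g.BarycentricTree P) (he : g.Attached e P) (hp : g.Attached p P) :
    g.Connects s p (M + P + {p}) := by
  obtain ⟨y, hy, hyp⟩ := hp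
  exact (h.connects_mem hP he hy (g.black_left hyp)).snoc hyp

/-! ### Excess, expansion and linkages -/

variable (g)

open Classical in
/-- The number of black vertices minus the number of white vertices. -/
noncomputable def excess (P : Multiset V) : ℤ :=
  (P.map fun x => if g.Black x then (1 : ℤ) else -1).sum

/-- The two consequences of being a brace on the vertex multiset `U`: a Hall-type expansion of
black-containing sets, and the fact that a barycentric tree with a white vertex does not confine
the neighbourhoods of all its white vertices. -/
structure Expanding (U : Multiset V) : Prop where
  attached_of_card_le : ∀ {R C rest : Multiset V} {a b : V}, R + C + rest = U → a ∈ R →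
    g.Black a → (Multiset.card C : ℤ) ≤ g.excess R + 1 → b ∈ rest → ¬ g.Black b →
    ∃ e ∈ rest, g.Attached e R
  attached_of_tree : ∀ {X rest : Multiset V} {u a : V}, g.BarycentricTree X → u ∈ X →
    ¬ g.Black u → X + rest = U → a ∈ rest → g.Black a → ∃ w ∈ X, g.Attached w rest

/-- `U` splits into an `s`-`t` path, an `s'`-`t'` path and a matchable rest. -/
def Linked (U : Multiset V) (s t s' t' : V) : Prop :=
  ∃ N N', g.Connects s t N ∧ g.Connects s' t' N' ∧ N + N' = U

variable {g}

@[simp]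
theorem excess_add (P Q : Multiset V) : g.excess (P + Q) = g.excess P + g.excess Q := by
  simp [excess]

@[simp]
theorem excess_zero : g.excess 0 = 0 := by simp [excess]

theorem excess_black {x : V} (h : g.Black x) : g.excess {x} = 1 := by simp [excess, h]

theorem excess_white {x : V} (h : ¬ g.Black x) : g.excess {x} = -1 := by simp [excess, h]

theorem BarycentricTree.excess {P : Multiset V} (hP : g.BarycentricTree P) : g.excess P = 1 := by
  induction hP with
  | single ha => exact excess_black ha
  | join _ _ hbP _ ih ih' => simp [ih, ih', excess_white hbP.not_black]

theorem Linked.comm {U : Multiset V} {s t s' t' : V} (h : g.Linked U s t s' t') :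
    g.Linked U s' t' s t := by
  obtain ⟨N, N', h1, h2, hU⟩ := h
  exact ⟨N', N, h2, h1, by rw [← hU, add_comm]⟩

theorem Linked.symm {U : Multiset V} {s t s' t' : V} (h : g.Linked U s t s' t') :
    g.Linked U t s s' t' := by
  obtain ⟨N, N', h1, h2, hU⟩ := h
  exact ⟨N, N', h1.symm, h2, hU⟩

theorem linked_of_trees {U X Y : Multiset V} {a a' b1 b2 : V} (hU : X + Y + {b1} + {b2} = U)
    (hX : g.BarycentricTree X) (hY : g.BarycentricTree Y) (ha : a ∈ X) (hA : g.Black a)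
    (ha' : a' ∈ X) (hA' : g.Black a') (h1 : g.Attached b1 Y) (h2 : g.Attached b2 Y) :
    g.Linked U a a' b1 b2 :=
  ⟨X, {b1} + Y + {b2}, hX.connects ha hA ha' hA', (Connects.refl b1).through hY h1 h2, by
    rw [← hU]; abel⟩

/-! ### Feet -/

/-- How a terminal is joined to a barycentric tree: either it is itself a black vertex `s` of the
tree, or it is reached through a white vertex `c` attached to the tree. -/
inductive Foot (V : Type*)
  | inside (s : V)
  | via (c : V)

/-- The connecting vertex of a foot, as a multiset. -/
def Foot.connector : Foot V → Multiset V
  | .inside _ => 0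
  | .via c => {c}

@[simp]
theorem Foot.connector_inside (s : V) : (inside s).connector = 0 := rfl

@[simp]
theorem Foot.connector_via (c : V) : (via c).connector = {c} := rfl

variable (g)

/-- `G` leads from the terminal `s` to the foot. -/
def FootPath : Foot V → V → Multiset V → Prop
  | .inside s0, s, G => s = s0 ∧ G = 0
  | .via c, s, G => g.Connects s c G

/-- The foot is joined to `P`. -/
def FootIn : Foot V → Multiset V → Prop
  | .inside s, P => s ∈ P ∧ g.Black s
  | .via c, P => g.Attached c P

/-- One of the three pairings of the four terminals, if linked in `U`, yields the goal `X`. -/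
def SomePairing (U : Multiset V) (X : Prop) (s1 s2 s3 s4 : V) : Prop :=
  (g.Linked U s4 s1 s2 s3 → X) ∨ (g.Linked U s4 s2 s1 s3 → X) ∨ (g.Linked U s4 s3 s1 s2 → X)

/-- `N` leads from three of the four terminals of a pairing problem to the given feet, and from
the fourth to `x`. -/
def FeetLinked (U : Multiset V) (X : Prop) (f1 f2 f3 : Foot V) (N : Multiset V) (x : V) : Prop :=
  ∃ s1 s2 s3 s4 G1 G2 G3 G4, g.SomePairing U X s1 s2 s3 s4 ∧ g.FootPath f1 s1 G1 ∧
    g.FootPath f2 s2 G2 ∧ g.FootPath f3 s3 G3 ∧ g.Connects s4 x G4 ∧ N = G1 + G2 + G3 + G4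

variable {g}

theorem footIn_add {f : Foot V} {P Q : Multiset V} :
    g.FootIn f (P + Q) ↔ g.FootIn f P ∨ g.FootIn f Q := by
  cases f with
  | inside s => simp [FootIn, or_and_right]
  | via c => exact attached_add

theorem not_footIn_singleton {f : Foot V} {e : V} (he : ¬ g.Black e) : ¬ g.FootIn f {e} := by
  cases f with
  | inside s =>
    rintro ⟨hs, hA⟩
    exact he (Multiset.mem_singleton.1 hs ▸ hA)
  | via c => exact not_attached_singleton he

theorem BarycentricTree.split_foot {P : Multiset V} (hP : g.BarycentricTree P) {e : V}
    {f : Foot V} (he : e ∈ P) (heW : ¬ g.Black e) (hf : g.FootIn f P) :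
    ∃ U1 U2, g.BarycentricTree U1 ∧ g.BarycentricTree U2 ∧
      g.Attached e U1 ∧ g.Attached e U2 ∧ P = U1 + {e} + U2 ∧ g.FootIn f U1 := by
  obtain ⟨U1, U2, t1, t2, e1, e2, rfl⟩ := hP.split he heW
  simp only [footIn_add, not_footIn_singleton heW, or_false] at hf
  rcases hf with hf | hf
  · exact ⟨U1, U2, t1, t2, e1, e2, rfl, hf⟩
  · exact ⟨U2, U1, t2, t1, e2, e1, by abel, hf⟩

theorem FootPath.connects_mem {f : Foot V} {s x : V} {G P : Multiset V} (h : g.FootPath f s G)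
    (hP : g.BarycentricTree P) (hf : g.FootIn f P) (hx : x ∈ P) (hA : g.Black x) :
    g.Connects s x (G + P) := by
  cases f with
  | inside s0 =>
    obtain ⟨rfl, rfl⟩ := h
    simpa using hP.connects hf.1 hf.2 hx hA
  | via c => exact Connects.connects_mem h hP hf hx hA

theorem FootPath.connects_attached {f : Foot V} {s e : V} {G P : Multiset V}
    (h : g.FootPath f s G) (hP : g.BarycentricTree P) (hf : g.FootIn f P)
    (he : g.Attached e P) : g.Connects s e (G + P + {e}) := by
  obtain ⟨y, hy, hye⟩ := he
  exact (h.connects_mem hP hf hy (g.black_left hye)).snoc hye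

namespace SomePairing

variable {U : Multiset V} {X : Prop} {s1 s2 s3 s4 : V}

theorem swap12 (h : g.SomePairing U X s1 s2 s3 s4) : g.SomePairing U X s2 s1 s3 s4 := by
  rcases h with h | h | h
  · exact .inr (.inl h)
  · exact .inl h
  · exact .inr (.inr fun k => h k.comm.symm.comm)

theorem swap23 (h : g.SomePairing U X s1 s2 s3 s4) : g.SomePairing U X s1 s3 s2 s4 := by
  rcases h with h | h | h
  · exact .inl fun k => h k.comm.symm.comm
  · exact .inr (.inr h)
  · exact .inr (.inl h)

theorem swap14 (h : g.SomePairing U X s1 s2 s3 s4) : g.SomePairing U X s4 s2 s3 s1 := by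
  rcases h with h | h | h
  · exact .inl fun k => h k.symm
  · exact .inr (.inr fun k => h k.comm)
  · exact .inr (.inl fun k => h k.comm)

theorem goal (h : g.SomePairing U X s1 s2 s3 s4) (h1 : g.Linked U s4 s1 s2 s3)
    (h2 : g.Linked U s4 s2 s1 s3) (h3 : g.Linked U s4 s3 s1 s2) : X := by
  rcases h with h | h | h
  exacts [h h1, h h2, h h3]

end SomePairing

namespace FeetLinked

variable {U N Z : Multiset V} {X : Prop} {f1 f2 f3 : Foot V} {x e : V}

theorem swap12 (h : g.FeetLinked U X f1 f2 f3 N x) : g.FeetLinked U X f2 f1 f3 N x := by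
  obtain ⟨s1, s2, s3, s4, G1, G2, G3, G4, v, h1, h2, h3, h4, rfl⟩ := h
  exact ⟨s2, s1, s3, s4, G2, G1, G3, G4, v.swap12, h2, h1, h3, h4, by abel⟩

theorem swap23 (h : g.FeetLinked U X f1 f2 f3 N x) : g.FeetLinked U X f1 f3 f2 N x := by
  obtain ⟨s1, s2, s3, s4, G1, G2, G3, G4, v, h1, h2, h3, h4, rfl⟩ := h
  exact ⟨s1, s3, s2, s4, G1, G3, G2, G4, v.swap23, h1, h3, h2, h4, by abel⟩

theorem snoc (h : g.FeetLinked U X f1 f2 f3 N x) (hxe : g.Edge x e) :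
    g.FeetLinked U X f1 f2 f3 (N + {e}) e := by
  obtain ⟨s1, s2, s3, s4, G1, G2, G3, G4, v, h1, h2, h3, h4, rfl⟩ := h
  exact ⟨s1, s2, s3, s4, G1, G2, G3, G4 + {e}, v, h1, h2, h3, h4.snoc hxe, by abel⟩

theorem add_matchable (h : g.FeetLinked U X f1 f2 f3 N x) (hZ : g.Matchable Z) :
    g.FeetLinked U X f1 f2 f3 (N + Z) x := by
  obtain ⟨s1, s2, s3, s4, G1, G2, G3, G4, v, h1, h2, h3, h4, rfl⟩ := h
  exact ⟨s1, s2, s3, s4, G1, G2, G3, G4 + Z, v, h1, h2, h3, h4.add_matchable hZ, by abel⟩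

end FeetLinked

/-! ### Theta configurations -/

variable (g)

/-- `b` is a white vertex attached to each of three sets. -/
def Hub (b : V) (P Q R : Multiset V) : Prop := g.Attached b P ∧ g.Attached b Q ∧ g.Attached b R

/-- Three barycentric trees joined by two hubs: a bisubdivided theta graph whose black branch
trees are `P`, `Q` and `R`. -/
structure Theta (P Q R : Multiset V) (p q : V) : Prop where
  tree1 : g.BarycentricTree P
  tree2 : g.BarycentricTree Q
  tree3 : g.BarycentricTree R
  hub_left : g.Hub p P Q R
  hub_right : g.Hub q P Q R

variable {g}

namespace Hub

variable {b e : V} {P Q R U1 U2 : Multiset V}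

theorem not_black (h : g.Hub b P Q R) : ¬ g.Black b := h.1.not_black

theorem swap12 (h : g.Hub b P Q R) : g.Hub b Q P R := ⟨h.2.1, h.1, h.2.2⟩

theorem swap23 (h : g.Hub b P Q R) : g.Hub b P R Q := ⟨h.1, h.2.2, h.2.1⟩

theorem grow1 (h : g.Hub b P Q R) : g.Hub b (P + U1 + U2) Q R :=
  ⟨(h.1.add_right _).add_right _, h.2⟩

theorem attached_split (h : g.Hub b (U1 + {e} + U2) Q R) (he : ¬ g.Black e) :
    g.Attached b U1 ∨ g.Attached b U2 := by
  simpa only [attached_add, not_attached_singleton he, or_false] using h.1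

end Hub

namespace Theta

variable {P Q R : Multiset V} {p q : V}

theorem swap12 (h : g.Theta P Q R p q) : g.Theta Q P R p q :=
  ⟨h.tree2, h.tree1, h.tree3, h.hub_left.swap12, h.hub_right.swap12⟩

theorem swap23 (h : g.Theta P Q R p q) : g.Theta P R Q p q :=
  ⟨h.tree1, h.tree3, h.tree2, h.hub_left.swap23, h.hub_right.swap23⟩

theorem swap_hubs (h : g.Theta P Q R p q) : g.Theta P Q R q p :=
  ⟨h.tree1, h.tree2, h.tree3, h.hub_right, h.hub_left⟩

theorem join1 (h : g.Theta P Q R p q) {w : V} {Y : Multiset V} (hY : g.BarycentricTree Y)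
    (hwP : g.Attached w P) (hwY : g.Attached w Y) : g.Theta (P + {w} + Y) Q R p q :=
  ⟨.join h.tree1 hY hwP hwY, h.tree2, h.tree3, h.hub_left.grow1, h.hub_right.grow1⟩

theorem join2 (h : g.Theta P Q R p q) {w : V} {Y : Multiset V} (hY : g.BarycentricTree Y)
    (hwQ : g.Attached w Q) (hwY : g.Attached w Y) : g.Theta P (Q + {w} + Y) R p q :=
  (h.swap12.join1 hY hwQ hwY).swap12

theorem join3 (h : g.Theta P Q R p q) {w : V} {Y : Multiset V} (hY : g.BarycentricTree Y)
    (hwR : g.Attached w R) (hwY : g.Attached w Y) : g.Theta P Q (R + {w} + Y) p q :=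
  (h.swap23.join2 hY hwR hwY).swap23

end Theta

open Foot in
/-- A theta graph whose three trees carry the feet of a pairing problem, together with the
explored part `R`: from every black vertex of `R` all four terminals can still be routed. -/
structure ThetaConfig (g : Bigraph V) (U : Multiset V) (X : Prop) (R : Multiset V)
    (f1 f2 f3 : Foot V) (P1 P2 P3 : Multiset V) (p q : V) : Prop where
  sum_eq : R + (connector f1 + connector f2 + connector f3) + (P1 + P2 + P3 + {p} + {q}) = U
  excess_eq :
    g.excess R + 1 = (connector f1).card + (connector f2).card + (connector f3).card
  theta : g.Theta P1 P2 P3 p q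
  foot1 : g.FootIn f1 P1
  foot2 : g.FootIn f2 P2
  foot3 : g.FootIn f3 P3
  routed : ∀ x ∈ R, g.Black x →
    g.FeetLinked U X f1 f2 f3 (R + (connector f1 + connector f2 + connector f3)) x

namespace FootIn

variable {f : Foot V} {P : Multiset V} {x : V}

theorem connector_not_black (hf : g.FootIn f P) (hx : x ∈ f.connector) : ¬ g.Black x := by
  cases f with
  | inside s => exact absurd hx (Multiset.notMem_zero x)
  | via c =>
    obtain rfl := Multiset.mem_singleton.1 hx
    exact hf.not_black

theorem excess_connector (hf : g.FootIn f P) :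
    g.excess f.connector = -(f.connector.card : ℤ) := by
  cases f with
  | inside s => simp
  | via c => simp [excess_white hf.not_black]

end FootIn

namespace ThetaConfig

open Foot

variable {U R P1 P2 P3 U1 U2 : Multiset V} {X : Prop} {f1 f2 f3 : Foot V} {p q e : V}

theorem swap12 (h : g.ThetaConfig U X R f1 f2 f3 P1 P2 P3 p q) :
    g.ThetaConfig U X R f2 f1 f3 P2 P1 P3 p q where
  sum_eq := by rw [← h.sum_eq]; abel
  excess_eq := by rw [h.excess_eq]; abel
  theta := h.theta.swap12
  foot1 := h.foot2
  foot2 := h.foot1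
  foot3 := h.foot3
  routed x hx hA := add_comm (connector f1) _ ▸ (h.routed x hx hA).swap12

theorem swap23 (h : g.ThetaConfig U X R f1 f2 f3 P1 P2 P3 p q) :
    g.ThetaConfig U X R f1 f3 f2 P1 P3 P2 p q where
  sum_eq := by rw [← h.sum_eq]; abel
  excess_eq := by rw [h.excess_eq]; abel
  theta := h.theta.swap23
  foot1 := h.foot1
  foot2 := h.foot3
  foot3 := h.foot2
  routed x hx hA := add_right_comm (connector f1) _ _ ▸ (h.routed x hx hA).swap23

theorem swap_hubs (h : g.ThetaConfig U X R f1 f2 f3 P1 P2 P3 p q) :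
    g.ThetaConfig U X R f1 f2 f3 P1 P2 P3 q p where
  __ := h
  sum_eq := by rw [← h.sum_eq]; abel
  theta := h.theta.swap_hubs

theorem goal_of_hub (h : g.ThetaConfig U X R f1 f2 f3 P1 P2 P3 p q)
    (hl : g.FeetLinked U X f1 f2 f3
      (R + (connector f1 + connector f2 + connector f3) + {p}) p) : X := by
  obtain ⟨s1, s2, s3, s4, G1, G2, G3, G4, v, h1, h2, h3, h4, hN⟩ := hl
  have hU : (G1 + G2 + G3 + G4) + (P1 + P2 + P3 + {q}) = U := by rw [← hN, ← h.sum_eq]; abel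
  obtain ⟨t1, t2, t3, ⟨p1, p2, p3⟩, q1, q2, q3⟩ := h.theta
  have reach1 := h1.connects_attached t1 h.foot1 p1
  have reach2 := h2.connects_attached t2 h.foot2 p2
  have reach3 := h3.connects_attached t3 h.foot3 p3
  have join1 := h1.connects_attached t1 h.foot1 q1
  have join2 := h2.connects_attached t2 h.foot2 q2
  have join3 := h3.connects_attached t3 h.foot3 q3
  refine v.goal ⟨_, _, h4.glue reach1, join2.glue join3, ?_⟩
    ⟨_, _, h4.glue reach2, join1.glue join3, ?_⟩
    ⟨_, _, h4.glue reach3, join1.glue join2, ?_⟩ <;> (rw [← hU]; abel)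

theorem goal_of_split (h : g.ThetaConfig U X R f1 f2 f3 (U1 + {e} + U2) P2 P3 p q)
    (hl : g.FeetLinked U X f1 f2 f3
      (R + (connector f1 + connector f2 + connector f3) + {e}) e)
    (t1 : g.BarycentricTree U1) (t2 : g.BarycentricTree U2) (e1 : g.Attached e U1)
    (e2 : g.Attached e U2) (hf : g.FootIn f1 U1) (hp : g.Attached p U2)
    (hq : g.Attached q U1) : X := by
  obtain ⟨s1, s2, s3, s4, G1, G2, G3, G4, v, h1, h2, h3, h4, hN⟩ := hl
  have hU : (G1 + G2 + G3 + G4) + (U1 + U2 + P2 + P3 + {p} + {q}) = U := by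
    rw [← hN, ← h.sum_eq]; abel
  obtain ⟨-, t2', t3', ⟨-, p2, p3⟩, -, q2, q3⟩ := h.theta
  have direct := h4.glue (h1.connects_attached t1 hf e1)
  have join1 := h1.connects_attached t1 hf hq
  have join2 := h2.connects_attached t2' h.foot2 q2
  have join3 := h3.connects_attached t3' h.foot3 q3
  have detour := h4.through t2 e2 hp
  refine v.goal ⟨_, _, direct, (join2.glue join3).add_matchable (t2.matchable_add hp), ?_⟩
    ⟨_, _, detour.glue (h2.connects_attached t2' h.foot2 p2), join1.glue join3, ?_⟩
    ⟨_, _, detour.glue (h3.connects_attached t3' h.foot3 p3), join1.glue join2, ?_⟩ <;>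
  (rw [← hU]; abel)

theorem absorb_branch (h : g.ThetaConfig U X R f1 f2 f3 (U1 + {e} + U2) P2 P3 p q)
    (he : ¬ g.Black e)
    (hl : g.FeetLinked U X f1 f2 f3
      (R + (connector f1 + connector f2 + connector f3) + {e}) e)
    (t1 : g.BarycentricTree U1) (t2 : g.BarycentricTree U2) (e2 : g.Attached e U2)
    (hf : g.FootIn f1 U1) (hp : g.Attached p U1) (hq : g.Attached q U1) :
    g.ThetaConfig U X (R + {e} + U2) f1 f2 f3 U1 P2 P3 p q where
  sum_eq := by rw [← h.sum_eq]; abel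
  excess_eq := by
    have := h.excess_eq
    simp only [excess_add, t2.excess, excess_white he]
    omega
  theta := ⟨t1, h.theta.tree2, h.theta.tree3, ⟨hp, h.theta.hub_left.2⟩, hq, h.theta.hub_right.2⟩
  foot1 := hf
  foot2 := h.foot2
  foot3 := h.foot3
  routed x hx hA := by
    simp only [Multiset.mem_add, Multiset.mem_singleton] at hx
    rcases hx with (hx | rfl) | hx
    · convert (h.routed x hx hA).add_matchable (t2.matchable_add e2) using 1
      abel
    · exact absurd hA he
    · obtain ⟨s1, s2, s3, s4, G1, G2, G3, G4, v, h1, h2, h3, h4, hN⟩ := hl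
      refine ⟨s1, s2, s3, s4, G1, G2, G3, _, v, h1, h2, h3, h4.connects_mem t2 e2 hx hA, ?_⟩
      rw [← add_assoc (G1 + G2 + G3), ← hN]
      abel

/-- The landing vertex `e` becomes the new first foot; the new first terminal is the old fourth
one when the walk is continued inside the absorbed tree. -/
theorem absorb_root (h : g.ThetaConfig U X R f1 f2 f3 (U1 + {e} + U2) P2 P3 p q)
    (hl : g.FeetLinked U X f1 f2 f3
      (R + (connector f1 + connector f2 + connector f3) + {e}) e)
    (t1 : g.BarycentricTree U1) (t2 : g.BarycentricTree U2) (e1 : g.Attached e U1)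
    (e2 : g.Attached e U2) (hf : g.FootIn f1 U1) (hp : g.Attached p U2)
    (hq : g.Attached q U2) :
    g.ThetaConfig U X (R + connector f1 + U1) (.via e) f2 f3 U2 P2 P3 p q where
  sum_eq := by rw [← h.sum_eq]; simp only [connector_via]; abel
  excess_eq := by
    have := h.excess_eq
    simp only [excess_add, t1.excess, hf.excess_connector, connector_via, Multiset.card_singleton]
    omega
  theta := ⟨t2, h.theta.tree2, h.theta.tree3, ⟨hp, h.theta.hub_left.2⟩, hq, h.theta.hub_right.2⟩
  foot1 := e2
  foot2 := h.foot2
  foot3 := h.foot3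
  routed x hx hA := by
    simp only [Multiset.mem_add] at hx
    rcases hx with (hx | hx) | hx
    · obtain ⟨s1, s2, s3, s4, G1, G2, G3, G4, v, h1, h2, h3, h4, hN⟩ := h.routed x hx hA
      refine ⟨s1, s2, s3, s4, _, G2, G3, _, v, h1.connects_attached t1 hf e1, h2, h3, h4, ?_⟩
      rw [show G1 + U1 + {e} + G2 + G3 + G4 = (G1 + G2 + G3 + G4) + U1 + {e} by abel, ← hN]
      simp only [connector_via]
      abel
    · exact absurd hA (hf.connector_not_black hx)
    · obtain ⟨s1, s2, s3, s4, G1, G2, G3, G4, v, h1, h2, h3, h4, hN⟩ := hl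
      refine ⟨s4, s2, s3, s1, _, G2, G3, _, v.swap14, h4, h2, h3,
        h1.connects_mem t1 hf hx hA, ?_⟩
      rw [show G4 + G2 + G3 + (G1 + U1) = (G1 + G2 + G3 + G4) + U1 by abel, ← hN]
      simp only [connector_via]
      abel

theorem progress_tree1 (h : g.ThetaConfig U X R f1 f2 f3 P1 P2 P3 p q) (he : e ∈ P1)
    (heW : ¬ g.Black e)
    (hl : g.FeetLinked U X f1 f2 f3
      (R + (connector f1 + connector f2 + connector f3) + {e}) e) :
    X ∨ ∃ R' f' P', g.ThetaConfig U X R' f' f2 f3 P' P2 P3 p q ∧ P'.card < P1.card ∧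
      ∃ a ∈ R', g.Black a := by
  obtain ⟨U1, U2, t1, t2, e1, e2, rfl, hf⟩ := h.theta.tree1.split_foot he heW h.foot1
  have hp := h.theta.hub_left.attached_split heW
  have hq := h.theta.hub_right.attached_split heW
  by_cases branch : g.Attached p U1 ∧ g.Attached q U1
  · obtain ⟨z, hz, hzA⟩ := t2.exists_black
    exact .inr ⟨_, f1, U1, h.absorb_branch heW hl t1 t2 e2 hf branch.1 branch.2,
      by simp; omega, z, by simp [hz], hzA⟩
  by_cases root : g.Attached p U2 ∧ g.Attached q U2
  · obtain ⟨z, hz, hzA⟩ := t1.exists_black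
    exact .inr ⟨_, .via e, U2, h.absorb_root hl t1 t2 e1 e2 hf root.1 root.2,
      by simp, z, by simp [hz], hzA⟩
  left
  by_cases cross : g.Attached p U2 ∧ g.Attached q U1
  · exact h.goal_of_split hl t1 t2 e1 e2 hf cross.1 cross.2
  · exact h.swap_hubs.goal_of_split hl t1 t2 e1 e2 hf (by tauto) (by tauto)

theorem progress (h : g.ThetaConfig U X R f1 f2 f3 P1 P2 P3 p q)
    (he : e ∈ P1 + P2 + P3 + {p} + {q}) (heW : ¬ g.Black e)
    (hl : g.FeetLinked U X f1 f2 f3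
      (R + (connector f1 + connector f2 + connector f3) + {e}) e) :
    X ∨ ∃ R' f1' f2' f3' P1' P2' P3', g.ThetaConfig U X R' f1' f2' f3' P1' P2' P3' p q ∧
      (P1' + P2' + P3').card < (P1 + P2 + P3).card ∧ ∃ a ∈ R', g.Black a := by
  simp only [Multiset.mem_add, Multiset.mem_singleton] at he
  rcases he with (((he | he) | he) | rfl) | rfl
  · refine (h.progress_tree1 he heW hl).imp_right ?_
    rintro ⟨R', f', P', h', hlt, hR'⟩
    exact ⟨R', f', f2, f3, P', P2, P3, h', by simpa using hlt, hR'⟩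
  · rw [add_comm (connector f1)] at hl
    refine (h.swap12.progress_tree1 he heW hl.swap12).imp_right ?_
    rintro ⟨R', f', P', h', hlt, hR'⟩
    exact ⟨R', f', f1, f3, P', P1, P3, h', by simp; omega, hR'⟩
  · rw [show connector f1 + connector f2 + connector f3 =
      connector f3 + connector f1 + connector f2 by abel] at hl
    refine (h.swap23.swap12.progress_tree1 he heW hl.swap23.swap12).imp_right ?_
    rintro ⟨R', f', P', h', hlt, hR'⟩
    exact ⟨R', f', f1, f2, P', P1, P2, h', by simp; omega, hR'⟩
  · exact .inl (h.goal_of_hub hl)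
  · exact .inl (h.swap_hubs.goal_of_hub hl)

theorem exists_landing (h : g.ThetaConfig U X R f1 f2 f3 P1 P2 P3 p q) (H : g.Expanding U)
    (hR : ∃ a ∈ R, g.Black a) :
    ∃ e ∈ P1 + P2 + P3 + {p} + {q}, ¬ g.Black e ∧ g.FeetLinked U X f1 f2 f3
      (R + (connector f1 + connector f2 + connector f3) + {e}) e := by
  obtain ⟨a, ha, hA⟩ := hR
  obtain ⟨e, he, x, hx, hxe⟩ := H.attached_of_card_le h.sum_eq ha hA
    (by rw [h.excess_eq]; simp) (b := p) (by simp) h.theta.hub_left.not_black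
  exact ⟨e, he, g.white_right hxe, (h.routed x hx (g.black_left hxe)).snoc hxe⟩

theorem goal {U : Multiset V} (H : g.Expanding U) {R P1 P2 P3 : Multiset V} {X : Prop}
    {f1 f2 f3 : Foot V} {p q e : V} (h : g.ThetaConfig U X R f1 f2 f3 P1 P2 P3 p q)
    (he : e ∈ P1 + P2 + P3 + {p} + {q}) (heW : ¬ g.Black e)
    (hl : g.FeetLinked U X f1 f2 f3
      (R + (connector f1 + connector f2 + connector f3) + {e}) e) : X := by
  obtain hX | ⟨R', f1', f2', f3', P1', P2', P3', h', _hlt, hR'⟩ := h.progress he heW hl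
  · exact hX
  · obtain ⟨e', he', heW', hl'⟩ := h'.exists_landing H hR'
    exact h'.goal H he' heW' hl'
termination_by (P1 + P2 + P3).card
decreasing_by assumption

end ThetaConfig

/-! ### Linking across a split tree -/

variable (g)

/-- The 4-cycle with black vertices `a`, `a'` and white vertices `b1`, `b2`. -/
structure FourCycle (a a' b1 b2 : V) : Prop where
  edge11 : g.Edge a b1
  edge12 : g.Edge a b2
  edge21 : g.Edge a' b1
  edge22 : g.Edge a' b2

variable {g}

section

variable {U R P1 P2 P3 : Multiset V} {a a' b1 b2 p q : V}

namespace FourCycle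

theorem left_black (h : g.FourCycle a a' b1 b2) : g.Black a := g.black_left h.edge11

theorem right_black (h : g.FourCycle a a' b1 b2) : g.Black a' := g.black_left h.edge21

theorem right_white (h : g.FourCycle a a' b1 b2) : ¬ g.Black b2 := g.white_right h.edge12

theorem swap (h : g.FourCycle a a' b1 b2) : g.FourCycle a' a b1 b2 :=
  ⟨h.edge21, h.edge22, h.edge11, h.edge12⟩

theorem join (h : g.FourCycle a a' b1 b2) {S S' : Multiset V} (hS : g.BarycentricTree S)
    (hS' : g.BarycentricTree S') (ha : a ∈ S) (ha' : a' ∈ S') :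
    g.BarycentricTree (S + {b2} + S') :=
  .join hS hS' ⟨a, ha, h.edge12⟩ ⟨a', ha', h.edge22⟩

end FourCycle

theorem linked_of_theta_of_tree (H : g.Expanding U) (hc : g.FourCycle a a' b1 b2)
    (hU : R + P1 + P2 + P3 + {p} + {q} + {b1} + {b2} = U) (hR : g.BarycentricTree R)
    (hT : g.Theta P1 P2 P3 p q) (ha : a ∈ R) (ha' : a' ∈ P1) (h1 : g.Attached b1 P2)
    (h2 : g.Attached b2 P3) : g.Linked U a a' b1 b2 := by
  have hconfig : g.ThetaConfig U (g.Linked U a a' b1 b2) R (.inside a') (.via b1) (.via b2)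
      P1 P2 P3 p q :=
    { sum_eq := by rw [← hU]; simp only [Foot.connector_inside, Foot.connector_via]; abel
      excess_eq := by simp [hR.excess]
      theta := hT
      foot1 := ⟨ha', hc.right_black⟩
      foot2 := h1
      foot3 := h2
      routed := fun x hx hA => ⟨a', b1, b2, a, 0, {b1}, {b2}, R, .inl id, ⟨rfl, rfl⟩, .refl b1,
        .refl b2, hR.connects ha hc.left_black hx hA, by
          simp only [Foot.connector_inside, Foot.connector_via]; abel⟩ }
  obtain ⟨e, he, heW, hl⟩ := hconfig.exists_landing H ⟨a, ha, hc.left_black⟩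
  exact hconfig.goal H he heW hl

theorem linked_of_theta_of_mem (H : g.Expanding U) (hc : g.FourCycle a a' b1 b2)
    (hU : P1 + P2 + P3 + {p} + {q} + {b1} = U) (hT : g.Theta P1 P2 P3 p q) (ha : a ∈ P1)
    (ha' : a' ∈ P2) (h1 : g.Attached b1 P3) (h2 : b2 ∈ P1 + P2 + P3) :
    g.Linked U a a' b1 b2 := by
  have hconfig : g.ThetaConfig U (g.Linked U a a' b1 b2) 0 (.inside a) (.inside a') (.via b1)
      P1 P2 P3 p q :=
    { sum_eq := by rw [← hU]; simp only [Foot.connector_inside, Foot.connector_via]; abel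
      excess_eq := by simp
      theta := hT
      foot1 := ⟨ha, hc.left_black⟩
      foot2 := ⟨ha', hc.right_black⟩
      foot3 := h1
      routed := by simp }
  refine hconfig.goal H (Multiset.mem_add.2 (.inl (Multiset.mem_add.2 (.inl h2)))) hc.right_white
    ⟨a, a', b1, b2, 0, 0, {b1}, {b2}, .inr (.inr fun k => k.symm.comm), ⟨rfl, rfl⟩, ⟨rfl, rfl⟩,
      .refl b1, .refl b2, ?_⟩
  simp only [Foot.connector_inside, Foot.connector_via]
  abel

end

/-- The tree `S + {b2} + S'` containing the 4-cycle minus `b1` is tied, through `u`, to a theta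
graph which also carries `b1`. -/
structure SplitTheta (g : Bigraph V) (U : Multiset V) (a a' b1 b2 : V)
    (S S' P Q R : Multiset V) (u j k : V) : Prop where
  cycle : g.FourCycle a a' b1 b2
  sum_eq : S + {b2} + S' + (P + Q + R + {b1} + {u} + {j} + {k}) = U
  tree : g.BarycentricTree S
  tree' : g.BarycentricTree S'
  mem : a ∈ S
  mem' : a' ∈ S'
  theta : g.Theta P Q R j k
  attached2 : g.Attached b1 Q
  attached3 : g.Attached b1 R
  tie : g.Hub u (S + S') P Q

namespace SplitTheta

variable {U S S' P Q R Y : Multiset V} {a a' b1 b2 u j k w : V}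

theorem symm (h : g.SplitTheta U a a' b1 b2 S S' P Q R u j k) :
    g.SplitTheta U a' a b1 b2 S' S P Q R u j k where
  cycle := h.cycle.swap
  sum_eq := by rw [← h.sum_eq]; abel
  tree := h.tree'
  tree' := h.tree
  mem := h.mem'
  mem' := h.mem
  theta := h.theta
  attached2 := h.attached2
  attached3 := h.attached3
  tie := add_comm S S' ▸ h.tie

theorem linked_of_attached (H : g.Expanding U) (h : g.SplitTheta U a a' b1 b2 S S' P Q R u j k)
    (hu : g.Attached u S') (hb2 : g.Attached b2 (P + Q + R)) : g.Linked U a a' b1 b2 := by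
  obtain ⟨hc, hU, tS, tS', ha, ha', hT, bQ, bR, -, uP, uQ⟩ := h
  simp only [attached_add] at hb2
  rcases hb2 with (hP | hQ) | hR
  · exact linked_of_theta_of_tree H hc (R := S) (P1 := Q + {u} + S') (P2 := R) (P3 := P)
      (by rw [← hU]; abel) tS (hT.swap12.swap23.join1 tS' uQ hu) ha (by simp [ha']) bR hP
  · exact linked_of_theta_of_tree H hc (R := S) (P1 := P + {u} + S') (P2 := R) (P3 := Q)
      (by rw [← hU]; abel) tS (hT.swap23.join1 tS' uP hu) ha (by simp [ha']) bR hQ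
  · exact linked_of_theta_of_tree H hc (R := S) (P1 := P + {u} + S') (P2 := Q) (P3 := R)
      (by rw [← hU]; abel) tS (hT.join1 tS' uP hu) ha (by simp [ha']) bQ hR

theorem shrink_keeping_tie (h : g.SplitTheta U a a' b1 b2 (S + {w} + Y) S' P Q R u j k)
    (tS : g.BarycentricTree S) (tY : g.BarycentricTree Y) (wY : g.Attached w Y) (ha : a ∈ S)
    (hw : g.Attached w (P + Q + R)) (hu : g.Attached u (S + S')) :
    ∃ P1 Q1 R1, g.SplitTheta U a a' b1 b2 S S' P1 Q1 R1 u j k := by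
  obtain ⟨hc, hU, -, tS', -, ha', hT, bQ, bR, -, uP, uQ⟩ := h
  simp only [attached_add] at hw
  rcases hw with (hP | hQ) | hR
  · exact ⟨P + {w} + Y, Q, R, hc, by rw [← hU]; abel, tS, tS', ha, ha', hT.join1 tY hP wY,
      bQ, bR, hu, by simp [attached_add, uP], uQ⟩
  · exact ⟨P, Q + {w} + Y, R, hc, by rw [← hU]; abel, tS, tS', ha, ha', hT.join2 tY hQ wY,
      by simp [attached_add, bQ], bR, hu, uP, by simp [attached_add, uQ]⟩
  · exact ⟨P, Q, R + {w} + Y, hc, by rw [← hU]; abel, tS, tS', ha, ha', hT.join3 tY hR wY,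
      bQ, by simp [attached_add, bR], hu, uP, uQ⟩

theorem shrink_moving_tie (h : g.SplitTheta U a a' b1 b2 (S + {w} + Y) S' P Q R u j k)
    (tS : g.BarycentricTree S) (tY : g.BarycentricTree Y) (wS : g.Attached w S)
    (wY : g.Attached w Y) (ha : a ∈ S) (hw : g.Attached w (P + Q + R)) (hu : g.Attached u Y) :
    ∃ P1 Q1 R1, g.SplitTheta U a a' b1 b2 S S' P1 Q1 R1 w j k := by
  obtain ⟨hc, hU, -, tS', -, ha', hT, bQ, bR, -, uP, uQ⟩ := h
  have wSS' := wS.add_right S'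
  simp only [attached_add] at hw
  rcases hw with (hP | hQ) | hR
  · exact ⟨P, Q + {u} + Y, R, hc, by rw [← hU]; abel, tS, tS', ha, ha', hT.join2 tY uQ hu,
      by simp [attached_add, bQ], bR, wSS', hP, by simp [attached_add, wY]⟩
  · exact ⟨P + {u} + Y, Q, R, hc, by rw [← hU]; abel, tS, tS', ha, ha', hT.join1 tY uP hu,
      bQ, bR, wSS', by simp [attached_add, wY], hQ⟩
  · exact ⟨P + {u} + Y, R, Q, hc, by rw [← hU]; abel, tS, tS', ha, ha',
      (hT.join1 tY uP hu).swap23, bR, bQ, wSS', by simp [attached_add, wY], hR⟩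

theorem shrink (h : g.SplitTheta U a a' b1 b2 S S' P Q R u j k) (hw : w ∈ S)
    (hwW : ¬ g.Black w) (hwT : g.Attached w (P + Q + R)) :
    ∃ S1 P1 Q1 R1 u1, g.SplitTheta U a a' b1 b2 S1 S' P1 Q1 R1 u1 j k ∧ S1.card < S.card := by
  obtain ⟨S1, Y, t1, tY, w1, wY, rfl, ha⟩ := h.tree.split_mem hw hwW h.mem h.cycle.left_black
  have hlt : S1.card < (S1 + {w} + Y).card := by simp; omega
  by_cases keep : g.Attached u (S1 + S')
  · obtain ⟨P1, Q1, R1, h1⟩ := h.shrink_keeping_tie t1 tY wY ha hwT keep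
    exact ⟨S1, P1, Q1, R1, u, h1, hlt⟩
  · have hu := h.tie.1
    simp only [attached_add, not_attached_singleton hwW] at hu keep
    obtain ⟨P1, Q1, R1, h1⟩ := h.shrink_moving_tie t1 tY w1 wY ha hwT (by tauto)
    exact ⟨S1, P1, Q1, R1, w, h1, hlt⟩

theorem linked {U : Multiset V} (H : g.Expanding U) {S S' P Q R : Multiset V}
    {a a' b1 b2 u j k : V} (h : g.SplitTheta U a a' b1 b2 S S' P Q R u j k) :
    g.Linked U a a' b1 b2 := by
  obtain ⟨z, hz, hzA⟩ := h.theta.tree2.exists_black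
  obtain ⟨w, hw, hwT⟩ := H.attached_of_tree (h.cycle.join h.tree h.tree' h.mem h.mem')
    (u := b2) (by simp) h.cycle.right_white h.sum_eq (a := z) (by simp [hz]) hzA
  have hwW := hwT.not_black
  replace hwT : g.Attached w (P + Q + R) := by
    simpa only [attached_add, not_attached_singleton h.attached2.not_black,
      not_attached_singleton h.tie.not_black, not_attached_singleton h.theta.hub_left.not_black,
      not_attached_singleton h.theta.hub_right.not_black, or_false] using hwT
  simp only [Multiset.mem_add, Multiset.mem_singleton] at hw
  rcases hw with (hw | rfl) | hw
  · obtain ⟨S1, P1, Q1, R1, u1, h1, _hlt⟩ := h.shrink hw hwW hwT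
    exact h1.linked H
  · rcases attached_add.1 h.tie.1 with hu | hu
    · exact (h.symm.linked_of_attached H hu hwT).symm
    · exact h.linked_of_attached H hu hwT
  · obtain ⟨S1, P1, Q1, R1, u1, h1, _hlt⟩ := h.symm.shrink hw hwW hwT
    exact (h1.linked H).symm
termination_by S.card + S'.card

end SplitTheta

/-- A `K₃,₃` model with hubs `b1`, `p`, `q` one of whose trees is split at `b2` into `S ∋ a` and
`S' ∋ a'`. -/
structure SplitModel (g : Bigraph V) (U : Multiset V) (a a' b1 b2 : V)
    (S S' Q R : Multiset V) (p q : V) : Prop where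
  cycle : g.FourCycle a a' b1 b2
  sum_eq : S + {b2} + S' + (Q + R + {b1} + {p} + {q}) = U
  tree : g.BarycentricTree S
  tree' : g.BarycentricTree S'
  mem : a ∈ S
  mem' : a' ∈ S'
  tree2 : g.BarycentricTree Q
  tree3 : g.BarycentricTree R
  attached2 : g.Attached b1 Q
  attached3 : g.Attached b1 R
  hub_left : g.Hub p (S + S') Q R
  hub_right : g.Hub q (S + S') Q R

namespace SplitModel

variable {U S S' Q R Y : Multiset V} {a a' b1 b2 p q w : V}

theorem symm (h : g.SplitModel U a a' b1 b2 S S' Q R p q) :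
    g.SplitModel U a' a b1 b2 S' S Q R p q where
  __ := h
  cycle := h.cycle.swap
  sum_eq := by rw [← h.sum_eq]; abel
  tree := h.tree'
  tree' := h.tree
  mem := h.mem'
  mem' := h.mem
  hub_left := add_comm S S' ▸ h.hub_left
  hub_right := add_comm S S' ▸ h.hub_right

theorem swap_trees (h : g.SplitModel U a a' b1 b2 S S' Q R p q) :
    g.SplitModel U a a' b1 b2 S S' R Q p q where
  __ := h
  sum_eq := by rw [← h.sum_eq]; abel
  tree2 := h.tree3
  tree3 := h.tree2
  attached2 := h.attached3
  attached3 := h.attached2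
  hub_left := h.hub_left.swap23
  hub_right := h.hub_right.swap23

theorem swap_hubs (h : g.SplitModel U a a' b1 b2 S S' Q R p q) :
    g.SplitModel U a a' b1 b2 S S' Q R q p where
  __ := h
  sum_eq := by rw [← h.sum_eq]; abel
  hub_left := h.hub_right
  hub_right := h.hub_left

theorem linked_of_opposite_hubs (h : g.SplitModel U a a' b1 b2 S S' Q R p q)
    (hb2 : g.Attached b2 Q) (hp : g.Attached p S) (hq : g.Attached q S') :
    g.Linked U a a' b1 b2 :=
  linked_of_trees (X := S + {p} + R + {q} + S') (Y := Q) (by rw [← h.sum_eq]; abel)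
    (.join (.join h.tree h.tree3 hp h.hub_left.2.2) h.tree' (h.hub_right.2.2.add_left _) hq)
    h.tree2 (by simp [h.mem]) h.cycle.left_black (by simp [h.mem']) h.cycle.right_black
    h.attached2 hb2

theorem linked_of_same_hubs (H : g.Expanding U) (h : g.SplitModel U a a' b1 b2 S S' Q R p q)
    (hb2 : g.Attached b2 Q) (hp : g.Attached p S') (hq : g.Attached q S') :
    g.Linked U a a' b1 b2 :=
  linked_of_theta_of_tree H h.cycle (by rw [← h.sum_eq]; abel) h.tree
    ⟨h.tree', h.tree3, h.tree2, ⟨hp, h.hub_left.swap23.2⟩, hq, h.hub_right.swap23.2⟩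
    h.mem h.mem' h.attached3 hb2

theorem linked_of_attached (H : g.Expanding U) (h : g.SplitModel U a a' b1 b2 S S' Q R p q)
    (hb2 : g.Attached b2 Q) : g.Linked U a a' b1 b2 := by
  rcases attached_add.1 h.hub_left.1 with hp | hp <;>
    rcases attached_add.1 h.hub_right.1 with hq | hq
  · exact (h.symm.linked_of_same_hubs H hb2 hp hq).symm
  · exact h.linked_of_opposite_hubs hb2 hp hq
  · exact h.swap_hubs.linked_of_opposite_hubs hb2 hq hp
  · exact h.linked_of_same_hubs H hb2 hp hq

theorem shrink_moving_hub (h : g.SplitModel U a a' b1 b2 (S + {w} + Y) S' Q R p q)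
    (tS : g.BarycentricTree S) (tY : g.BarycentricTree Y) (wS : g.Attached w S)
    (wY : g.Attached w Y) (ha : a ∈ S) (hwQ : g.Attached w Q) (hp : g.Attached p (S + S'))
    (hq : g.Attached q Y) : g.SplitModel U a a' b1 b2 S S' Q (R + {q} + Y) p w where
  __ := h
  sum_eq := by rw [← h.sum_eq]; abel
  tree := tS
  mem := ha
  tree3 := .join h.tree3 tY h.hub_right.2.2 hq
  attached3 := (h.attached3.add_right _).add_right _
  hub_left := ⟨hp, h.hub_left.2.1, (h.hub_left.2.2.add_right _).add_right _⟩
  hub_right := ⟨wS.add_right _, hwQ, wY.add_left _⟩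

theorem shrink_keeping_hubs (h : g.SplitModel U a a' b1 b2 (S + {w} + Y) S' Q R p q)
    (tS : g.BarycentricTree S) (tY : g.BarycentricTree Y) (wY : g.Attached w Y) (ha : a ∈ S)
    (hwQ : g.Attached w Q) (hp : g.Attached p (S + S')) (hq : g.Attached q (S + S')) :
    g.SplitModel U a a' b1 b2 S S' (Q + {w} + Y) R p q where
  __ := h
  sum_eq := by rw [← h.sum_eq]; abel
  tree := tS
  mem := ha
  tree2 := .join h.tree2 tY hwQ wY
  attached2 := (h.attached2.add_right _).add_right _
  hub_left := ⟨hp, (h.hub_left.2.1.add_right _).add_right _, h.hub_left.2.2⟩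
  hub_right := ⟨hq, (h.hub_right.2.1.add_right _).add_right _, h.hub_right.2.2⟩

theorem toSplitTheta (h : g.SplitModel U a a' b1 b2 (S + {w} + Y) S' Q R p q)
    (tS : g.BarycentricTree S) (tY : g.BarycentricTree Y) (wS : g.Attached w S)
    (wY : g.Attached w Y) (ha : a ∈ S) (hwQ : g.Attached w Q) (hp : g.Attached p Y)
    (hq : g.Attached q Y) : g.SplitTheta U a a' b1 b2 S S' Y Q R w p q where
  __ := h
  sum_eq := by rw [← h.sum_eq]; abel
  tree := tS
  mem := ha
  theta := ⟨tY, h.tree2, h.tree3, ⟨hp, h.hub_left.2⟩, hq, h.hub_right.2⟩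
  tie := ⟨wS.add_right _, wY, hwQ⟩

theorem linked_or_shrink (H : g.Expanding U) (h : g.SplitModel U a a' b1 b2 S S' Q R p q)
    (hw : w ∈ S) (hwW : ¬ g.Black w) (hwQ : g.Attached w Q) :
    g.Linked U a a' b1 b2 ∨ ∃ S1 Q1 R1 p1 q1,
      g.SplitModel U a a' b1 b2 S1 S' Q1 R1 p1 q1 ∧ S1.card < S.card := by
  obtain ⟨S1, Y, t1, tY, w1, wY, rfl, ha⟩ := h.tree.split_mem hw hwW h.mem h.cycle.left_black
  have hlt : S1.card < (S1 + {w} + Y).card := by simp; omega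
  have keep_or_move : ∀ {p}, g.Attached p (S1 + {w} + Y + S') →
      g.Attached p (S1 + S') ∨ g.Attached p Y := fun hp => by
    simp only [attached_add, not_attached_singleton hwW] at hp ⊢
    tauto
  rcases keep_or_move h.hub_left.1 with hp | hp <;> rcases keep_or_move h.hub_right.1 with hq | hq
  · exact .inr ⟨_, _, _, _, _, h.shrink_keeping_hubs t1 tY wY ha hwQ hp hq, hlt⟩
  · exact .inr ⟨_, _, _, _, _, h.shrink_moving_hub t1 tY w1 wY ha hwQ hp hq, hlt⟩
  · exact .inr ⟨_, _, _, _, _, h.swap_hubs.shrink_moving_hub t1 tY w1 wY ha hwQ hq hp, hlt⟩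
  · exact .inl ((h.toSplitTheta t1 tY w1 wY ha hwQ hp hq).linked H)

theorem exists_attached (H : g.Expanding U) (h : g.SplitModel U a a' b1 b2 S S' Q R p q) :
    ∃ w ∈ S + {b2} + S', g.Attached w Q ∨ g.Attached w R := by
  obtain ⟨z, hz, hzA⟩ := h.tree2.exists_black
  obtain ⟨w, hw, hwT⟩ := H.attached_of_tree (h.cycle.join h.tree h.tree' h.mem h.mem')
    (u := b2) (by simp) h.cycle.right_white h.sum_eq (a := z) (by simp [hz]) hzA
  simp only [attached_add, not_attached_singleton h.attached2.not_black,
    not_attached_singleton h.hub_left.not_black, not_attached_singleton h.hub_right.not_black,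
    or_false] at hwT
  exact ⟨w, hw, hwT⟩

theorem linked {U : Multiset V} (H : g.Expanding U) {S S' Q R : Multiset V}
    {a a' b1 b2 p q : V} (h : g.SplitModel U a a' b1 b2 S S' Q R p q) :
    g.Linked U a a' b1 b2 := by
  obtain ⟨w, hw, hwT⟩ := h.exists_attached H
  obtain ⟨Q, R, h, hwQ⟩ : ∃ Q' R', g.SplitModel U a a' b1 b2 S S' Q' R' p q ∧
      g.Attached w Q' :=
    hwT.elim (fun hQ => ⟨Q, R, h, hQ⟩) fun hR => ⟨R, Q, h.swap_trees, hR⟩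
  simp only [Multiset.mem_add, Multiset.mem_singleton] at hw
  rcases hw with (hw | rfl) | hw
  · rcases h.linked_or_shrink H hw hwQ.not_black hwQ with hL | ⟨S1, Q1, R1, p1, q1, h1, _hlt⟩
    exacts [hL, h1.linked H]
  · exact h.linked_of_attached H hwQ
  · rcases h.symm.linked_or_shrink H hw hwQ.not_black hwQ with
      hL | ⟨S1, Q1, R1, p1, q1, h1, _hlt⟩
    exacts [hL.symm, (h1.linked H).symm]
termination_by S.card + S'.card

end SplitModel

/-! ### Linking in a spanning model -/

variable (g) in
/-- A `K₃,₃`-model: three barycentric trees joined by three hubs, one of which is singled out as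
the centre `b`. -/
structure K33Model (P Q R : Multiset V) (b p q : V) : Prop extends g.Theta P Q R p q where
  center : g.Hub b P Q R

namespace K33Model

variable {P Q R : Multiset V} {b p q : V}

theorem swap12 (h : g.K33Model P Q R b p q) : g.K33Model Q P R b p q :=
  ⟨h.toTheta.swap12, h.center.swap12⟩

theorem swap23 (h : g.K33Model P Q R b p q) : g.K33Model P R Q b p q :=
  ⟨h.toTheta.swap23, h.center.swap23⟩

theorem swap_hubs (h : g.K33Model P Q R b p q) : g.K33Model P Q R b q p :=
  ⟨h.toTheta.swap_hubs, h.center⟩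

theorem swap_center (h : g.K33Model P Q R b p q) : g.K33Model P Q R p b q where
  __ := h
  hub_left := h.center
  center := h.hub_left

end K33Model

theorem Hub.mono1 {b : V} {P P' Q R : Multiset V} (h : g.Hub b P Q R)
    (hP : ∀ x ∈ P, g.Black x → x ∈ P') : g.Hub b P' Q R :=
  ⟨h.1.imp fun _ hx => ⟨hP _ hx.1 (g.black_left hx.2), hx.2⟩, h.2⟩

/-- Four disjoint barycentric trees covering all of `U` but `b1`, `b2`, `p` and `q`: the tree `D`
is pendant at `b2` and the tree `P` carries both black vertices of the four-cycle. -/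
structure PendantForest (g : Bigraph V) (U : Multiset V) (a a' b1 b2 : V)
    (D P Q R : Multiset V) (p q : V) : Prop where
  cycle : g.FourCycle a a' b1 b2
  sum_eq : D + {b2} + (P + Q + R + {b1} + {p} + {q}) = U
  tree : g.BarycentricTree D
  attached : g.Attached b2 D
  tree1 : g.BarycentricTree P
  tree2 : g.BarycentricTree Q
  tree3 : g.BarycentricTree R
  mem' : a' ∈ P
  mem : a ∈ P

/-- A pendant forest whose trees `P`, `Q`, `R` form a `K₃,₃`-model with centre `b1`. -/
structure PendantModel (g : Bigraph V) (U : Multiset V) (a a' b1 b2 : V)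
    (D P Q R : Multiset V) (p q : V) : Prop extends g.PendantForest U a a' b1 b2 D P Q R p q where
  center : g.Hub b1 P Q R
  hub_left : g.Hub p P Q R
  hub_right : g.Hub q P Q R

section Pendant

variable {U D P Q R P1 P2 Q1 Q2 : Multiset V} {a a' b1 b2 p q e : V}

namespace PendantForest

theorem swap_trees (h : g.PendantForest U a a' b1 b2 D P Q R p q) :
    g.PendantForest U a a' b1 b2 D P R Q p q where
  __ := h
  sum_eq := by rw [← h.sum_eq]; abel
  tree2 := h.tree3
  tree3 := h.tree2

theorem swap_hubs (h : g.PendantForest U a a' b1 b2 D P Q R p q) :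
    g.PendantForest U a a' b1 b2 D P Q R q p where
  __ := h
  sum_eq := by rw [← h.sum_eq]; abel

theorem linked_of_attached_left (h : g.PendantForest U a a' b1 b2 D P Q R p q)
    (hpD : g.Attached p D) (hpQ : g.Attached p Q) (hqQ : g.Attached q Q)
    (hqR : g.Attached q R) (hb1 : g.Attached b1 Q) : g.Linked U a a' b1 b2 :=
  linked_of_trees (X := P) (Y := D + {p} + Q + {q} + R) (by rw [← h.sum_eq]; abel) h.tree1
    (.join (.join h.tree h.tree2 hpD hpQ) h.tree3 (hqQ.add_left _) hqR)
    h.mem h.cycle.left_black h.mem' h.cycle.right_black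
    (by simp only [attached_add, hb1, or_true, true_or])
    (by simp only [attached_add, h.attached, true_or])

theorem linked_of_attached_center (h : g.PendantForest U a a' b1 b2 D P Q R p q)
    (hb1 : g.Attached b1 D) (hp : g.Hub p P Q R) (hq : g.Hub q P Q R) :
    g.Linked U a a' b1 b2 :=
  linked_of_trees (X := P + {p} + Q + {q} + R) (Y := D) (by rw [← h.sum_eq]; abel)
    (.join (.join h.tree1 h.tree2 hp.1 hp.2.1) h.tree3 (hq.2.1.add_left _) hq.2.2)
    h.tree (by simp [h.mem]) h.cycle.left_black (by simp [h.mem']) h.cycle.right_black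
    hb1 h.attached

theorem linked_or_pendantModel1 (h : g.PendantForest U a a' b1 b2 D P Q R p q)
    (hb1 : g.Hub b1 (P + D) Q R) (hp : g.Hub p (P + D) Q R) (hq : g.Hub q (P + D) Q R) :
    g.Linked U a a' b1 b2 ∨ g.PendantModel U a a' b1 b2 D P Q R p q := by
  rcases attached_add.1 hp.1 with hpP | hpD
  · rcases attached_add.1 hq.1 with hqP | hqD
    · rcases attached_add.1 hb1.1 with hbP | hbD
      · exact .inr ⟨h, ⟨hbP, hb1.2⟩, ⟨hpP, hp.2⟩, ⟨hqP, hq.2⟩⟩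
      · exact .inl (h.linked_of_attached_center hbD ⟨hpP, hp.2⟩ ⟨hqP, hq.2⟩)
    · exact .inl (h.swap_hubs.linked_of_attached_left hqD hq.2.1 hp.2.1 hp.2.2 hb1.2.1)
  · exact .inl (h.linked_of_attached_left hpD hp.2.1 hq.2.1 hq.2.2 hb1.2.1)

theorem linked_or_pendantModel2 (h : g.PendantForest U a a' b1 b2 D P Q R p q)
    (hb1 : g.Hub b1 (Q + D) P R) (hp : g.Hub p Q P R) (hq : g.Hub q (Q + D) P R) :
    g.Linked U a a' b1 b2 ∨ g.PendantModel U a a' b1 b2 D P Q R p q := by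
  rcases attached_add.1 hq.1 with hqQ | hqD
  · have hq' : g.Hub q P Q R := Hub.swap12 ⟨hqQ, hq.2⟩
    rcases attached_add.1 hb1.1 with hbQ | hbD
    · exact .inr ⟨h, Hub.swap12 ⟨hbQ, hb1.2⟩, hp.swap12, hq'⟩
    · exact .inl (h.linked_of_attached_center hbD hp.swap12 hq')
  · exact .inl (h.swap_hubs.swap_trees.linked_of_attached_left hqD hq.2.2 hp.2.2 hp.1 hb1.2.2)

end PendantForest

namespace PendantModel

theorem swap_trees (h : g.PendantModel U a a' b1 b2 D P Q R p q) :
    g.PendantModel U a a' b1 b2 D P R Q p q :=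
  ⟨h.toPendantForest.swap_trees, h.center.swap23, h.hub_left.swap23, h.hub_right.swap23⟩

theorem swap_hubs (h : g.PendantModel U a a' b1 b2 D P Q R p q) :
    g.PendantModel U a a' b1 b2 D P Q R q p :=
  ⟨h.toPendantForest.swap_hubs, h.center, h.hub_right, h.hub_left⟩

theorem linked_of_attached_hub (h : g.PendantModel U a a' b1 b2 D P Q R p q)
    (hp : g.Attached p D) : g.Linked U a a' b1 b2 :=
  h.linked_of_attached_left hp h.hub_left.2.1 h.hub_right.2.1 h.hub_right.2.2 h.center.2.1

theorem linked_or_grow1 (h : g.PendantModel U a a' b1 b2 D (P1 + {e} + P2) Q R p q)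
    (heD : g.Attached e D) (t1 : g.BarycentricTree P1) (t2 : g.BarycentricTree P2)
    (e2 : g.Attached e P2) (ha : a ∈ P1) (ha' : a' ∈ P1) :
    g.Linked U a a' b1 b2 ∨ g.PendantModel U a a' b1 b2 (D + {e} + P2) P1 Q R p q := by
  have hmono : ∀ x ∈ P1 + {e} + P2, g.Black x → x ∈ P1 + (D + {e} + P2) := by
    simp only [Multiset.mem_add]; tauto
  refine PendantForest.linked_or_pendantModel1 { h with
    sum_eq := by rw [← h.sum_eq]; abel
    tree := .join h.tree t2 heD e2
    attached := (h.attached.add_right _).add_right _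
    tree1 := t1, mem := ha, mem' := ha' } ?_ ?_ ?_
  exacts [h.center.mono1 hmono, h.hub_left.mono1 hmono, h.hub_right.mono1 hmono]

theorem linked_or_grow2 (h : g.PendantModel U a a' b1 b2 D P (Q1 + {e} + Q2) R p q)
    (heD : g.Attached e D) (t1 : g.BarycentricTree Q1) (t2 : g.BarycentricTree Q2)
    (e2 : g.Attached e Q2) (hp : g.Attached p Q1) :
    g.Linked U a a' b1 b2 ∨ g.PendantModel U a a' b1 b2 (D + {e} + Q2) P Q1 R p q := by
  have hmono : ∀ x ∈ Q1 + {e} + Q2, g.Black x → x ∈ Q1 + (D + {e} + Q2) := by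
    simp only [Multiset.mem_add]; tauto
  exact PendantForest.linked_or_pendantModel2 { h with
    sum_eq := by rw [← h.sum_eq]; abel
    tree := .join h.tree t2 heD e2
    attached := (h.attached.add_right _).add_right _
    tree2 := t1 } (h.center.swap12.mono1 hmono) ⟨hp, h.hub_left.swap12.2⟩
    (h.hub_right.swap12.mono1 hmono)

theorem toSplitModel (h : g.PendantModel U a a' b1 b2 D (P1 + {e} + P2) Q R p q)
    (heD : g.Attached e D) (t1 : g.BarycentricTree P1) (t2 : g.BarycentricTree P2)
    (e1 : g.Attached e P1) (ha : a ∈ P1) (ha' : a' ∈ P2) :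
    g.SplitModel U a a' b1 b2 (P1 + {e} + D) P2 Q R p q := by
  have hmono : ∀ x ∈ P1 + {e} + P2, g.Black x → x ∈ P1 + {e} + D + P2 := by
    simp only [Multiset.mem_add]; tauto
  exact { h with
    sum_eq := by rw [← h.sum_eq]; abel
    tree := .join t1 h.tree e1 heD
    tree' := t2
    mem := by simp [ha]
    mem' := ha'
    attached2 := h.center.2.1
    attached3 := h.center.2.2
    hub_left := h.hub_left.mono1 hmono
    hub_right := h.hub_right.mono1 hmono }

theorem linked_or_shrink1 (H : g.Expanding U) (h : g.PendantModel U a a' b1 b2 D P Q R p q)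
    (he : ¬ g.Black e) (heD : g.Attached e D) (heP : e ∈ P) : g.Linked U a a' b1 b2 ∨
      ∃ D' P', g.PendantModel U a a' b1 b2 D' P' Q R p q ∧ P'.card < P.card := by
  obtain ⟨P1, P2, t1, t2, e1, e2, rfl, ha⟩ := h.tree1.split_mem heP he h.mem h.cycle.left_black
  have ha' := h.mem'
  simp only [Multiset.mem_add, Multiset.mem_singleton] at ha'
  rcases ha' with (ha' | rfl) | ha'
  · exact (h.linked_or_grow1 heD t1 t2 e2 ha ha').imp_right
      fun h' => ⟨_, _, h', by simp; omega⟩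
  · exact absurd h.cycle.right_black he
  · exact .inl ((h.toSplitModel heD t1 t2 e1 ha ha').linked H)

theorem linked_or_shrink2 (h : g.PendantModel U a a' b1 b2 D P Q R p q)
    (he : ¬ g.Black e) (heD : g.Attached e D) (heQ : e ∈ Q) : g.Linked U a a' b1 b2 ∨
      ∃ D' Q', g.PendantModel U a a' b1 b2 D' P Q' R p q ∧ Q'.card < Q.card := by
  obtain ⟨Q1, Q2, t1, t2, e1, e2, rfl⟩ := h.tree2.split heQ he
  rcases h.hub_left.swap12.attached_split he with hp | hp
  · exact (h.linked_or_grow2 heD t1 t2 e2 hp).imp_right fun h' => ⟨_, _, h', by simp; omega⟩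
  · have hcomm : Q1 + {e} + Q2 = Q2 + {e} + Q1 := by abel
    rw [hcomm] at h
    exact (h.linked_or_grow2 heD t2 t1 e1 hp).imp_right fun h' => ⟨_, _, h', by simp⟩

theorem linked {U D P Q R : Multiset V} {a a' b1 b2 p q : V} (H : g.Expanding U)
    (h : g.PendantModel U a a' b1 b2 D P Q R p q) : g.Linked U a a' b1 b2 := by
  obtain ⟨z, hz, hzA⟩ := h.tree.exists_black
  obtain ⟨e, he, heD⟩ := H.attached_of_card_le h.sum_eq hz hzA (by simp [h.tree.excess])
    (b := p) (by simp) h.hub_left.not_black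
  simp only [Multiset.mem_add, Multiset.mem_singleton] at he
  rcases he with ((((he | he) | he) | rfl) | rfl) | rfl
  · rcases h.linked_or_shrink1 H heD.not_black heD he with hL | ⟨D', P', h', _hlt⟩
    exacts [hL, h'.linked H]
  · rcases h.linked_or_shrink2 heD.not_black heD he with hL | ⟨D', Q', h', _hlt⟩
    exacts [hL, h'.linked H]
  · rcases h.swap_trees.linked_or_shrink2 heD.not_black heD he with hL | ⟨D', R', h', _hlt⟩
    exacts [hL, h'.linked H]
  · exact h.linked_of_attached_center heD h.hub_left h.hub_right
  · exact h.linked_of_attached_hub heD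
  · exact h.swap_hubs.linked_of_attached_hub heD
termination_by (P + Q + R).card
decreasing_by all_goals simp only [Multiset.card_add]; omega

end PendantModel

end Pendant

namespace K33Model

variable {U P Q R P1 P2 Q1 Q2 : Multiset V} {a a' b1 b2 b p q : V}

theorem linked_of_hub_eq (hc : g.FourCycle a a' b1 b2) (h : g.K33Model P Q R b1 b2 q)
    (hU : P + Q + R + {b1} + {b2} + {q} = U) (ha : a ∈ P) (ha' : a' ∈ P ∨ a' ∈ Q) :
    g.Linked U a a' b1 b2 :=
  linked_of_trees (X := P + {q} + Q) (Y := R) (by rw [← hU]; abel)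
    (.join h.tree1 h.tree2 h.hub_right.1 h.hub_right.2.1) h.tree3 (by simp [ha])
    hc.left_black (by simp only [Multiset.mem_add]; tauto) hc.right_black
    h.center.2.2 h.hub_left.2.2

theorem linked_of_mem_tree1 (H : g.Expanding U) (hc : g.FourCycle a a' b1 b2)
    (h : g.K33Model P Q R b1 p q) (hU : P + Q + R + {b1} + {p} + {q} = U)
    (ha : a ∈ P) (ha' : a' ∈ P) (hb : b2 ∈ P) : g.Linked U a a' b1 b2 := by
  obtain ⟨P1, P2, t1, t2, e1, e2, rfl, ha1⟩ :=
    h.tree1.split_mem hb hc.right_white ha hc.left_black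
  have hmono : ∀ x ∈ P1 + {b2} + P2, g.Black x → x ∈ P1 + P2 := by
    simp only [Multiset.mem_add, Multiset.mem_singleton]
    rintro x ((hx | rfl) | hx) hxB
    exacts [.inl hx, absurd hxB hc.right_white, .inr hx]
  have hb1 := h.center.mono1 hmono
  have hp := h.hub_left.mono1 hmono
  have hq := h.hub_right.mono1 hmono
  simp only [Multiset.mem_add, Multiset.mem_singleton] at ha'
  rcases ha' with (ha' | rfl) | ha'
  · have forest : g.PendantForest U a a' b1 b2 P2 P1 Q R p q :=
      ⟨hc, by rw [← hU]; abel, t2, e2, t1, h.tree2, h.tree3, ha', ha1⟩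
    rcases forest.linked_or_pendantModel1 hb1 hp hq with hL | h'
    exacts [hL, h'.linked H]
  · exact absurd hc.right_black hc.right_white
  · have split : g.SplitModel U a a' b1 b2 P1 P2 Q R p q :=
      ⟨hc, by rw [← hU]; abel, t1, t2, ha1, ha', h.tree2, h.tree3, h.center.2.1, h.center.2.2,
        hp, hq⟩
    exact split.linked H

theorem linked_of_split2 (H : g.Expanding U) (hc : g.FourCycle a a' b1 b2)
    (h : g.K33Model P (Q1 + {b2} + Q2) R b1 p q)
    (hU : P + (Q1 + {b2} + Q2) + R + {b1} + {p} + {q} = U) (ha : a ∈ P) (ha' : a' ∈ P)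
    (t1 : g.BarycentricTree Q1) (t2 : g.BarycentricTree Q2) (e2 : g.Attached b2 Q2)
    (hp : g.Attached p Q1) : g.Linked U a a' b1 b2 := by
  have hmono : ∀ x ∈ Q1 + {b2} + Q2, g.Black x → x ∈ Q1 + Q2 := by
    simp only [Multiset.mem_add, Multiset.mem_singleton]
    rintro x ((hx | rfl) | hx) hxB
    exacts [.inl hx, absurd hxB hc.right_white, .inr hx]
  have forest : g.PendantForest U a a' b1 b2 Q2 P Q1 R p q :=
    ⟨hc, by rw [← hU]; abel, t2, e2, h.tree1, t1, h.tree3, ha', ha⟩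
  rcases forest.linked_or_pendantModel2 (h.center.swap12.mono1 hmono) ⟨hp, h.hub_left.swap12.2⟩
    (h.hub_right.swap12.mono1 hmono) with hL | h'
  exacts [hL, h'.linked H]

theorem linked_of_mem_tree2 (H : g.Expanding U) (hc : g.FourCycle a a' b1 b2)
    (h : g.K33Model P Q R b1 p q) (hU : P + Q + R + {b1} + {p} + {q} = U)
    (ha : a ∈ P) (ha' : a' ∈ P) (hb : b2 ∈ Q) : g.Linked U a a' b1 b2 := by
  obtain ⟨Q1, Q2, t1, t2, e1, e2, rfl⟩ := h.tree2.split hb hc.right_white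
  rcases h.hub_left.swap12.attached_split hc.right_white with hp | hp
  · exact h.linked_of_split2 H hc hU ha ha' t1 t2 e2 hp
  · have hcomm : Q1 + {b2} + Q2 = Q2 + {b2} + Q1 := by abel
    rw [hcomm] at h hU
    exact h.linked_of_split2 H hc hU ha ha' t2 t1 e1 hp

theorem linked_of_mem_of_mem (H : g.Expanding U) (hc : g.FourCycle a a' b1 b2)
    (hne : b2 ≠ b1) (hb : b2 ∈ U) (h : g.K33Model P Q R b1 p q)
    (hU : P + Q + R + {b1} + {p} + {q} = U) (ha : a ∈ P) (ha' : a' ∈ P ∨ a' ∈ Q) :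
    g.Linked U a a' b1 b2 := by
  rw [← hU] at hb
  simp only [Multiset.mem_add, Multiset.mem_singleton, hne, or_false] at hb
  rcases hb with (hb | rfl) | rfl
  · rcases ha' with ha' | ha'
    · rcases hb with (hb | hb) | hb
      · exact h.linked_of_mem_tree1 H hc hU ha ha' hb
      · exact h.linked_of_mem_tree2 H hc hU ha ha' hb
      · exact h.swap23.linked_of_mem_tree2 H hc (by rw [← hU]; abel) ha ha' hb
    · exact linked_of_theta_of_mem H hc (by rw [← hU]; abel) h.toTheta ha ha' h.center.2.2
        (by simpa only [Multiset.mem_add] using hb)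
  · exact h.linked_of_hub_eq hc hU ha ha'
  · exact h.swap_hubs.linked_of_hub_eq hc (by rw [← hU]; abel) ha ha'

theorem mem_tree_of_black {x : V} (h : g.K33Model P Q R b p q)
    (hx : x ∈ P + Q + R + {b} + {p} + {q}) (hxB : g.Black x) : x ∈ P ∨ x ∈ Q ∨ x ∈ R := by
  simp only [Multiset.mem_add, Multiset.mem_singleton] at hx
  rcases hx with (((hx | rfl) | rfl) | rfl)
  · rwa [or_assoc] at hx
  exacts [absurd hxB h.center.not_black, absurd hxB h.hub_left.not_black,
    absurd hxB h.hub_right.not_black]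

theorem linked (H : g.Expanding U) (hc : g.FourCycle a a' b1 b2) (hne : b2 ≠ b1)
    (ha : a ∈ U) (ha' : a' ∈ U) (hb : b2 ∈ U) (h : g.K33Model P Q R b1 p q)
    (hU : P + Q + R + {b1} + {p} + {q} = U) : g.Linked U a a' b1 b2 := by
  have linked_of_mem : ∀ {P Q R}, g.K33Model P Q R b1 p q →
      P + Q + R + {b1} + {p} + {q} = U → a ∈ P → g.Linked U a a' b1 b2 := by
    intro P Q R h hU ha
    rcases h.mem_tree_of_black (hU ▸ ha') hc.right_black with ha' | ha' | ha'
    · exact h.linked_of_mem_of_mem H hc hne hb hU ha (.inl ha')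
    · exact h.linked_of_mem_of_mem H hc hne hb hU ha (.inr ha')
    · exact h.swap23.linked_of_mem_of_mem H hc hne hb (by rw [← hU]; abel) ha (.inr ha')
  rcases h.mem_tree_of_black (hU ▸ ha) hc.left_black with ha | ha | ha
  · exact linked_of_mem h hU ha
  · exact linked_of_mem h.swap12 (by rw [← hU]; abel) ha
  · exact linked_of_mem h.swap23.swap12 (by rw [← hU]; abel) ha

end K33Model

/-! ### Splitting a model along a fork -/

variable (g) in
/-- Some spanning `K₃,₃`-model of `U` has centre `b`. -/
def HasModelCentredAt (U : Multiset V) (b : V) : Prop :=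
  ∃ P Q R p q, g.K33Model P Q R b p q ∧ P + Q + R + {b} + {p} + {q} = U

/-- Two barycentric trees joined at the white vertex `b`. -/
structure Fork (g : Bigraph V) (b : V) (S T : Multiset V) : Prop where
  left : g.BarycentricTree S
  right : g.BarycentricTree T
  attached_left : g.Attached b S
  attached_right : g.Attached b T

/-- A fork at `b` whose two prongs are each joined by a further hub to two of the three trees of a
theta graph; together they cover `U`. -/
structure ForkTheta (g : Bigraph V) (U : Multiset V) (b : V) (S T P Q R : Multiset V)
    (i u j k : V) : Prop where
  sum_eq : S + {b} + T + (P + Q + R + {i} + {u} + {j} + {k}) = U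
  fork : g.Fork b S T
  theta : g.Theta P Q R j k
  left : g.Hub i S Q R
  right : g.Hub u T P Q

/-- A spanning `K₃,₃`-model of `U` in which the fork at `b` is one of the three trees and each of
its two prongs is attached to a hub. -/
structure ForkModel (g : Bigraph V) (U : Multiset V) (b : V) (S T Q R : Multiset V)
    (i l k : V) : Prop where
  sum_eq : S + {b} + T + (Q + R + {i} + {l} + {k}) = U
  fork : g.Fork b S T
  tree2 : g.BarycentricTree Q
  tree3 : g.BarycentricTree R
  left : g.Hub i S Q R
  right : g.Hub l T Q R
  middle : g.Hub k (S + T) Q R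

theorem Theta.swap13 {P Q R : Multiset V} {p q : V} (h : g.Theta P Q R p q) :
    g.Theta R Q P p q :=
  h.swap12.swap23.swap12

namespace Hub

variable {b : V} {P Q R U1 U2 : Multiset V}

theorem grow2 (h : g.Hub b P Q R) : g.Hub b P (Q + U1 + U2) R := h.swap12.grow1.swap12

theorem grow3 (h : g.Hub b P Q R) : g.Hub b P Q (R + U1 + U2) := h.swap23.grow2.swap23

end Hub

namespace Fork

variable {b : V} {S S' : Multiset V}

theorem symm (h : g.Fork b S S') : g.Fork b S' S :=
  ⟨h.right, h.left, h.attached_right, h.attached_left⟩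

theorem tree (h : g.Fork b S S') : g.BarycentricTree (S + {b} + S') :=
  .join h.left h.right h.attached_left h.attached_right

theorem not_black (h : g.Fork b S S') : ¬ g.Black b := h.attached_left.not_black

theorem split_left (h : g.Fork b S S') {e : V} (he : e ∈ S) (heW : ¬ g.Black e) :
    ∃ S1 X, g.Fork b S1 S' ∧ g.BarycentricTree X ∧ g.Attached e S1 ∧ g.Attached e X ∧
      S = S1 + {e} + X := by
  obtain ⟨S1, X, t1, tX, e1, eX, hS, hb⟩ := h.left.split_attached he heW h.attached_left
  exact ⟨S1, X, ⟨t1, h.right, hb, h.attached_right⟩, tX, e1, eX, hS⟩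

theorem exists_attached {U rest : Multiset V} {a : V} (h : g.Fork b S S')
    (H : g.Expanding U) (hU : S + {b} + S' + rest = U) (ha : a ∈ rest) (haB : g.Black a) :
    ∃ w, (w ∈ S ∨ w ∈ S' ∨ w = b) ∧ g.Attached w rest := by
  obtain ⟨w, hw, hwr⟩ := H.attached_of_tree h.tree (u := b) (by simp) h.not_black hU ha haB
  exact ⟨w, by simp only [Multiset.mem_add, Multiset.mem_singleton] at hw; tauto, hwr⟩

end Fork

namespace ForkTheta

variable {U S S' S1 X P Q R : Multiset V} {b i u j k w : V}

theorem symm (h : g.ForkTheta U b S S' P Q R i u j k) : g.ForkTheta U b S' S R Q P u i j k where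
  sum_eq := by rw [← h.sum_eq]; abel
  fork := h.fork.symm
  theta := h.theta.swap13
  left := h.right.swap23
  right := h.left.swap23

theorem centred_of_attached1 (h : g.ForkTheta U b S S' P Q R i u j k) (hb : g.Attached b P) :
    g.HasModelCentredAt U b :=
  ⟨R + {i} + S, Q + {u} + S', P, j, k,
    ⟨(h.theta.swap13.join1 h.fork.left h.left.2.2 h.left.1).join2
        h.fork.right h.right.2.2 h.right.1,
      h.fork.attached_left.add_left _, h.fork.attached_right.add_left _, hb⟩,
    by rw [← h.sum_eq]; abel⟩

theorem centred_of_attached2 (h : g.ForkTheta U b S S' P Q R i u j k) (hb : g.Attached b Q) :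
    g.HasModelCentredAt U b :=
  ⟨R + {i} + S, P + {u} + S', Q, j, k,
    ⟨(h.theta.swap13.swap23.join1 h.fork.left h.left.2.2 h.left.1).join2 h.fork.right
        h.right.2.1 h.right.1,
      h.fork.attached_left.add_left _, h.fork.attached_right.add_left _, hb⟩,
    by rw [← h.sum_eq]; abel⟩

theorem centred_of_attached (h : g.ForkTheta U b S S' P Q R i u j k)
    (hb : g.Attached b P ∨ g.Attached b Q ∨ g.Attached b R) : g.HasModelCentredAt U b := by
  rcases hb with hb | hb | hb
  exacts [h.centred_of_attached1 hb, h.centred_of_attached2 hb, h.symm.centred_of_attached1 hb]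

theorem shrink_keeping_hub (h : g.ForkTheta U b (S1 + {w} + X) S' P Q R i u j k)
    (hf : g.Fork b S1 S') (tX : g.BarycentricTree X) (wX : g.Attached w X)
    (hi : g.Attached i S1) (hw : g.Attached w P ∨ g.Attached w Q ∨ g.Attached w R) :
    ∃ P' Q' R', g.ForkTheta U b S1 S' P' Q' R' i u j k := by
  have hleft : g.Hub i S1 Q R := ⟨hi, h.left.2⟩
  rcases hw with hw | hw | hw
  · exact ⟨P + {w} + X, Q, R, by rw [← h.sum_eq]; abel, hf, h.theta.join1 tX hw wX, hleft,
      h.right.grow2⟩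
  · exact ⟨P, Q + {w} + X, R, by rw [← h.sum_eq]; abel, hf, h.theta.join2 tX hw wX, hleft.grow2,
      h.right.grow3⟩
  · exact ⟨P, Q, R + {w} + X, by rw [← h.sum_eq]; abel, hf, h.theta.join3 tX hw wX, hleft.grow3,
      h.right⟩

theorem shrink_moving_hub (h : g.ForkTheta U b (S1 + {w} + X) S' P Q R i u j k)
    (hf : g.Fork b S1 S') (tX : g.BarycentricTree X) (w1 : g.Attached w S1)
    (wX : g.Attached w X) (hi : g.Attached i X)
    (hw : g.Attached w P ∨ g.Attached w Q ∨ g.Attached w R) :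
    ∃ P' Q' R', g.ForkTheta U b S1 S' P' Q' R' w u j k := by
  rcases hw with hw | hw | hw
  · exact ⟨Q, P, R + {i} + X, by rw [← h.sum_eq]; abel, hf,
      h.theta.swap12.join3 tX h.left.2.2 hi, ⟨w1, hw, wX.add_left _⟩, h.right.swap23⟩
  · exact ⟨P, Q, R + {i} + X, by rw [← h.sum_eq]; abel, hf,
      h.theta.join3 tX h.left.2.2 hi, ⟨w1, hw, wX.add_left _⟩, h.right⟩
  · exact ⟨P, Q + {i} + X, R, by rw [← h.sum_eq]; abel, hf,
      h.theta.join2 tX h.left.2.1 hi, ⟨w1, wX.add_left _, hw⟩, h.right.grow3⟩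

theorem exists_shrink (h : g.ForkTheta U b S S' P Q R i u j k) (hwS : w ∈ S)
    (hw : g.Attached w P ∨ g.Attached w Q ∨ g.Attached w R) :
    ∃ S1 P' Q' R' i', g.ForkTheta U b S1 S' P' Q' R' i' u j k ∧ S1.card < S.card := by
  have hwW : ¬ g.Black w := by rcases hw with hw | hw | hw <;> exact hw.not_black
  obtain ⟨S1, X, hf, tX, w1, wX, rfl⟩ := h.fork.split_left hwS hwW
  have hlt : S1.card < (S1 + {w} + X).card := by simp; omega
  rcases h.left.attached_split hwW with hi | hi
  · obtain ⟨P', Q', R', h'⟩ := h.shrink_keeping_hub hf tX wX hi hw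
    exact ⟨S1, P', Q', R', i, h', hlt⟩
  · obtain ⟨P', Q', R', h'⟩ := h.shrink_moving_hub hf tX w1 wX hi hw
    exact ⟨S1, P', Q', R', w, h', hlt⟩

theorem centred {U S S' P Q R : Multiset V} {b i u j k : V} (H : g.Expanding U)
    (h : g.ForkTheta U b S S' P Q R i u j k) : g.HasModelCentredAt U b := by
  obtain ⟨z, hz, hzB⟩ := h.theta.tree1.exists_black
  obtain ⟨w, hw, hwr⟩ := h.fork.exists_attached H h.sum_eq (a := z) (by simp [hz]) hzB
  have hw' : g.Attached w P ∨ g.Attached w Q ∨ g.Attached w R := by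
    simpa only [attached_add, or_assoc, not_attached_singleton h.left.not_black,
      not_attached_singleton h.right.not_black, not_attached_singleton h.theta.hub_left.not_black,
      not_attached_singleton h.theta.hub_right.not_black, or_false] using hwr
  rcases hw with hw | hw | rfl
  · obtain ⟨S1, P', Q', R', i', h', _hlt⟩ := h.exists_shrink hw hw'
    exact h'.centred H
  · obtain ⟨S1, P', Q', R', i', h', _hlt⟩ :=
      h.symm.exists_shrink hw (by tauto)
    exact h'.centred H
  · exact h.centred_of_attached hw'
termination_by S.card + S'.card

end ForkTheta

namespace ForkModel

variable {U S S' S1 X Q R : Multiset V} {b i l k w : V}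

theorem symm (h : g.ForkModel U b S S' Q R i l k) : g.ForkModel U b S' S Q R l i k where
  sum_eq := by rw [← h.sum_eq]; abel
  fork := h.fork.symm
  tree2 := h.tree2
  tree3 := h.tree3
  left := h.right
  right := h.left
  middle := by rw [add_comm]; exact h.middle

theorem swap_trees (h : g.ForkModel U b S S' Q R i l k) : g.ForkModel U b S S' R Q i l k where
  sum_eq := by rw [← h.sum_eq]; abel
  fork := h.fork
  tree2 := h.tree3
  tree3 := h.tree2
  left := h.left.swap23
  right := h.right.swap23
  middle := h.middle.swap23

theorem swap_hubs (h : g.ForkModel U b S S' Q R i l k) (hk : g.Attached k S) :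
    g.ForkModel U b S S' Q R k l i where
  __ := h
  sum_eq := by rw [← h.sum_eq]; abel
  left := ⟨hk, h.middle.2⟩
  middle := ⟨h.left.1.add_right _, h.left.2⟩

theorem centred_of_attached_left (h : g.ForkModel U b S S' Q R i l k) (hb : g.Attached b Q)
    (hk : g.Attached k S) : g.HasModelCentredAt U b :=
  have theta : g.Theta R S Q i k :=
    ⟨h.tree3, h.fork.left, h.tree2, ⟨h.left.2.2, h.left.1, h.left.2.1⟩,
      ⟨h.middle.2.2, hk, h.middle.2.1⟩⟩
  ⟨R + {l} + S', S, Q, i, k, ⟨theta.join1 h.fork.right h.right.2.2 h.right.1,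
    h.fork.attached_right.add_left _, h.fork.attached_left, hb⟩, by rw [← h.sum_eq]; abel⟩

theorem centred_of_attached (h : g.ForkModel U b S S' Q R i l k) (hb : g.Attached b Q) :
    g.HasModelCentredAt U b := by
  rcases attached_add.1 h.middle.1 with hk | hk
  exacts [h.centred_of_attached_left hb hk, h.symm.centred_of_attached_left hb hk]

theorem middle_split (h : g.ForkModel U b (S1 + {w} + X) S' Q R i l k) (hw : ¬ g.Black w) :
    g.Attached k (S1 + S') ∨ g.Attached k X := by
  have := h.middle.1
  simp only [attached_add, not_attached_singleton hw, or_false] at this ⊢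
  tauto

theorem shrink_keeping_hub (h : g.ForkModel U b (S1 + {w} + X) S' Q R i l k)
    (hf : g.Fork b S1 S') (tX : g.BarycentricTree X) (w1 : g.Attached w S1)
    (wX : g.Attached w X) (hw : g.Attached w Q) (hi : g.Attached i S1) :
    ∃ Q' R' i' l' k', g.ForkModel U b S1 S' Q' R' i' l' k' := by
  have hleft : g.Hub i S1 Q R := ⟨hi, h.left.2⟩
  rcases h.middle_split hw.not_black with hk | hk
  · have hmiddle : g.Hub k (S1 + S') Q R := ⟨hk, h.middle.2⟩
    exact ⟨Q + {w} + X, R, i, l, k, by rw [← h.sum_eq]; abel, hf, .join h.tree2 tX hw wX, h.tree3,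
      hleft.grow2, h.right.grow2, hmiddle.grow2⟩
  · exact ⟨Q, R + {k} + X, i, l, w, by rw [← h.sum_eq]; abel, hf, h.tree2,
      .join h.tree3 tX h.middle.2.2 hk, hleft.grow3, h.right.grow3,
      w1.add_right _, hw, wX.add_left _⟩

theorem centred_or_shrink (H : g.Expanding U) (h : g.ForkModel U b S S' Q R i l k) (hwS : w ∈ S)
    (hw : g.Attached w Q) : g.HasModelCentredAt U b ∨
      ∃ S1 Q' R' i' l' k', g.ForkModel U b S1 S' Q' R' i' l' k' ∧ S1.card < S.card := by
  obtain ⟨S1, X, hf, tX, w1, wX, rfl⟩ := h.fork.split_left hwS hw.not_black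
  have hlt : S1.card < (S1 + {w} + X).card := by simp; omega
  rcases h.left.attached_split hw.not_black with hi | hi
  · obtain ⟨Q', R', i', l', k', h'⟩ := h.shrink_keeping_hub hf tX w1 wX hw hi
    exact .inr ⟨S1, Q', R', i', l', k', h', hlt⟩
  rcases h.middle_split hw.not_black with hk | hk
  · rcases attached_add.1 hk with hk | hk
    · have hswap := h.swap_hubs ((hk.add_right _).add_right _)
      obtain ⟨Q', R', i', l', k', h'⟩ := hswap.shrink_keeping_hub hf tX w1 wX hw hk
      exact .inr ⟨S1, Q', R', i', l', k', h', hlt⟩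
    · exact .inr ⟨S1, Q, R + {i} + X, w, l, k, ⟨by rw [← h.sum_eq]; abel, hf, h.tree2,
        .join h.tree3 tX h.left.2.2 hi, ⟨w1, hw, wX.add_left _⟩, h.right.grow3,
        Hub.grow3 ⟨hk.add_left _, h.middle.2⟩⟩, hlt⟩
  · have fork : g.ForkTheta U b S1 S' R Q X w l i k :=
      ⟨by rw [← h.sum_eq]; abel, hf,
        ⟨h.tree3, h.tree2, tX, ⟨h.left.2.2, h.left.2.1, hi⟩, ⟨h.middle.2.2, h.middle.2.1, hk⟩⟩,
        ⟨w1, hw, wX⟩, h.right.swap23⟩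
    exact .inl (fork.centred H)

theorem centred {U S S' Q R : Multiset V} {b i l k : V} (H : g.Expanding U)
    (h : g.ForkModel U b S S' Q R i l k) : g.HasModelCentredAt U b := by
  obtain ⟨w, hw, hwQR⟩ :
      ∃ w, (w ∈ S ∨ w ∈ S' ∨ w = b) ∧ (g.Attached w Q ∨ g.Attached w R) := by
    obtain ⟨z, hz, hzB⟩ := h.tree2.exists_black
    obtain ⟨w, hw, hwr⟩ := h.fork.exists_attached H h.sum_eq (a := z) (by simp [hz]) hzB
    exact ⟨w, hw, by simpa only [attached_add, not_attached_singleton h.left.not_black,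
      not_attached_singleton h.right.not_black, not_attached_singleton h.middle.not_black,
      or_false] using hwr⟩
  wlog hwQ : g.Attached w Q generalizing Q R
  · exact this h.swap_trees hwQR.symm (hwQR.resolve_left hwQ)
  rcases hw with hw | hw | rfl
  · rcases h.centred_or_shrink H hw hwQ with hwin | ⟨S1, Q', R', i', l', k', h', _hlt⟩
    exacts [hwin, h'.centred H]
  · rcases h.symm.centred_or_shrink H hw hwQ with hwin | ⟨S1, Q', R', i', l', k', h', _hlt⟩
    exacts [hwin, h'.centred H]
  · exact h.centred_of_attached hwQ
termination_by S.card + S'.card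

end ForkModel

theorem hasModelCentredAt_of_fork {U S S' Q R : Multiset V} {b t1 t2 t3 : V} (H : g.Expanding U)
    (hU : S + {b} + S' + (Q + R + {t1} + {t2} + {t3}) = U) (hf : g.Fork b S S')
    (tQ : g.BarycentricTree Q) (tR : g.BarycentricTree R) (h1 : g.Hub t1 (S + S') Q R)
    (h2 : g.Hub t2 (S + S') Q R) (h3 : g.Hub t3 (S + S') Q R)
    (hS : g.Attached t1 S ∨ g.Attached t2 S ∨ g.Attached t3 S)
    (hS' : g.Attached t1 S' ∨ g.Attached t2 S' ∨ g.Attached t3 S') :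
    g.HasModelCentredAt U b := by
  have centred : ∀ {i l k : V}, S + {b} + S' + (Q + R + {i} + {l} + {k}) = U →
      g.Hub i (S + S') Q R → g.Hub l (S + S') Q R → g.Hub k (S + S') Q R →
      g.Attached i S → g.Attached l S' → g.HasModelCentredAt U b :=
    fun hU hi hl hk hiS hlS' =>
      ForkModel.centred H ⟨hU, hf, tQ, tR, ⟨hiS, hi.2⟩, ⟨hlS', hl.2⟩, hk⟩
  have c12 := centred hU h1 h2 h3
  have c21 := centred (by rw [← hU]; abel) h2 h1 h3
  have c13 := centred (by rw [← hU]; abel) h1 h3 h2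
  have c31 := centred (by rw [← hU]; abel) h3 h1 h2
  have c23 := centred (by rw [← hU]; abel) h2 h3 h1
  have c32 := centred (by rw [← hU]; abel) h3 h2 h1
  have h2SS' := attached_add.1 h2.1
  rcases hS with h1S | h2S | h3S
  · rcases hS' with h1S' | h2S' | h3S'
    exacts [h2SS'.elim (c21 · h1S') (c12 h1S), c12 h1S h2S', c13 h1S h3S']
  · rcases hS' with h1S' | h2S' | h3S'
    exacts [c21 h2S h1S', (attached_add.1 h1.1).elim (c12 · h2S') (c21 h2S), c23 h2S h3S']
  · rcases hS' with h1S' | h2S' | h3S'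
    exacts [c31 h3S h1S', c32 h3S h2S', h2SS'.elim (c23 · h3S') (c32 h3S)]

/-! ### Moving the centre of a model -/

/-- The vertices of an anchor: `some c` is the white vertex `c`, while `none` means that the centre
itself serves as anchor and contributes no vertex. -/
def anchorSet : Option V → Multiset V
  | none => 0
  | some c => {c}

/-- What lies between the vertex `b` and the anchor `f`: nothing, or a barycentric tree leading from
`b` to the white vertex `c` followed by `c`. -/
inductive AnchorTail (g : Bigraph V) (b : V) : Option V → Multiset V → Prop
  | none : AnchorTail g b none 0
  | some {c : V} {T : Multiset V} (hT : g.BarycentricTree T) (hb : g.Attached b T)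
      (hc : g.Attached c T) : AnchorTail g b (some c) (T + {c})

/-- The region `R` together with its anchor `f` consists of a barycentric tree `G` hanging at `b`
and a tail `H` from `b` to `f`. -/
structure RegionSplit (g : Bigraph V) (b : V) (f : Option V) (R G H : Multiset V) : Prop where
  sum_eq : R + anchorSet f = G + {b} + H
  tree : g.BarycentricTree G
  attached : g.Attached b G
  tail : g.AnchorTail b f H

/-- A model covering `U` up to an explored region `R`, which contains `b` and is anchored at `f` to
the first tree of the model: every black vertex of `R` hangs at `b` in some split of `R`. -/
structure CentreShift (g : Bigraph V) (U : Multiset V) (b t1 t2 t3 : V) (R : Multiset V)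
    (f : Option V) (P Q W : Multiset V) : Prop where
  sum_eq : R + anchorSet f + (P + Q + W + {t1} + {t2} + {t3}) = U
  model : g.K33Model P Q W t1 t2 t3
  attached : g.Attached (f.getD b) P
  exists_black : ∃ x ∈ R, g.Black x
  exists_split : ∀ x ∈ R, g.Black x → ∃ G H, g.RegionSplit b f R G H ∧ x ∈ G

theorem Fork.join_right {b e : V} {S S' X : Multiset V} (h : g.Fork b S S')
    (hX : g.BarycentricTree X) (heS : g.Attached e S') (heX : g.Attached e X) :
    g.Fork b S (S' + {e} + X) :=
  ⟨h.left, .join h.right hX heS heX, h.attached_left,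
    (h.attached_right.add_right _).add_right _⟩

theorem K33Model.prune1 {U1 U2 Q R : Multiset V} {e b p q : V}
    (h : g.K33Model (U1 + {e} + U2) Q R b p q) (hU1 : g.BarycentricTree U1) (he : ¬ g.Black e)
    (hn : ¬ (g.Attached b U2 ∨ g.Attached p U2 ∨ g.Attached q U2)) : g.K33Model U1 Q R b p q where
  tree1 := hU1
  tree2 := h.tree2
  tree3 := h.tree3
  hub_left := ⟨(h.hub_left.attached_split he).resolve_right (by tauto), h.hub_left.2⟩
  hub_right := ⟨(h.hub_right.attached_split he).resolve_right (by tauto), h.hub_right.2⟩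
  center := ⟨(h.center.attached_split he).resolve_right (by tauto), h.center.2⟩

namespace AnchorTail

variable {b e x : V} {f : Option V} {H X : Multiset V}

theorem not_black (h : g.AnchorTail b f H) (hx : x ∈ anchorSet f) : ¬ g.Black x := by
  cases h with
  | none => exact absurd hx (Multiset.notMem_zero x)
  | some _ _ hc =>
    obtain rfl := Multiset.mem_singleton.1 hx
    exact hc.not_black

theorem join (h : g.AnchorTail b f H) (hX : g.BarycentricTree X) (heH : g.Attached e H)
    (heX : g.Attached e X) : g.AnchorTail b f (H + {e} + X) := by
  cases h with
  | none => exact absurd heH (by simp [Attached])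
  | @some c T hT hb hc =>
    have heT : g.Attached e T :=
      (attached_add.1 heH).resolve_right (not_attached_singleton hc.not_black)
    have hsum : T + {c} + {e} + X = T + {e} + X + {c} := by abel
    rw [hsum]
    exact .some (.join hT hX heT heX) ((hb.add_right _).add_right _)
      ((hc.add_right _).add_right _)

theorem excess (h : g.AnchorTail b f H) :
    g.excess H = (anchorSet f).card + g.excess (anchorSet f) := by
  cases h with
  | none => simp [anchorSet]
  | some hT hb hc => simp [anchorSet, hT.excess]

end AnchorTail

theorem Fork.regionSplit {b e : V} {R S S' : Multiset V} (h : g.Fork b S S')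
    (hR : S + {b} + S' = R) (he : g.Attached e S') : g.RegionSplit b (some e) R S (S' + {e}) :=
  ⟨by rw [← hR, anchorSet, add_assoc _ S'], h.left, h.attached_left,
    .some h.right h.attached_right he⟩

namespace RegionSplit

variable {b e : V} {f : Option V} {R G H P X : Multiset V}

theorem fork (h : g.RegionSplit b f R G H) (hP : g.BarycentricTree P)
    (hf : g.Attached (f.getD b) P) : g.Fork b (P + H) G := by
  obtain ⟨-, tree, attached, tail⟩ := h
  cases tail with
  | none => exact ⟨by simpa using hP, tree, by simpa using hf, attached⟩
  | @some c T hT hb hc =>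
    have hsum : P + (T + {c}) = P + {c} + T := by abel
    rw [hsum]
    exact ⟨.join hP hT hf hc, tree, hb.add_left _, attached⟩

theorem excess (h : g.RegionSplit b f R G H) : g.excess R = ((anchorSet f).card : ℤ) := by
  have heq := congrArg g.excess h.sum_eq
  have htail := h.tail.excess
  simp only [excess_add, h.tree.excess, excess_white h.attached.not_black] at heq
  linarith

theorem attached_or (h : g.RegionSplit b f R G H) (he : g.Attached e R) :
    g.Attached e G ∨ g.Attached e H := by
  have := he.add_right (anchorSet f)
  simpa only [h.sum_eq, attached_add, not_attached_singleton h.attached.not_black, or_false]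
    using this

theorem join_left (h : g.RegionSplit b f R G H) (hX : g.BarycentricTree X)
    (heG : g.Attached e G) (heX : g.Attached e X) :
    g.RegionSplit b f (R + {e} + X) (G + {e} + X) H where
  sum_eq := by
    rw [add_right_comm _ X, add_right_comm R {e}, h.sum_eq]; abel
  tree := .join h.tree hX heG heX
  attached := (h.attached.add_right _).add_right _
  tail := h.tail

theorem join_tail (h : g.RegionSplit b f R G H) (hX : g.BarycentricTree X)
    (heH : g.Attached e H) (heX : g.Attached e X) :
    g.RegionSplit b f (R + {e} + X) G (H + {e} + X) where
  __ := h
  sum_eq := by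
    rw [add_right_comm _ X, add_right_comm R {e}, h.sum_eq]; abel
  tail := h.tail.join hX heH heX

end RegionSplit

namespace CentreShift

variable {U R P Q W U1 U2 G H : Multiset V} {b t1 t2 t3 e : V} {f : Option V}

theorem swap23 (h : g.CentreShift U b t1 t2 t3 R f P Q W) :
    g.CentreShift U b t1 t2 t3 R f P W Q where
  __ := h
  sum_eq := by rw [← h.sum_eq]; abel
  model := h.model.swap23

theorem swap_hubs (h : g.CentreShift U b t1 t2 t3 R f P Q W) :
    g.CentreShift U b t1 t3 t2 R f P Q W where
  __ := h
  sum_eq := by rw [← h.sum_eq]; abel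
  model := h.model.swap_hubs

theorem swap_center (h : g.CentreShift U b t1 t2 t3 R f P Q W) :
    g.CentreShift U b t2 t1 t3 R f P Q W where
  __ := h
  sum_eq := by rw [← h.sum_eq]; abel
  model := h.model.swap_center

theorem exists_split_attached (h : g.CentreShift U b t1 t2 t3 R f P Q W)
    (he : g.Attached e R) : ∃ G H, g.RegionSplit b f R G H ∧ g.Attached e G := by
  obtain ⟨x, hx, hxe⟩ := he
  obtain ⟨G, H, hs, hxG⟩ := h.exists_split x hx (g.black_left hxe)
  exact ⟨G, H, hs, x, hxG, hxe⟩

theorem exists_split_join (h : g.CentreShift U b t1 t2 t3 R f P Q W) {X : Multiset V}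
    (hX : g.BarycentricTree X) (heR : g.Attached e R) (heX : g.Attached e X) :
    ∀ x ∈ R + {e} + X, g.Black x → ∃ G H, g.RegionSplit b f (R + {e} + X) G H ∧ x ∈ G := by
  intro x hx hxB
  simp only [Multiset.mem_add, Multiset.mem_singleton] at hx
  rcases hx with (hx | rfl) | hx
  · obtain ⟨G, H, hs, hxG⟩ := h.exists_split x hx hxB
    rcases hs.attached_or heR with he | he
    · exact ⟨_, _, hs.join_left hX he heX, by simp [hxG]⟩
    · exact ⟨_, _, hs.join_tail hX he heX, hxG⟩
  · exact absurd hxB heR.not_black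
  · obtain ⟨G, H, hs, he⟩ := h.exists_split_attached heR
    exact ⟨_, _, hs.join_left hX he heX, by simp [hx]⟩

theorem exists_split_reanchor (h : g.CentreShift U b t1 t2 t3 R f P Q W)
    (hU1 : g.BarycentricTree U1) (hf : g.Attached (f.getD b) U1) (heU1 : g.Attached e U1)
    (heR : g.Attached e R) : ∀ x ∈ R + anchorSet f + U1, g.Black x →
      ∃ G H, g.RegionSplit b (some e) (R + anchorSet f + U1) G H ∧ x ∈ G := by
  intro x hx hxB
  simp only [Multiset.mem_add] at hx
  rcases hx with (hx | hx) | hx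
  · obtain ⟨G, H, hs, hxG⟩ := h.exists_split x hx hxB
    exact ⟨G, U1 + H + {e}, (hs.fork hU1 hf).symm.regionSplit (by rw [hs.sum_eq]; abel)
      (heU1.add_right _), hxG⟩
  · obtain ⟨G, H, hs, -⟩ := h.exists_split_attached heR
    exact absurd hxB (hs.tail.not_black hx)
  · obtain ⟨G, H, hs, heG⟩ := h.exists_split_attached heR
    exact ⟨U1 + H, G + {e}, (hs.fork hU1 hf).regionSplit (by rw [hs.sum_eq]; abel) heG,
      by simp [hx]⟩

theorem centred_of_attached_center (h : g.CentreShift U b t1 t2 t3 R f P Q W)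
    (H : g.Expanding U) (ht : g.Attached t1 R) : g.HasModelCentredAt U b := by
  obtain ⟨G, T, hs, htG⟩ := h.exists_split_attached ht
  exact hasModelCentredAt_of_fork H (by rw [← h.sum_eq, hs.sum_eq]; abel)
    (hs.fork h.model.tree1 h.attached) h.model.tree2 h.model.tree3 h.model.center.grow1
    h.model.hub_left.grow1 h.model.hub_right.grow1
    (.inl ((h.model.center.1.add_right _))) (.inl htG)

theorem centred_of_split1 (h : g.CentreShift U b t1 t2 t3 R f (U1 + {e} + U2) Q W)
    (H : g.Expanding U) (heR : g.Attached e R) (hU1 : g.BarycentricTree U1)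
    (hU2 : g.BarycentricTree U2) (e2 : g.Attached e U2) (hf : g.Attached (f.getD b) U1)
    (h1 : g.Attached t1 U1 ∨ g.Attached t2 U1 ∨ g.Attached t3 U1)
    (h2 : g.Attached t1 U2 ∨ g.Attached t2 U2 ∨ g.Attached t3 U2) :
    g.HasModelCentredAt U b := by
  obtain ⟨G, T, hs, heG⟩ := h.exists_split_attached heR
  have hmono : ∀ x ∈ U1 + {e} + U2, g.Black x → x ∈ U1 + T + (G + {e} + U2) := by
    simp only [Multiset.mem_add]; tauto
  refine hasModelCentredAt_of_fork H (by rw [← h.sum_eq, hs.sum_eq]; abel)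
    ((hs.fork hU1 hf).join_right hU2 heG e2) h.model.tree2 h.model.tree3
    (h.model.center.mono1 hmono) (h.model.hub_left.mono1 hmono) (h.model.hub_right.mono1 hmono)
    ?_ ?_
  · simp only [attached_add]; tauto
  · simp only [attached_add]; tauto

theorem centred_of_split2_of_attached (h : g.CentreShift U b t1 t2 t3 R f P (U1 + {e} + U2) W)
    (H : g.Expanding U) (heR : g.Attached e R) (hU1 : g.BarycentricTree U1)
    (hU2 : g.BarycentricTree U2) (e1 : g.Attached e U1) (e2 : g.Attached e U2)
    (ht1 : g.Attached t1 U2) (ht2 : g.Attached t2 U1) (ht3 : g.Attached t3 U1) :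
    g.HasModelCentredAt U b := by
  obtain ⟨G, T, hs, heG⟩ := h.exists_split_attached heR
  have m := h.model
  exact hasModelCentredAt_of_fork (Q := U1) (R := W + {t1} + U2) (t1 := t2) (t2 := t3) (t3 := e) H
    (by rw [← h.sum_eq, hs.sum_eq]; abel) (hs.fork m.tree1 h.attached) hU1
    (.join m.tree3 hU2 m.center.2.2 ht1)
    (Hub.grow1 (Hub.grow3 ⟨m.hub_left.1, ht2, m.hub_left.2.2⟩))
    (Hub.grow1 (Hub.grow3 ⟨m.hub_right.1, ht3, m.hub_right.2.2⟩))
    ⟨heG.add_left _, e1, e2.add_left _⟩ (.inl (m.hub_left.1.add_right _)) (.inr (.inr heG))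

theorem centred_of_split2 (h : g.CentreShift U b t1 t2 t3 R f P (U1 + {e} + U2) W)
    (H : g.Expanding U) (heR : g.Attached e R) (hU1 : g.BarycentricTree U1)
    (hU2 : g.BarycentricTree U2) (e1 : g.Attached e U1) (e2 : g.Attached e U2)
    (h1 : g.Attached t1 U1 ∨ g.Attached t2 U1 ∨ g.Attached t3 U1)
    (h2 : g.Attached t1 U2 ∨ g.Attached t2 U2 ∨ g.Attached t3 U2) :
    g.HasModelCentredAt U b := by
  have centred : ∀ {t1 t2 t3}, g.CentreShift U b t1 t2 t3 R f P (U1 + {e} + U2) W →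
      (g.Attached t1 U2 → g.Attached t2 U1 → g.Attached t3 U1 → g.HasModelCentredAt U b) ∧
      (g.Attached t1 U1 → g.Attached t2 U2 → g.Attached t3 U2 → g.HasModelCentredAt U b) := by
    intro t1 t2 t3 h
    have hcomm : U1 + {e} + U2 = U2 + {e} + U1 := by abel
    exact ⟨h.centred_of_split2_of_attached H heR hU1 hU2 e1 e2,
      (hcomm ▸ h).centred_of_split2_of_attached H heR hU2 hU1 e2 e1⟩
  obtain ⟨c1, c1'⟩ := centred h
  obtain ⟨c2, c2'⟩ := centred h.swap_center
  obtain ⟨c3, c3'⟩ := centred h.swap_hubs.swap_center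
  have s1 := h.model.center.swap12.attached_split heR.not_black
  have s2 := h.model.hub_left.swap12.attached_split heR.not_black
  have s3 := h.model.hub_right.swap12.attached_split heR.not_black
  clear h centred
  grind

theorem prune2 (h : g.CentreShift U b t1 t2 t3 R f P (U1 + {e} + U2) W)
    (heR : g.Attached e R) (hU1 : g.BarycentricTree U1) (hU2 : g.BarycentricTree U2)
    (e2 : g.Attached e U2)
    (hn : ¬ (g.Attached t1 U2 ∨ g.Attached t2 U2 ∨ g.Attached t3 U2)) :
    g.CentreShift U b t1 t2 t3 (R + {e} + U2) f P U1 W where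
  sum_eq := by rw [← h.sum_eq]; abel
  model := (h.model.swap12.prune1 hU1 heR.not_black hn).swap12
  attached := h.attached
  exists_black := h.exists_black.imp fun x hx => ⟨by simp [hx.1], hx.2⟩
  exists_split := h.exists_split_join hU2 heR e2

theorem prune1 (h : g.CentreShift U b t1 t2 t3 R f (U1 + {e} + U2) Q W)
    (heR : g.Attached e R) (hU1 : g.BarycentricTree U1) (hU2 : g.BarycentricTree U2)
    (e2 : g.Attached e U2) (hf : g.Attached (f.getD b) U1)
    (hn : ¬ (g.Attached t1 U2 ∨ g.Attached t2 U2 ∨ g.Attached t3 U2)) :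
    g.CentreShift U b t1 t2 t3 (R + {e} + U2) f U1 Q W where
  sum_eq := by rw [← h.sum_eq]; abel
  model := h.model.prune1 hU1 heR.not_black hn
  attached := hf
  exists_black := h.exists_black.imp fun x hx => ⟨by simp [hx.1], hx.2⟩
  exists_split := h.exists_split_join hU2 heR e2

theorem reanchor (h : g.CentreShift U b t1 t2 t3 R f (U1 + {e} + U2) Q W)
    (heR : g.Attached e R) (hU1 : g.BarycentricTree U1) (hU2 : g.BarycentricTree U2)
    (e1 : g.Attached e U1) (e2 : g.Attached e U2) (hf : g.Attached (f.getD b) U1)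
    (hn : ¬ (g.Attached t1 U1 ∨ g.Attached t2 U1 ∨ g.Attached t3 U1)) :
    g.CentreShift U b t1 t2 t3 (R + anchorSet f + U1) (some e) U2 Q W where
  sum_eq := by rw [← h.sum_eq, anchorSet.eq_2]; abel
  model := by
    have hcomm : U1 + {e} + U2 = U2 + {e} + U1 := by abel
    exact (hcomm ▸ h.model).prune1 hU2 heR.not_black hn
  attached := e2
  exists_black := h.exists_black.imp fun x hx => ⟨by simp [hx.1], hx.2⟩
  exists_split := h.exists_split_reanchor hU1 hf e1 heR

theorem centred_or_shrink1 (h : g.CentreShift U b t1 t2 t3 R f P Q W) (H : g.Expanding U)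
    (heR : g.Attached e R) (heP : e ∈ P) : g.HasModelCentredAt U b ∨
      ∃ R' f' P', g.CentreShift U b t1 t2 t3 R' f' P' Q W ∧ P'.card < P.card := by
  obtain ⟨U1, U2, hU1, hU2, e1, e2, rfl, hf⟩ :=
    h.model.tree1.split_attached heP heR.not_black h.attached
  by_cases h2 : g.Attached t1 U2 ∨ g.Attached t2 U2 ∨ g.Attached t3 U2
  · by_cases h1 : g.Attached t1 U1 ∨ g.Attached t2 U1 ∨ g.Attached t3 U1
    · exact .inl (h.centred_of_split1 H heR hU1 hU2 e2 hf h1 h2)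
    · exact .inr ⟨_, _, _, h.reanchor heR hU1 hU2 e1 e2 hf h1, by simp⟩
  · exact .inr ⟨_, _, _, h.prune1 heR hU1 hU2 e2 hf h2, by simp; omega⟩

theorem centred_or_shrink2 (h : g.CentreShift U b t1 t2 t3 R f P Q W) (H : g.Expanding U)
    (heR : g.Attached e R) (heQ : e ∈ Q) : g.HasModelCentredAt U b ∨
      ∃ R' Q', g.CentreShift U b t1 t2 t3 R' f P Q' W ∧ Q'.card < Q.card := by
  obtain ⟨U1, U2, hU1, hU2, e1, e2, rfl⟩ := h.model.tree2.split heQ heR.not_black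
  by_cases h2 : g.Attached t1 U2 ∨ g.Attached t2 U2 ∨ g.Attached t3 U2
  · by_cases h1 : g.Attached t1 U1 ∨ g.Attached t2 U1 ∨ g.Attached t3 U1
    · exact .inl (h.centred_of_split2 H heR hU1 hU2 e1 e2 h1 h2)
    · have hcomm : U1 + {e} + U2 = U2 + {e} + U1 := by abel
      exact .inr ⟨_, _, (hcomm ▸ h).prune2 heR hU2 hU1 e1 h1, by simp⟩
  · exact .inr ⟨_, _, h.prune2 heR hU1 hU2 e2 h2, by simp; omega⟩

theorem centred {U R P Q W : Multiset V} {b t1 t2 t3 : V} {f : Option V} (H : g.Expanding U)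
    (h : g.CentreShift U b t1 t2 t3 R f P Q W) : g.HasModelCentredAt U b := by
  obtain ⟨x, hx, hxB⟩ := h.exists_black
  obtain ⟨G, T, hs, -⟩ := h.exists_split x hx hxB
  obtain ⟨e, he, heR⟩ := H.attached_of_card_le h.sum_eq hx hxB (by rw [hs.excess]; omega)
    (b := t1) (by simp) h.model.center.not_black
  simp only [Multiset.mem_add, Multiset.mem_singleton] at he
  rcases he with ((((he | he) | he) | rfl) | rfl) | rfl
  · rcases h.centred_or_shrink1 H heR he with hwin | ⟨R', f', P', h', _hlt⟩
    exacts [hwin, h'.centred H]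
  · rcases h.centred_or_shrink2 H heR he with hwin | ⟨R', Q', h', _hlt⟩
    exacts [hwin, h'.centred H]
  · rcases h.swap23.centred_or_shrink2 H heR he with hwin | ⟨R', W', h', _hlt⟩
    exacts [hwin, h'.centred H]
  · exact h.centred_of_attached_center H heR
  · exact h.swap_center.centred_of_attached_center H heR
  · exact h.swap_hubs.swap_center.centred_of_attached_center H heR
termination_by P.card + Q.card + W.card

end CentreShift

theorem Matchable.split {Z : Multiset V} (h : g.Matchable Z) {e : V} (he : e ∈ Z)
    (heW : ¬ g.Black e) : ∃ Z' z, g.Matchable Z' ∧ g.Edge z e ∧ Z = Z' + {z} + {e} := by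
  induction h with
  | zero => exact absurd he (Multiset.notMem_zero e)
  | @add_pair Z x y hZ hxy ih =>
    simp only [Multiset.mem_add, Multiset.mem_singleton] at he
    rcases he with (he | rfl) | rfl
    · obtain ⟨Z', z, hZ', hze, rfl⟩ := ih he
      exact ⟨Z' + {x} + {y}, z, hZ'.add_pair hxy, hze, by abel⟩
    · exact absurd (g.black_left hxy) heW
    · exact ⟨Z, x, hZ, hxy, rfl⟩

namespace K33Model

variable {U P Q R S S' Z : Multiset V} {a a' b1 b2 b p q e : V}

theorem centred_of_prune (h : g.K33Model (S + {b} + S') Q R p q e)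
    (hU : S + {b} + S' + Q + R + {p} + {q} + {e} = U) (H : g.Expanding U) (hf : g.Fork b S S')
    (hn : ¬ (g.Attached p S' ∨ g.Attached q S' ∨ g.Attached e S')) :
    g.HasModelCentredAt U b := by
  obtain ⟨x, hx, hxB⟩ := hf.right.exists_black
  have shift : g.CentreShift U b p q e (S' + {b}) none S Q R :=
    { sum_eq := by rw [← hU, anchorSet]; abel
      model := h.prune1 hf.left hf.not_black hn
      attached := hf.attached_left
      exists_black := ⟨x, by simp [hx], hxB⟩
      exists_split := fun y hy hyB => by
        refine ⟨S', 0, ⟨by simp [anchorSet], hf.right, hf.attached_right, .none⟩, ?_⟩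
        rcases Multiset.mem_add.1 hy with hy | hy
        · exact hy
        · exact absurd (Multiset.mem_singleton.1 hy ▸ hyB) hf.not_black }
  exact shift.centred H

theorem centred_of_mem_tree1 (h : g.K33Model P Q R p q e)
    (hU : P + Q + R + {p} + {q} + {e} = U) (H : g.Expanding U) (hb : b ∈ P)
    (hbW : ¬ g.Black b) : g.HasModelCentredAt U b := by
  obtain ⟨S, S', hS, hS', bS, bS', rfl⟩ := h.tree1.split hb hbW
  have hf : g.Fork b S S' := ⟨hS, hS', bS, bS'⟩
  by_cases h2 : g.Attached p S' ∨ g.Attached q S' ∨ g.Attached e S'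
  · by_cases h1 : g.Attached p S ∨ g.Attached q S ∨ g.Attached e S
    · have hmono : ∀ x ∈ S + {b} + S', g.Black x → x ∈ S + S' := by
        simp only [Multiset.mem_add, Multiset.mem_singleton]
        rintro x ((hx | rfl) | hx) hxB
        exacts [.inl hx, absurd hxB hbW, .inr hx]
      exact hasModelCentredAt_of_fork H (by rw [← hU]; abel) hf h.tree2 h.tree3
        (h.center.mono1 hmono) (h.hub_left.mono1 hmono) (h.hub_right.mono1 hmono) h1 h2
    · have hcomm : S + {b} + S' = S' + {b} + S := by abel
      rw [hcomm] at h hU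
      exact h.centred_of_prune hU H hf.symm h1
  · exact h.centred_of_prune hU H hf h2

theorem centred (h : g.K33Model P Q R p q e) (hU : P + Q + R + {p} + {q} + {e} = U)
    (H : g.Expanding U) (hb : b ∈ U) (hbW : ¬ g.Black b) : g.HasModelCentredAt U b := by
  rw [← hU] at hb
  simp only [Multiset.mem_add, Multiset.mem_singleton] at hb
  rcases hb with ((((hb | hb) | hb) | rfl) | rfl) | rfl
  · exact h.centred_of_mem_tree1 hU H hb hbW
  · exact h.swap12.centred_of_mem_tree1 (by rw [← hU]; abel) H hb hbW
  · exact h.swap23.swap12.centred_of_mem_tree1 (by rw [← hU]; abel) H hb hbW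
  · exact ⟨_, _, _, _, _, h, hU⟩
  · exact ⟨_, _, _, _, _, h.swap_center, by rw [← hU]; abel⟩
  · exact ⟨_, _, _, _, _, h.swap_hubs.swap_center, by rw [← hU]; abel⟩

theorem exists_absorb1 (h : g.K33Model P Q R b p q) (hZ : g.Matchable Z) (he : e ∈ Z)
    (heP : g.Attached e P) : ∃ P' Z', g.K33Model P' Q R b p q ∧ g.Matchable Z' ∧
      P' + Z' = P + Z ∧ Z'.card < Z.card := by
  obtain ⟨Z', z, hZ', hze, rfl⟩ := hZ.split he heP.not_black
  exact ⟨P + {e} + {z}, Z', ⟨h.toTheta.join1 (.single (g.black_left hze)) heP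
    (attached_singleton.2 hze), h.center.grow1⟩, hZ', by abel, by simp⟩

theorem excess_eq (h : g.K33Model P Q R b p q) :
    g.excess (P + Q + R + {b} + {p} + {q}) = 0 := by
  simp [h.tree1.excess, h.tree2.excess, h.tree3.excess, excess_white h.center.not_black,
    excess_white h.hub_left.not_black, excess_white h.hub_right.not_black]

theorem exists_spanning {U P Q R Z : Multiset V} (h : g.K33Model P Q R b p q)
    (hZ : g.Matchable Z) (hU : P + Q + R + {b} + {p} + {q} + Z = U) (H : g.Expanding U) :
    g.HasModelCentredAt U b := by
  by_cases hZ0 : Z = 0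
  · exact ⟨P, Q, R, p, q, h, by simpa [hZ0] using hU⟩
  obtain ⟨y, hy, hyW⟩ : ∃ y ∈ Z, ¬ g.Black y := by
    cases hZ with
    | zero => exact absurd rfl hZ0
    | @add_pair Z x y _ hxy => exact ⟨y, by simp, g.white_right hxy⟩
  obtain ⟨a, ha, haB⟩ := h.tree1.exists_black
  obtain ⟨e, heZ, he⟩ := H.attached_of_card_le (C := 0) (by simpa using hU) (a := a) (by simp [ha])
    haB (by simp [h.excess_eq]) hy hyW
  simp only [attached_add, not_attached_singleton h.center.not_black, or_false,
    not_attached_singleton h.hub_left.not_black, not_attached_singleton h.hub_right.not_black,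
    or_assoc] at he
  have absorb : ∀ {P Q R}, g.K33Model P Q R b p q → P + Q + R + {b} + {p} + {q} + Z = U →
      g.Attached e P → g.HasModelCentredAt U b := by
    intro P Q R h hU heP
    obtain ⟨P', Z', h', hZ', hsum, _hlt⟩ := h.exists_absorb1 hZ heZ heP
    have hU' : P' + Q + R + {b} + {p} + {q} + Z' = U := by
      rw [show P' + Q + R + {b} + {p} + {q} + Z' = P' + Z' + (Q + R + {b} + {p} + {q}) by abel,
        hsum, ← hU]
      abel
    exact h'.exists_spanning hZ' hU' H
  rcases he with he | he | he
  · exact absorb h hU he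
  · exact absorb h.swap12 (by rw [← hU]; abel) he
  · exact absorb h.swap23.swap12 (by rw [← hU]; abel) he
termination_by Z.card

theorem linked_of_matchable (h : g.K33Model P Q R b p q) (hZ : g.Matchable Z)
    (hU : P + Q + R + {b} + {p} + {q} + Z = U) (H : g.Expanding U)
    (hc : g.FourCycle a a' b1 b2) (hne : b2 ≠ b1) (ha : a ∈ U) (ha' : a' ∈ U) (hb1 : b1 ∈ U)
    (hb2 : b2 ∈ U) : g.Linked U a a' b1 b2 := by
  obtain ⟨P', Q', R', p', q', h', hU'⟩ := h.exists_spanning hZ hU H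
  obtain ⟨_, _, _, _, _, hm, hUm⟩ := h'.centred hU' H hb1 (g.white_right hc.edge11)
  exact hm.linked H hc hne ha ha' hb2 hUm

end K33Model

/-! ### Paths and ears -/

theorem PathOn.excess {s t : V} {G : Multiset V} (h : g.PathOn s t G) :
    2 * g.excess G = g.excess {s} + g.excess {t} := by
  induction h with
  | nil => ring
  | @snoc t u G _ htu ih =>
    have hcancel : g.excess {t} + g.excess {u} = 0 := by
      rcases htu with h | h <;>
        simp [excess_black (g.black_left h), excess_white (g.white_right h)]
    rw [excess_add]
    linarith

theorem PathOn.end_mem {s t : V} {G : Multiset V} (h : g.PathOn s t G) : t ∈ G := by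
  cases h <;> simp

theorem PathOn.exists_mem_black {s t : V} {G : Multiset V} (h : g.PathOn s t G) (hst : s ≠ t)
    (ht : ¬ g.Black t) : ∃ x ∈ G, g.Black x := by
  cases h with
  | nil => exact absurd rfl hst
  | @snoc x t G h hxt =>
    exact ⟨x, by simp [h.end_mem], hxt.elim g.black_left fun h => absurd (g.black_left h) ht⟩

theorem PathOn.exists_mem_white {s t : V} {G : Multiset V} (h : g.PathOn s t G) (hst : s ≠ t)
    (ht : g.Black t) : ∃ y ∈ G, ¬ g.Black y := by
  cases h with
  | nil => exact absurd rfl hst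
  | @snoc y t G h hyt =>
    exact ⟨y, by simp [h.end_mem], hyt.elim (fun h => absurd ht (g.white_right h)) g.white_right⟩

theorem PathOn.extend_tree {x t : V} {G : Multiset V} (h : g.PathOn x t G) (hx : g.Black x) :
    (g.Black t → ∃ J, G = {x} + J ∧ ∀ K, g.BarycentricTree K → x ∈ K →
      g.BarycentricTree (K + J) ∧ t ∈ K + J) ∧
    (¬ g.Black t → ∃ J, G = {x} + J + {t} ∧ ∀ K, g.BarycentricTree K → x ∈ K →
      g.BarycentricTree (K + J) ∧ g.Attached t (K + J)) := by
  induction h with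
  | nil => exact ⟨fun _ => ⟨0, by simp, fun K hK hxK => by simpa using ⟨hK, hxK⟩⟩, (absurd hx ·)⟩
  | @snoc t u G _ htu ih =>
    rcases htu with htu | hut
    · refine ⟨fun hu => absurd hu (g.white_right htu), fun _ => ?_⟩
      obtain ⟨J, rfl, hJ⟩ := ih.1 (g.black_left htu)
      exact ⟨J, rfl, fun K hK hxK => ⟨(hJ K hK hxK).1, t, (hJ K hK hxK).2, htu⟩⟩
    · refine ⟨fun hu => ?_, fun hu => absurd (g.black_left hut) hu⟩
      obtain ⟨J, rfl, hJ⟩ := ih.2 (g.white_right hut)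
      refine ⟨J + {t} + {u}, by abel, fun K hK hxK => ⟨?_, by simp⟩⟩
      simpa only [add_assoc] using
        (hJ K hK hxK).1.join (.single hu) (hJ K hK hxK).2 (attached_singleton.2 hut)

variable (g)

/-- `z` ends a path that starts at a black vertex of `H` and continues in `D`, leaving a matchable
rest of `D`. -/
def ReachedThrough (H D : Multiset V) (z : V) : Prop :=
  ∃ x ∈ H, g.Black x ∧ ∃ I Z, D = I + Z ∧ g.Matchable Z ∧ g.PathOn x z ({x} + I)

/-- Some path leads from a black vertex of `H` to a white vertex of `G` with all its inner vertices
in `D`, leaving a matchable rest of `D`. -/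
def HasEar (G H D : Multiset V) : Prop :=
  ∃ x ∈ H, g.Black x ∧ ∃ y ∈ G, ¬ g.Black y ∧
    ∃ I Z, D = I + Z ∧ g.Matchable Z ∧ g.PathOn x y ({x} + I + {y})

variable {g}

theorem ReachedThrough.add_pair {H D : Multiset V} {w x y : V} (h : g.ReachedThrough H D w)
    (hxy : g.Edge x y) : g.ReachedThrough H (D + {x} + {y}) w := by
  obtain ⟨v, hv, hvA, I, Z, rfl, hZ, hp⟩ := h
  exact ⟨v, hv, hvA, I, Z + {x} + {y}, by abel, hZ.add_pair hxy, hp⟩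

theorem ReachedThrough.snoc {H D : Multiset V} {x y z : V} (h : g.ReachedThrough H D z)
    (hzy : g.Edge z y) (hxy : g.Edge x y) : g.ReachedThrough H (D + {x} + {y}) x := by
  obtain ⟨v, hv, hvA, I, Z, rfl, hZ, hp⟩ := h
  exact ⟨v, hv, hvA, I + {y} + {x}, Z, by abel, hZ, by
    simpa only [add_assoc] using (hp.snoc (.inl hzy)).snoc (.inr hxy)⟩

/-- The search for an ear: `D` collects the matching edges reached so far, and expansion either
reaches `G` or another matching edge. -/
theorem Expanding.hasEar_of_reached {U : Multiset V} (HU : g.Expanding U) {G H : Multiset V}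
    {a b : V} (ha : a ∈ H) (hA : g.Black a) (hb : b ∈ G) (hB : ¬ g.Black b)
    (hexc : g.excess H = -1) (D Z : Multiset V) (hZ : g.Matchable Z) (hD : g.excess D = 0)
    (hU : G + H + D + Z = U)
    (hreach : ∀ z ∈ H + D, g.Black z → g.ReachedThrough H D z) : g.HasEar G H (D + Z) := by
  obtain ⟨y, hy, z, hz, hzy⟩ := HU.attached_of_card_le (R := H + D) (C := 0) (rest := G + Z)
    (a := a) (b := b) (by rw [← hU]; abel) (by simp [ha]) hA (by simp [hexc, hD]) (by simp [hb]) hB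
  have hzreach := hreach z hz (g.black_left hzy)
  rcases Multiset.mem_add.1 hy with hyG | hyZ
  · obtain ⟨x, hx, hxA, I, Z', rfl, hZ', hp⟩ := hzreach
    exact ⟨x, hx, hxA, y, hyG, g.white_right hzy, I, Z' + Z, by abel, hZ'.add hZ,
      hp.snoc (.inl hzy)⟩
  · obtain ⟨Z', x, hZ', hxy, rfl⟩ := hZ.split hyZ (g.white_right hzy)
    have hear := HU.hasEar_of_reached ha hA hb hB hexc (D + {x} + {y}) Z' hZ'
      (by simp [hD, excess_black (g.black_left hxy), excess_white (g.white_right hxy)])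
      (by rw [← hU]; abel) fun w hw hwA => by
        obtain hw | rfl | rfl : w ∈ H + D ∨ w = x ∨ w = y := by simpa [or_assoc] using hw
        · exact (hreach w hw hwA).add_pair hxy
        · exact hzreach.snoc hzy hxy
        · exact absurd hwA (g.white_right hxy)
    rwa [show D + {x} + {y} + Z' = D + (Z' + {x} + {y}) by abel] at hear
termination_by Z.card
decreasing_by simp_all

theorem Expanding.hasEar {U : Multiset V} (HU : g.Expanding U) {G H Z : Multiset V} {a b : V}
    (ha : a ∈ H) (hA : g.Black a) (hb : b ∈ G) (hB : ¬ g.Black b) (hexc : g.excess H = -1)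
    (hZ : g.Matchable Z) (hU : G + H + Z = U) : g.HasEar G H Z := by
  have hear := HU.hasEar_of_reached ha hA hb hB hexc 0 Z hZ excess_zero (by rw [← hU]; abel)
    fun z hz hzA => ⟨z, by simpa using hz, hzA, 0, 0, by simp, .zero, by simpa using PathOn.nil⟩
  rwa [zero_add] at hear

theorem Matchable.sum {ι : Type*} {F : ι → Multiset V} (s : Finset ι)
    (h : ∀ i, g.Matchable (F i)) : g.Matchable (∑ i ∈ s, F i) := by
  classical
  induction s using Finset.induction_on with
  | empty => exact .zero
  | insert i s hi ih =>
    rw [Finset.sum_insert hi]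
    exact (h i).add ih

variable (g)

/-- Each black vertex `A i` is joined to each white vertex `T j` by a path whose inner vertices
are `I i j`. -/
structure PathGrid {α β : Type*} (A : α → V) (T : β → V) (I : α → β → Multiset V) : Prop where
  black : ∀ i, g.Black (A i)
  white : ∀ j, ¬ g.Black (T j)
  path : ∀ i j, g.PathOn (A i) (T j) ({A i} + I i j + {T j})

variable {g}

namespace PathGrid

section

variable {α β : Type*} [Fintype β] {A : α → V} {T : β → V} {I : α → β → Multiset V}

theorem tree (h : g.PathGrid A T I) (i : α) :
    g.BarycentricTree ({A i} + ∑ j, I i j) ∧ ∀ j, g.Attached (T j) ({A i} + ∑ j, I i j) := by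
  classical
  suffices hs : ∀ s : Finset β, g.BarycentricTree ({A i} + ∑ j ∈ s, I i j) ∧
      ∀ j ∈ s, g.Attached (T j) ({A i} + ∑ j ∈ s, I i j) by
    simpa using hs Finset.univ
  intro s
  induction s using Finset.induction_on with
  | empty => simpa using BarycentricTree.single (h.black i)
  | insert j s hj ih =>
    obtain ⟨J, hIJ, hJ⟩ := ((h.path i j).extend_tree (h.black i)).2 (h.white j)
    obtain rfl : I i j = J := add_left_cancel (add_right_cancel hIJ)
    obtain ⟨htree, hatt⟩ := hJ _ ih.1 (by simp)
    rw [Finset.sum_insert hj, add_comm (I i j), ← add_assoc]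
    refine ⟨htree, fun k hk => ?_⟩
    rcases Finset.mem_insert.1 hk with rfl | hk
    exacts [hatt, (ih.2 k hk).add_right _]

end

theorem matchable {ι : Type*} [Fintype ι] {A T : ι → V} {I : ι → ι → Multiset V}
    (h : g.PathGrid A T I) : g.Matchable (∑ i, ({A i} + ∑ j, I i j + {T i})) :=
  .sum _ fun i => (h.tree i).1.matchable_add ((h.tree i).2 i)

theorem k33Model {A T : Fin 3 → V} {I : Fin 3 → Fin 3 → Multiset V} (h : g.PathGrid A T I) :
    g.K33Model ({A 0} + ∑ j, I 0 j) ({A 1} + ∑ j, I 1 j) ({A 2} + ∑ j, I 2 j)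
      (T 0) (T 1) (T 2) where
  tree1 := (h.tree 0).1
  tree2 := (h.tree 1).1
  tree3 := (h.tree 2).1
  hub_left := ⟨(h.tree 0).2 1, (h.tree 1).2 1, (h.tree 2).2 1⟩
  hub_right := ⟨(h.tree 0).2 2, (h.tree 1).2 2, (h.tree 2).2 2⟩
  center := ⟨(h.tree 0).2 0, (h.tree 1).2 0, (h.tree 2).2 0⟩

end PathGrid

end Bigraph

/-! ### Expansion in braces -/

/-- A perfect matching of `B`, given by the function that sends each vertex to its partner. -/
structure Mate (B : SimpleGraph V) (μ : V → V) : Prop where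
  adj : ∀ v, B.Adj v (μ v)
  involutive : Function.Involutive μ

theorem IsPMOn.exists_mate {B : SimpleGraph V} {M : Set (Sym2 V)} (h : IsPMOn B Set.univ M) :
    ∃ μ, Mate B μ ∧ ∀ v w, s(v, w) ∈ M → μ v = w := by
  obtain ⟨hadj, -, hunique⟩ := h
  have hex : ∀ v, ∃ w, s(v, w) ∈ M := by
    intro v
    obtain ⟨e, ⟨he, w, rfl⟩, -⟩ := hunique v trivial
    exact ⟨w, he⟩
  choose μ hμ using hex
  have heq : ∀ v w, s(v, w) ∈ M → μ v = w := fun v w hw =>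
    Sym2.congr_right.1 ((hunique v trivial).unique ⟨hμ v, by simp⟩ ⟨hw, by simp⟩)
  exact ⟨μ, ⟨fun v => hadj _ (hμ v), fun v => heq _ _ (Sym2.eq_swap ▸ hμ v)⟩, heq⟩

theorem IsBrace.exists_mate {B : SimpleGraph V} (h : IsBrace B) {x y : V} (hxy : B.Adj x y) :
    ∃ μ, Mate B μ ∧ μ x = y := by
  obtain ⟨M, hM, hF⟩ := h.2.2 {s(x, y)} (Set.singleton_subset_iff.2 hxy)
    (by rintro e rfl f rfl hef; exact absurd rfl hef) (by simp)
  obtain ⟨μ, hm, hμ⟩ := hM.exists_mate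
  exact ⟨μ, hm, hμ _ _ (hF rfl)⟩

theorem IsBrace.exists_mate_pair {B : SimpleGraph V} (h : IsBrace B) {x1 y1 x2 y2 : V}
    (h1 : B.Adj x1 y1) (h2 : B.Adj x2 y2) (hx : x1 ≠ x2) (hy : y1 ≠ y2) (h12 : x1 ≠ y2)
    (h21 : x2 ≠ y1) : ∃ μ, Mate B μ ∧ μ x1 = y1 ∧ μ x2 = y2 := by
  have hdisj : PairwiseDisjointEdges {s(x1, y1), s(x2, y2)} := by
    rintro e (rfl | rfl) f (rfl | rfl) hef x hxe hxf <;> simp only [Sym2.mem_iff] at hxe hxf <;>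
      grind
  have hcard : ({s(x1, y1), s(x2, y2)} : Set (Sym2 V)).ncard ≤ 2 :=
    (Set.ncard_insert_le _ _).trans (by simp)
  obtain ⟨M, hM, hF⟩ := h.2.2 _ (Set.pair_subset_iff.2 ⟨h1, h2⟩) hdisj hcard
  obtain ⟨μ, hm, hμ⟩ := hM.exists_mate
  exact ⟨μ, hm, hμ _ _ (hF (Or.inl rfl)), hμ _ _ (hF (Or.inr rfl))⟩

theorem IsBrace.exists_boundary_adj {B : SimpleGraph V} (h : IsBrace B) (X : Set V) {x y : V}
    (hx : x ∈ X) (hy : y ∉ X) : ∃ u ∈ X, ∃ v, v ∉ X ∧ B.Adj u v := by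
  obtain ⟨w⟩ := h.2.1.2 x trivial y trivial
  obtain ⟨d, -, hd1, hd2⟩ := w.exists_boundary_dart X hx hy
  exact ⟨d.fst, hd1, d.snd, hd2, d.adj⟩

theorem IsBipartitionOf.symm {B : SimpleGraph V} {V1 V2 : Set V} (h : IsBipartitionOf B V1 V2) :
    IsBipartitionOf B V2 V1 :=
  ⟨h.1.symm, Set.union_comm V1 V2 ▸ h.2.1, fun _ _ hxy => (h.2.2 hxy.symm).symm⟩

theorem IsBipartitionOf.notMem_left {B : SimpleGraph V} {V1 V2 : Set V}
    (h : IsBipartitionOf B V1 V2) {x : V} : x ∉ V1 ↔ x ∈ V2 :=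
  ⟨fun hx => (h.2.1 ▸ Set.mem_univ x : x ∈ V1 ∪ V2).resolve_left hx,
    fun hx hx' => Set.disjoint_left.1 h.1 hx' hx⟩

theorem IsBipartitionOf.ne {B : SimpleGraph V} {V1 V2 : Set V} (h : IsBipartitionOf B V1 V2)
    {x y : V} (hx : x ∈ V1) (hy : y ∈ V2) : x ≠ y :=
  h.1.ne_of_mem hx hy

open Classical in
theorem Mate.card_add_card_filter {B : SimpleGraph V} {μ : V → V} (hm : Mate B μ) {S T : Finset V}
    (hN : ∀ x ∈ S, ∀ y, B.Adj x y → y ∈ T) :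
    S.card + (T.filter fun y => μ y ∉ S).card = T.card := by
  have himage : S.image μ = T.filter fun y => μ y ∈ S := by
    ext y
    simp only [Finset.mem_image, Finset.mem_filter]
    constructor
    · rintro ⟨x, hx, rfl⟩
      exact ⟨hN x hx _ (hm.adj x), by rwa [hm.involutive]⟩
    · rintro ⟨-, hy⟩
      exact ⟨μ y, hy, hm.involutive y⟩
  rw [← Finset.card_image_of_injective S hm.involutive.injective, himage,
    Finset.card_filter_add_card_filter_not]

/-- In the brace `B` with colour classes `V1` and `V2`, the set `T ⊆ V2` contains all neighbours
of the set `S ⊆ V1`. -/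
structure Confined (B : SimpleGraph V) (V1 V2 : Set V) (S T : Finset V) : Prop where
  bipartition : IsBipartitionOf B V1 V2
  brace : IsBrace B
  subset_left : ∀ x ∈ S, x ∈ V1
  subset_right : ∀ y ∈ T, y ∈ V2
  neighbor_mem : ∀ x ∈ S, ∀ y, B.Adj x y → y ∈ T

/-- `xy` is an edge from a vertex `y` of `T` to a vertex `x` outside `S`. -/
def Leaves (B : SimpleGraph V) (S T : Finset V) (x y : V) : Prop :=
  y ∈ T ∧ x ∉ S ∧ B.Adj x y

namespace Confined

variable {B : SimpleGraph V} {V1 V2 : Set V} {S T : Finset V} {a b : V}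

theorem mem_left (h : Confined B V1 V2 S T) {x y : V} (hxy : Leaves B S T x y) : x ∈ V1 :=
  (h.bipartition.2.2 hxy.2.2).2 (h.subset_right y hxy.1)

theorem exists_leaves (h : Confined B V1 V2 S T) (ha : a ∈ S) (hb : b ∈ V2) (hbT : b ∉ T) :
    ∃ x y, Leaves B S T x y := by
  obtain ⟨u, hu, v, hv, huv⟩ := h.brace.exists_boundary_adj (S ∪ T : Set V) (x := a) (y := b)
    (Or.inl ha) (by
      rintro (hbS | hbT')
      exacts [h.bipartition.ne (h.subset_left b hbS) hb rfl, hbT hbT'])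
  simp only [Set.mem_union, Finset.mem_coe, not_or] at hu hv
  rcases hu with hu | hu
  · exact absurd (h.neighbor_mem u hu v huv) hv.2
  · exact ⟨v, u, hu, hv.1, huv.symm⟩

open Classical in
theorem card_lt (h : Confined B V1 V2 S T) {x y : V} (hxy : Leaves B S T x y) :
    S.card < T.card := by
  obtain ⟨μ, hm, hμ⟩ := h.brace.exists_mate hxy.2.2.symm
  have hcount := hm.card_add_card_filter h.neighbor_mem
  have hpos : 0 < (T.filter fun y => μ y ∉ S).card :=
    Finset.card_pos.2 ⟨y, Finset.mem_filter.2 ⟨hxy.1, hμ ▸ hxy.2.1⟩⟩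
  omega

open Classical in
theorem card_add_two_le (h : Confined B V1 V2 S T) {x y x' y' : V} (hxy : Leaves B S T x y)
    (hxy' : Leaves B S T x' y') (hx : x ≠ x') (hy : y ≠ y') : S.card + 2 ≤ T.card := by
  obtain ⟨μ, hm, hμ, hμ'⟩ := h.brace.exists_mate_pair hxy.2.2.symm hxy'.2.2.symm hy hx
    (h.bipartition.ne (h.mem_left hxy') (h.subset_right y hxy.1)).symm
    (h.bipartition.ne (h.mem_left hxy) (h.subset_right y' hxy'.1)).symm
  have hcount := hm.card_add_card_filter h.neighbor_mem
  have hpair : {y, y'} ⊆ T.filter fun y => μ y ∉ S := by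
    simp only [Finset.insert_subset_iff, Finset.singleton_subset_iff, Finset.mem_filter, hμ, hμ']
    exact ⟨⟨hxy.1, hxy.2.1⟩, hxy'.1, hxy'.2.1⟩
  have hcard := Finset.card_le_card hpair
  rw [Finset.card_pair hy] at hcard
  omega

theorem exists_leaves_of_mate (h : Confined B V1 V2 S T) {x y : V} (hxy : Leaves B S T x y)
    {μ : V → V} (hm : Mate B μ) : ∃ z, Leaves B S T (μ z) z := by
  classical
  have hlt := h.card_lt hxy
  have hcount := hm.card_add_card_filter h.neighbor_mem
  obtain ⟨z, hz⟩ := Finset.card_pos.1 (by omega : 0 < (T.filter fun y => μ y ∉ S).card)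
  obtain ⟨hzT, hzS⟩ := Finset.mem_filter.1 hz
  exact ⟨z, hzT, hzS, (hm.adj z).symm⟩

/-- Otherwise `x` is a cut vertex unless it has a neighbour outside `T`, and a perfect matching
through such an edge at `x` contains no edge leaving `T`. -/
theorem exists_leaves_ne_left (h : Confined B V1 V2 S T) (ha : a ∈ S) (hb : b ∈ V2) (hbT : b ∉ T)
    {x y : V} (hxy : Leaves B S T x y) : ∃ x' y', Leaves B S T x' y' ∧ x ≠ x' := by
  by_contra! hall
  have hbX : b ∉ insert x (S ∪ T : Set V) := by
    rintro (rfl | hbS | hbT')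
    exacts [h.bipartition.ne (h.mem_left hxy) hb rfl,
      h.bipartition.ne (h.subset_left b hbS) hb rfl, hbT hbT']
  obtain ⟨u, hu, v, hv, huv⟩ :=
    h.brace.exists_boundary_adj (insert x (S ∪ T : Set V)) (x := a) (Or.inr (Or.inl ha)) hbX
  simp only [Set.mem_insert_iff, Set.mem_union, Finset.mem_coe, not_or] at hu hv
  rcases hu with rfl | hu | hu
  · obtain ⟨μ, hm, hμ⟩ := h.brace.exists_mate huv
    obtain ⟨z, hz⟩ := h.exists_leaves_of_mate hxy hm
    have hzv : v = z := by rw [← hμ, hall _ _ hz, hm.involutive]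
    exact hv.2.2 (hzv ▸ hz.1)
  · exact hv.2.2 (h.neighbor_mem u hu v huv)
  · exact hv.1 (hall v u ⟨hu, hv.2.1, huv.symm⟩).symm

theorem exists_leaves_ne_right (h : Confined B V1 V2 S T) (ha : a ∈ S) (hb : b ∈ V2)
    (hbT : b ∉ T) {x y : V} (hxy : Leaves B S T x y) : ∃ x' y', Leaves B S T x' y' ∧ y ≠ y' := by
  by_contra! hall
  have hbX : b ∉ (S ∪ (T \ {y}) : Set V) := by
    rintro (hbS | hbT')
    exacts [h.bipartition.ne (h.subset_left b hbS) hb rfl, hbT hbT'.1]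
  obtain ⟨u, hu, v, hv, huv⟩ :=
    h.brace.exists_boundary_adj (S ∪ (T \ {y}) : Set V) (x := a) (Or.inl ha) hbX
  simp only [Set.mem_union, Set.mem_sdiff, Finset.mem_coe, Set.mem_singleton_iff, not_or,
    not_and_not_right] at hu hv
  rcases hu with hu | hu
  · have hvy : v = y := hv.2 (h.neighbor_mem u hu v huv)
    obtain ⟨μ, hm, hμ⟩ := h.brace.exists_mate huv.symm
    obtain ⟨z, hz⟩ := h.exists_leaves_of_mate hxy hm
    have hzv : z = v := by rw [hvy, hall _ _ hz]
    exact hz.2.1 (by rwa [hzv, hμ])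
  · exact hu.2 (hall v u ⟨hu.1, hv.1, huv.symm⟩).symm

theorem card_left_add_two_le (h : Confined B V1 V2 S T) (ha : a ∈ S) (hb : b ∈ V2) (hbT : b ∉ T) :
    S.card + 2 ≤ T.card := by
  obtain ⟨x, y, hxy⟩ := h.exists_leaves ha hb hbT
  obtain ⟨x1, y1, h1, hx⟩ := h.exists_leaves_ne_left ha hb hbT hxy
  obtain ⟨x2, y2, h2, hy⟩ := h.exists_leaves_ne_right ha hb hbT hxy
  by_cases hy1 : y = y1
  · by_cases hx2 : x = x2
    · exact h.card_add_two_le h1 h2 (hx2 ▸ hx.symm) (hy1 ▸ hy)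
    · exact h.card_add_two_le hxy h2 hx2 hy
  · exact h.card_add_two_le hxy h1 hx hy1

end Confined

/-- The graph `B` with the class `V1` coloured black. -/
def IsBipartitionOf.bigraph {B : SimpleGraph V} {V1 V2 : Set V} (hb : IsBipartitionOf B V1 V2) :
    Bigraph V where
  Black x := x ∈ V1
  Edge x y := x ∈ V1 ∧ B.Adj x y
  black_left h := h.1
  white_right h := hb.notMem_left.2 ((hb.2.2 h.2).1 h.1)

theorem IsBipartitionOf.bigraph_adj {B : SimpleGraph V} {V1 V2 : Set V}
    (hb : IsBipartitionOf B V1 V2) {x y : V} : hb.bigraph.Adj x y ↔ B.Adj x y := by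
  refine ⟨?_, fun h => ?_⟩
  · rintro (h | h)
    exacts [h.2, h.2.symm]
  · by_cases hx : x ∈ V1
    · exact Or.inl ⟨hx, h⟩
    · exact Or.inr ⟨(hb.2.2 h.symm).2 (hb.notMem_left.1 hx), h.symm⟩

open Classical in
theorem Bigraph.excess_eq_card_sub_card (g : Bigraph V) {R : Multiset V} (hR : R.Nodup) :
    g.excess R = ((R.toFinset.filter g.Black).card : ℤ) -
      (R.toFinset.filter fun x => ¬ g.Black x).card := by
  have hsum : g.excess R = ∑ x ∈ R.toFinset, if g.Black x then (1 : ℤ) else -1 := by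
    rw [excess, Finset.sum, Multiset.toFinset_val, hR.dedup]
  rw [hsum, Finset.sum_ite, Finset.sum_const, Finset.sum_const]
  simp [sub_eq_add_neg]

theorem nodup_of_add_eq_univ [Fintype V] {R C : Multiset V} (h : R + C = Finset.univ.val) :
    R.Nodup ∧ ∀ x, x ∈ R ↔ x ∉ C := by
  have hnd : (R + C).Nodup := h ▸ Finset.univ.nodup
  rw [Multiset.nodup_add] at hnd
  refine ⟨hnd.1, fun x => ⟨Multiset.disjoint_left.1 hnd.2.2, fun hx => ?_⟩⟩
  have hxU : x ∈ R + C := h ▸ Finset.mem_univ x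
  exact (Multiset.mem_add.1 hxU).resolve_right hx

section Expanding

variable [Fintype V] {B : SimpleGraph V} {V1 V2 : Set V}

theorem IsBipartitionOf.attached_of_card_le (hb : IsBipartitionOf B V1 V2) (hbrace : IsBrace B)
    {R C rest : Multiset V} {a b : V} (hU : R + C + rest = Finset.univ.val) (ha : a ∈ R)
    (hA : a ∈ V1) (hcard : (Multiset.card C : ℤ) ≤ hb.bigraph.excess R + 1) (hbr : b ∈ rest)
    (hB : b ∉ V1) : ∃ e ∈ rest, hb.bigraph.Attached e R := by
  classical
  by_contra! hnone
  obtain ⟨hnd, hmem⟩ := nodup_of_add_eq_univ hU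
  let S : Finset V := R.toFinset.filter (· ∈ V1)
  let T : Finset V := R.toFinset.filter (· ∉ V1) ∪ C.toFinset.filter (· ∉ V1)
  have hT : ∀ {y}, y ∈ T ↔ y ∉ rest ∧ y ∉ V1 := by simp [T, ← hmem]; tauto
  have hconf : Confined B V1 V2 S T :=
    { bipartition := hb
      brace := hbrace
      subset_left := fun x hx => (Finset.mem_filter.1 hx).2
      subset_right := fun y hy => hb.notMem_left.1 (hT.1 hy).2
      neighbor_mem := fun x hx y hxy => by
        obtain ⟨hxR, hx1⟩ := Finset.mem_filter.1 hx
        exact hT.2 ⟨fun hy => hnone y hy ⟨x, Multiset.mem_toFinset.1 hxR, hx1, hxy⟩,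
          hb.notMem_left.2 ((hb.2.2 hxy).1 hx1)⟩ }
  have hlarge := hconf.card_left_add_two_le (a := a) (b := b)
    (Finset.mem_filter.2 ⟨Multiset.mem_toFinset.2 ha, hA⟩) (hb.notMem_left.1 hB)
    fun h => (hT.1 h).1 hbr
  have hexcess : hb.bigraph.excess R = (S.card : ℤ) - (R.toFinset.filter (· ∉ V1)).card :=
    hb.bigraph.excess_eq_card_sub_card (Multiset.nodup_add.1 hnd).1
  have hunion : T.card ≤ (R.toFinset.filter (· ∉ V1)).card + Multiset.card C :=
    (Finset.card_union_le _ _).trans <| Nat.add_le_add_left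
      ((Finset.card_filter_le _ _).trans (Multiset.toFinset_card_le C)) _
  omega

theorem IsBipartitionOf.attached_of_tree (hb : IsBipartitionOf B V1 V2) (hbrace : IsBrace B)
    {X rest : Multiset V} {u a : V} (hX : hb.bigraph.BarycentricTree X) (hu : u ∈ X)
    (hu1 : u ∉ V1) (hU : X + rest = Finset.univ.val) (ha : a ∈ rest) (hA : a ∈ V1) :
    ∃ w ∈ X, hb.bigraph.Attached w rest := by
  classical
  by_contra! hnone
  obtain ⟨hnd, hmem⟩ := nodup_of_add_eq_univ hU
  let S : Finset V := X.toFinset.filter (· ∉ V1)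
  let T : Finset V := X.toFinset.filter (· ∈ V1)
  have hconf : Confined B V2 V1 S T :=
    { bipartition := hb.symm
      brace := hbrace
      subset_left := fun x hx => hb.notMem_left.1 (Finset.mem_filter.1 hx).2
      subset_right := fun y hy => (Finset.mem_filter.1 hy).2
      neighbor_mem := fun x hx y hxy => by
        obtain ⟨hxX, hx1⟩ := Finset.mem_filter.1 hx
        have hy : y ∈ V1 := (hb.2.2 hxy.symm).2 (hb.notMem_left.1 hx1)
        refine Finset.mem_filter.2 ⟨Multiset.mem_toFinset.2 ((hmem y).2 fun hyr => ?_), hy⟩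
        exact hnone x (Multiset.mem_toFinset.1 hxX) ⟨y, hyr, hy, hxy.symm⟩ }
  have hlarge := hconf.card_left_add_two_le (a := u) (b := a)
    (Finset.mem_filter.2 ⟨Multiset.mem_toFinset.2 hu, hu1⟩) hA
    fun h => (hmem a).1 (Multiset.mem_toFinset.1 (Finset.mem_filter.1 h).1) ha
  have hexcess : hb.bigraph.excess X = (T.card : ℤ) - S.card :=
    hb.bigraph.excess_eq_card_sub_card hnd
  rw [hX.excess] at hexcess
  omega

theorem IsBipartitionOf.expanding (hb : IsBipartitionOf B V1 V2) (hbrace : IsBrace B) :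
    hb.bigraph.Expanding Finset.univ.val where
  attached_of_card_le := hb.attached_of_card_le hbrace
  attached_of_tree := hb.attached_of_tree hbrace

end Expanding

/-! ### Bisubdivisions of complete bipartite graphs -/

section InnerVerts

variable {B : SimpleGraph V} {V1 V2 : Set V} {x y : V}

/-- The vertices of a walk other than its two ends. -/
def innerVerts (p : B.Walk x y) : Multiset V := p.support.tail.dropLast

theorem coe_support_eq (p : B.Walk x y) (hxy : x ≠ y) :
    (p.support : Multiset V) = {x} + innerVerts p + {y} := by
  cases p with
  | nil => exact absurd rfl hxy
  | cons h q =>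
    rw [innerVerts, Walk.support_cons, List.tail_cons, add_assoc, ← Multiset.coe_singleton y,
      Multiset.coe_add, Walk.dropLast_support_concat, Multiset.singleton_add, Multiset.cons_coe]

theorem mem_support_iff_innerVerts (p : B.Walk x y) (hxy : x ≠ y) {v : V} :
    v ∈ p.support ↔ (v = x ∨ v = y) ∨ v ∈ innerVerts p := by
  rw [← Multiset.mem_coe, coe_support_eq p hxy]
  simp [or_assoc, or_comm (a := v = y)]

theorem isPath_iff_innerVerts (p : B.Walk x y) (hxy : x ≠ y) :
    p.IsPath ↔ x ∉ innerVerts p ∧ y ∉ innerVerts p ∧ (innerVerts p).Nodup := by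
  rw [Walk.isPath_def, ← Multiset.coe_nodup, coe_support_eq p hxy, add_assoc,
    add_comm (innerVerts p)]
  simp [hxy.symm, and_left_comm]

theorem innerVerts_reverse (p : B.Walk x y) : innerVerts p.reverse = innerVerts p := by
  simp only [innerVerts, Walk.support_reverse, List.tail_reverse, List.dropLast_reverse,
    List.tail_dropLast, Multiset.coe_reverse]

theorem mem_edges_of_innerVerts_eq_zero (p : B.Walk x y) (hxy : x ≠ y) (hp : innerVerts p = 0) :
    s(x, y) ∈ p.edges := by
  have hlen : p.length = 1 := by
    simpa [hp] using congrArg Multiset.card (coe_support_eq p hxy)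
  cases p with
  | nil => exact absurd rfl hxy
  | cons h q =>
    cases q with
    | nil => simp
    | cons h' q => simp at hlen

theorem IsBipartitionOf.odd_length_iff (hb : IsBipartitionOf B V1 V2) (p : B.Walk x y) :
    Odd p.length ↔ ¬ (x ∈ V1 ↔ y ∈ V1) := by
  classical
  let c : B.Coloring Bool := Coloring.mk (fun v => decide (v ∈ V1)) fun {u v} huv => by
    simp [hb.2.2 huv, ← hb.notMem_left]
  have hodd : Odd p.length ↔ (¬ decide (x ∈ V1) = true ↔ decide (y ∈ V1) = true) :=
    c.odd_length_iff_not_congr p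
  rwa [decide_eq_true_eq, decide_eq_true_eq, ← not_iff] at hodd

theorem IsBipartitionOf.pathOn_support (hb : IsBipartitionOf B V1 V2) (p : B.Walk x y) :
    hb.bigraph.PathOn x y p.support := by
  induction p with
  | nil => exact .nil
  | cons h p ih =>
    rw [Walk.support_cons, ← Multiset.cons_coe, ← Multiset.singleton_add]
    exact ih.cons (hb.bigraph_adj.2 h)

theorem IsBipartitionOf.exists_walk (hb : IsBipartitionOf B V1 V2) {G : Multiset V}
    (h : hb.bigraph.PathOn x y G) : ∃ p : B.Walk x y, (p.support : Multiset V) = G := by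
  induction h with
  | nil => exact ⟨.nil, rfl⟩
  | snoc _ htu ih =>
    obtain ⟨p, rfl⟩ := ih
    exact ⟨p.concat (hb.bigraph_adj.1 htu), by
      rw [Walk.support_concat, ← Multiset.coe_add, Multiset.coe_singleton]⟩

theorem IsBipartitionOf.pathGrid (hb : IsBipartitionOf B V1 V2) {α β : Type*} {A : α → V}
    {T : β → V} (hA : ∀ i, A i ∈ V1) (hT : ∀ j, T j ∉ V1) (p : ∀ i j, B.Walk (A i) (T j)) :
    hb.bigraph.PathGrid A T fun i j => innerVerts (p i j) where
  black := hA
  white := hT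
  path i j := by
    rw [← coe_support_eq _ (ne_of_mem_of_not_mem (hA i) (hT j))]
    exact hb.pathOn_support (p i j)

end InnerVerts

theorem nodup_sum_iff {κ : Type*} [Fintype κ] {F : κ → Multiset V} :
    (∑ k, F k).Nodup ↔ (∀ k, (F k).Nodup) ∧ ∀ k k', k ≠ k' → Disjoint (F k) (F k') := by
  have hbind : ∑ k, F k = Finset.univ.val.bind F := rfl
  have hsymm : Std.Symm (Function.onFun Disjoint F) := ⟨fun _ _ h => h.symm⟩
  rw [hbind, Multiset.nodup_bind]
  exact and_congr (by simp)
    ⟨fun h k k' hk => h.forall (Finset.mem_univ k) (Finset.mem_univ k') hk,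
      fun h => Finset.univ.nodup.pairwise fun k _ k' _ hk => h k k' hk⟩

section Grid

variable {α β : Type*} {B : SimpleGraph V} {A : α → V} {T : β → V} {I : α → β → Multiset V}

/-- The vertices of a subdivision of a complete bipartite graph with branch vertices `A i` and
`T j` and inner vertices `I i j` on its links. -/
def gridVerts [Fintype α] [Fintype β] (A : α → V) (T : β → V) (I : α → β → Multiset V) :
    Multiset V :=
  ∑ i, {A i} + ∑ j, {T j} + ∑ i, ∑ j, I i j

/-- The branch vertices `A i` and `T j` are distinct and do not lie on the sets `I i j` of inner
vertices, which are pairwise disjoint. -/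
structure DisjointGrid (A : α → V) (T : β → V) (I : α → β → Multiset V) : Prop where
  injective : Function.Injective (Sum.elim A T)
  branch_notMem : ∀ w i j, Sum.elim A T w ∉ I i j
  nodup : ∀ i j, (I i j).Nodup
  disjoint : ∀ {i j i' j'}, (i, j) ≠ (i', j') → Disjoint (I i j) (I i' j')

theorem mem_gridVerts [Fintype α] [Fintype β] {v : V} :
    v ∈ gridVerts A T I ↔ (∃ w, Sum.elim A T w = v) ∨ ∃ i j, v ∈ I i j := by
  simp [gridVerts, Multiset.mem_sum, eq_comm (a := v)]

theorem nodup_gridVerts [Fintype α] [Fintype β] :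
    (gridVerts A T I).Nodup ↔ DisjointGrid A T I := by
  let F : (α ⊕ β) ⊕ (α × β) → Multiset V := Sum.elim (fun w => {Sum.elim A T w}) fun q => I q.1 q.2
  have hsum : gridVerts A T I = ∑ k, F k := by
    simp [F, gridVerts, Fintype.sum_sum_type, Fintype.sum_prod_type]
  rw [hsum, nodup_sum_iff]
  constructor
  · rintro ⟨hnd, hdisj⟩
    exact
      { injective := fun w w' h => by
          by_contra hne
          simpa [F, h] using hdisj (.inl w) (.inl w') (by simpa using hne)
        branch_notMem := fun w i j => by simpa [F] using hdisj (.inl w) (.inr (i, j)) (by simp)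
        nodup := fun i j => hnd (.inr (i, j))
        disjoint := fun hne => hdisj (.inr (_, _)) (.inr (_, _)) (by simpa using hne) }
  · intro h
    refine ⟨?_, ?_⟩
    · rintro (w | ⟨i, j⟩)
      exacts [Multiset.nodup_singleton _, h.nodup i j]
    · rintro (w | ⟨i, j⟩) (w' | ⟨i', j'⟩) hne
      · simpa [F, h.injective.eq_iff, eq_comm] using hne
      · simpa [F] using h.branch_notMem w i' j'
      · simpa [F] using h.branch_notMem w' i j
      · exact h.disjoint (by simpa using hne)

theorem DisjointGrid.ne (h : DisjointGrid A T I) (i : α) (j : β) : A i ≠ T j :=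
  fun hij => Sum.inl_ne_inr (h.injective hij)

/-- The links of a subdivision of a complete bipartite graph, read in both directions. -/
def gridLink (p : ∀ i j, B.Walk (A i) (T j)) : ∀ ⦃x y : α ⊕ β⦄,
    (completeBipartiteGraph α β).Adj x y → B.Walk (Sum.elim A T x) (Sum.elim A T y)
  | .inl i, .inr j, _ => p i j
  | .inr j, .inl i, _ => (p i j).reverse
  | .inl _, .inl _, h => absurd h (by simp)
  | .inr _, .inr _, h => absurd h (by simp)

section

variable {p : ∀ i j, B.Walk (A i) (T j)}

theorem mem_gridLink_support (hp : DisjointGrid A T fun i j => innerVerts (p i j))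
    ⦃x y : α ⊕ β⦄ (h : (completeBipartiteGraph α β).Adj x y) :
    ∃ i j, s(x, y) = s(.inl i, .inr j) ∧ ∀ v, v ∈ (gridLink p h).support ↔
      (v = Sum.elim A T x ∨ v = Sum.elim A T y) ∨ v ∈ innerVerts (p i j) := by
  rcases x with i | j <;> rcases y with i' | j'
  · simp at h
  · exact ⟨i, j', rfl, fun v => mem_support_iff_innerVerts _ (hp.ne i j')⟩
  · refine ⟨i', j, Sym2.eq_swap, fun v => ?_⟩
    rw [← innerVerts_reverse]
    exact mem_support_iff_innerVerts _ (hp.ne i' j).symm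
  · simp at h

theorem gridLink_meet (hp : DisjointGrid A T fun i j => innerVerts (p i j)) ⦃x y x' y' : α ⊕ β⦄
    (h : (completeBipartiteGraph α β).Adj x y) (h' : (completeBipartiteGraph α β).Adj x' y')
    (hne : s(x, y) ≠ s(x', y')) (v : V) (hv : v ∈ (gridLink p h).support)
    (hv' : v ∈ (gridLink p h').support) : v = Sum.elim A T x ∨ v = Sum.elim A T y := by
  obtain ⟨i, j, hxy, hsupp⟩ := mem_gridLink_support hp h
  obtain ⟨i', j', hxy', hsupp'⟩ := mem_gridLink_support hp h'
  refine ((hsupp v).1 hv).resolve_right fun hI => ?_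
  rcases (hsupp' v).1 hv' with (rfl | rfl) | hI'
  · exact hp.branch_notMem _ i j hI
  · exact hp.branch_notMem _ i j hI
  · refine Multiset.disjoint_left.1 (hp.disjoint ?_) hI hI'
    rintro ⟨⟩
    exact hne (hxy.trans hxy'.symm)

/-- The bisubdivision of a complete bipartite graph with given links. -/
def Bisubdivision.ofGrid (hp : DisjointGrid A T fun i j => innerVerts (p i j))
    (hodd : ∀ i j, Odd (p i j).length) : Bisubdivision (completeBipartiteGraph α β) B where
  bv := Sum.elim A T
  bv_inj := hp.injective
  link := gridLink p
  link_isPath x y h := by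
    have hpath : ∀ i j, (p i j).IsPath := fun i j => (isPath_iff_innerVerts _ (hp.ne i j)).2
      ⟨hp.branch_notMem (.inl i) i j, hp.branch_notMem (.inr j) i j, hp.nodup i j⟩
    rcases x with i | j <;> rcases y with i' | j'
    · simp at h
    · exact hpath i j'
    · exact (hpath i' j).reverse
    · simp at h
  link_odd x y h := by
    rcases x with i | j <;> rcases y with i' | j'
    · simp at h
    · exact hodd i j'
    · exact (Walk.length_reverse (p i' j)).symm ▸ hodd i' j
    · simp at h
  link_symm x y h := by
    rcases x with i | j <;> rcases y with i' | j'
    · simp at h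
    · rfl
    · exact (Walk.reverse_reverse _).symm
    · simp at h
  link_branch x y h z hz := by
    obtain ⟨i, j, -, hsupp⟩ := mem_gridLink_support hp h
    exact (((hsupp _).1 hz).resolve_right (hp.branch_notMem z i j)).imp (hp.injective ·)
      (hp.injective ·)
  link_meet x y x' y' h h' hne v hv hv' :=
    ⟨gridLink_meet hp h h' hne v hv hv', gridLink_meet hp h' h hne.symm v hv' hv⟩

end

/-- The link of `L` from the `i`-th left to the `j`-th right branch vertex. -/
def Bisubdivision.walk (L : Bisubdivision (completeBipartiteGraph α β) B) (i : α) (j : β) :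
    B.Walk (L.bv (.inl i)) (L.bv (.inr j)) :=
  L.link (x := .inl i) (y := .inr j) (by simp)

theorem Bisubdivision.mem_walk_support (L : Bisubdivision (completeBipartiteGraph α β) B) {i : α}
    {j : β} {v : V} : v ∈ (L.walk i j).support ↔
      (v = L.bv (.inl i) ∨ v = L.bv (.inr j)) ∨ v ∈ innerVerts (L.walk i j) :=
  mem_support_iff_innerVerts _ (L.bv_inj.ne Sum.inl_ne_inr)

theorem Bisubdivision.disjointGrid (L : Bisubdivision (completeBipartiteGraph α β) B) :
    DisjointGrid (L.bv ∘ .inl) (L.bv ∘ .inr) fun i j => innerVerts (L.walk i j) := by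
  have hpath := fun i j => (isPath_iff_innerVerts (L.walk i j) (L.bv_inj.ne Sum.inl_ne_inr)).1
    (L.link_isPath _)
  refine
    { injective := by simpa only [Sum.elim_comp_inl_inr] using L.bv_inj
      branch_notMem := ?_
      nodup := fun i j => (hpath i j).2.2
      disjoint := ?_ }
  · intro w i j hw
    rw [Sum.elim_comp_inl_inr] at hw
    rcases L.link_branch _ w (L.mem_walk_support.2 (.inr hw)) with rfl | rfl
    exacts [(hpath i j).1 hw, (hpath i j).2.1 hw]
  · intro i j i' j' hne
    refine Multiset.disjoint_left.2 fun {v} hv hv' => ?_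
    rcases (L.link_meet _ _ (by simpa using hne) v (L.mem_walk_support.2 (.inr hv))
      (L.mem_walk_support.2 (.inr hv'))).1 with rfl | rfl
    exacts [(hpath i j).1 hv, (hpath i j).2.1 hv]

theorem Bisubdivision.mem_verts_iff_exists_walk
    (L : Bisubdivision (completeBipartiteGraph α β) B) {v : V} :
    v ∈ L.verts ↔ ∃ i j, v ∈ (L.walk i j).support := by
  constructor
  · rintro ⟨x, y, h, hv⟩
    rcases x with i | j <;> rcases y with i' | j'
    · simp at h
    · exact ⟨i, j', hv⟩
    · rw [L.link_symm h.symm, Walk.support_reverse, List.mem_reverse] at hv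
      exact ⟨i', j, hv⟩
    · simp at h
  · rintro ⟨i, j, hv⟩
    exact ⟨_, _, _, hv⟩

/-- The vertices of `L`, each listed once. -/
def Bisubdivision.vertMultiset [Fintype α] [Fintype β]
    (L : Bisubdivision (completeBipartiteGraph α β) B) : Multiset V :=
  gridVerts (L.bv ∘ .inl) (L.bv ∘ .inr) fun i j => innerVerts (L.walk i j)

theorem Bisubdivision.nodup_vertMultiset [Fintype α] [Fintype β]
    (L : Bisubdivision (completeBipartiteGraph α β) B) : L.vertMultiset.Nodup :=
  nodup_gridVerts.2 L.disjointGrid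

theorem Bisubdivision.mem_vertMultiset [Fintype α] [Fintype β] [Nonempty α] [Nonempty β]
    (L : Bisubdivision (completeBipartiteGraph α β) B) {v : V} :
    v ∈ L.vertMultiset ↔ v ∈ L.verts := by
  simp only [vertMultiset, L.mem_verts_iff_exists_walk, L.mem_walk_support, mem_gridVerts,
    exists_or, Sum.exists, Sum.elim_inl, Sum.elim_inr, Function.comp_apply, exists_const,
    eq_comm (a := v)]

end Grid

/-! ### Conformal bisubdivisions and matchable complements -/

section PerfectMatchings

variable {B B' : SimpleGraph V} {V1 V2 S S' : Set V} {M M' : Set (Sym2 V)}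

theorem IsPMOn.mono (hle : B' ≤ B) (h : IsPMOn B' S M) : IsPMOn B S M :=
  ⟨fun e he => edgeSet_mono hle (h.1 e he), h.2⟩

theorem IsPMOn.union (h : IsPMOn B S M) (h' : IsPMOn B S' M') (hS : Disjoint S S') :
    IsPMOn B (S ∪ S') (M ∪ M') := by
  have hunique : ∀ {S S' M M'}, IsPMOn B S M → IsPMOn B S' M' → Disjoint S S' → ∀ v ∈ S,
      ∃! e, e ∈ M ∪ M' ∧ v ∈ e := by
    intro S S' M M' h h' hS v hv
    obtain ⟨e, ⟨heM, hve⟩, he⟩ := h.2.2 v hv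
    refine ⟨e, ⟨.inl heM, hve⟩, fun f ⟨hf, hvf⟩ => he f ⟨hf.resolve_right fun hf' => ?_, hvf⟩⟩
    exact Set.disjoint_left.1 hS hv (h'.2.1 f hf' v hvf)
  refine ⟨fun e he => he.elim (h.1 e) (h'.1 e),
    fun e he v hv => he.imp (fun he => h.2.1 e he v hv) fun he => h'.2.1 e he v hv, ?_⟩
  rintro v (hv | hv)
  · exact hunique h h' hS v hv
  · exact Set.union_comm M' M ▸ hunique h' h hS.symm v hv

theorem isPMOn_pair {x y : V} (hxy : B.Adj x y) : IsPMOn B {x, y} {s(x, y)} := by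
  refine ⟨?_, ?_, fun v hv => ⟨s(x, y), ⟨rfl, Sym2.mem_iff.2 hv⟩, fun e he => he.1⟩⟩
  · rintro e rfl
    exact hxy
  · rintro e rfl v hv
    exact Sym2.mem_iff.1 hv

theorem IsBipartitionOf.mono (hb : IsBipartitionOf B V1 V2) (hle : B' ≤ B) :
    IsBipartitionOf B' V1 V2 :=
  ⟨hb.1, hb.2.1, fun _ _ hxy => hb.2.2 (hle hxy)⟩

theorem IsBipartitionOf.exists_isPMOn (hb : IsBipartitionOf B V1 V2) {Z : Multiset V}
    (hZ : hb.bigraph.Matchable Z) (hnd : Z.Nodup) : ∃ M, IsPMOn B {v | v ∈ Z} M := by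
  induction hZ with
  | zero => exact ⟨∅, by simp, by simp, by simp⟩
  | @add_pair Z x y _ hxy ih =>
    rw [add_assoc, Multiset.nodup_add] at hnd
    obtain ⟨M, hM⟩ := ih hnd.1
    refine ⟨M ∪ {s(x, y)}, ?_⟩
    have hset : {v | v ∈ Z + {x} + {y}} = {v | v ∈ Z} ∪ {x, y} := by
      ext v
      simp [or_comm, or_left_comm]
    rw [hset]
    refine hM.union (isPMOn_pair hxy.2) (Set.disjoint_left.2 fun v hv hv' => ?_)
    exact Multiset.disjoint_left.1 hnd.2.2 hv (by simpa using hv')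

theorem Mate.matchable (hb : IsBipartitionOf B V1 V2) {μ : V → V} (hm : Mate B μ) {S : Finset V}
    (hS : ∀ v ∈ S, μ v ∈ S) : hb.bigraph.Matchable S.val := by
  classical
  have hpairs : ∀ Z : Multiset V, (∀ v ∈ Z, v ∈ V1) → hb.bigraph.Matchable (Z + Z.map μ) := by
    intro Z hZ
    induction Z using Multiset.induction_on with
    | empty => exact .zero
    | cons v Z ih =>
      have hZ' := Multiset.forall_mem_cons.1 hZ
      have heq : v ::ₘ Z + (v ::ₘ Z).map μ = Z + Z.map μ + ({v} + {μ v}) := by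
        rw [Multiset.map_cons, ← Multiset.singleton_add, ← Multiset.singleton_add]
        abel
      exact heq ▸ (ih hZ'.2).add (.pair ⟨hZ'.1, hm.adj v⟩)
  have hcolour : ∀ v, μ v ∈ V1 ↔ v ∉ V1 := fun v => by
    rw [hb.notMem_left, ← hb.2.2 (hm.adj v).symm]
  have himage : (S.filter (· ∈ V1)).image μ = S.filter (· ∉ V1) := by
    ext v
    simp only [Finset.mem_image, Finset.mem_filter]
    constructor
    · rintro ⟨w, ⟨hw, hw1⟩, rfl⟩
      exact ⟨hS w hw, fun h => (hcolour w).1 h hw1⟩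
    · rintro ⟨hv, hv1⟩
      exact ⟨μ v, ⟨hS v hv, (hcolour v).2 hv1⟩, hm.involutive v⟩
  have hblack := hpairs (S.filter (· ∈ V1)).val fun v hv => (Finset.mem_filter.1 hv).2
  rw [← Finset.image_val_of_injOn hm.involutive.injective.injOn, himage] at hblack
  simpa only [Finset.filter_val, Multiset.filter_add_not] using hblack

end PerfectMatchings

section Conformal

variable {H : SimpleGraph W} {B : SimpleGraph V} {V1 V2 : Set V}

theorem Bisubdivision.edgeSet_subset (L : Bisubdivision H B) : L.edgeSet ⊆ B.edgeSet := by
  rintro e ⟨x, y, h, he⟩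
  exact (L.link h).edges_subset_edgeSet he

theorem Bisubdivision.fromEdgeSet_le (L : Bisubdivision H B) : fromEdgeSet L.edgeSet ≤ B :=
  (fromEdgeSet_mono L.edgeSet_subset).trans_eq (fromEdgeSet_edgeSet B)

theorem Bisubdivision.conformalOn_of_isPMOn (L : Bisubdivision H B) {M M' : Set (Sym2 V)}
    (hM : IsPMOn (fromEdgeSet L.edgeSet) L.verts M) (hM' : IsPMOn B L.vertsᶜ M') :
    L.ConformalOn Set.univ := by
  refine ⟨M ∪ M', ?_, fun v hv => ?_⟩
  · rw [← Set.union_compl_self L.verts]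
    exact (hM.mono L.fromEdgeSet_le).union hM' disjoint_compl_right
  · obtain ⟨e, ⟨heM, hve⟩, he⟩ := hM.2.2 v hv
    have heL := hM.1 e heM
    rw [edgeSet_fromEdgeSet] at heL
    refine ⟨e, ⟨.inl heM, heL.1, hve⟩, fun f ⟨hf, _, hvf⟩ =>
      he f ⟨hf.resolve_right fun hf' => hM'.2.1 f hf' v hvf hv, hvf⟩⟩

theorem Bisubdivision.exists_mate_compl (L : Bisubdivision H B) (hL : L.ConformalOn Set.univ) :
    ∃ μ, Mate B μ ∧ ∀ v ∉ L.verts, μ v ∉ L.verts := by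
  obtain ⟨M, hM, hML⟩ := hL
  obtain ⟨μ, hm, hμ⟩ := hM.exists_mate
  refine ⟨μ, hm, fun v hv hv' => hv ?_⟩
  obtain ⟨e, ⟨heM, ⟨x, y, h, heL⟩, w, rfl⟩, -⟩ := hML _ hv'
  obtain rfl : v = w := by rw [← hμ _ _ heM, hm.involutive]
  exact ⟨x, y, h, Walk.snd_mem_support_of_mem_edges _ heL⟩

variable {α β : Type*}

theorem Bisubdivision.mem_left_iff (L : Bisubdivision (completeBipartiteGraph α β) B)
    (hb : IsBipartitionOf B V1 V2) (i : α) (j : β) :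
    L.bv (.inl i) ∈ V1 ↔ L.bv (.inr j) ∉ V1 :=
  not_iff_comm.1 (not_iff.1 ((hb.odd_length_iff (L.walk i j)).1 (L.link_odd _))) |>.symm

theorem gridVerts_eq_sum {ι : Type*} [Fintype ι] (A T : ι → V) (I : ι → ι → Multiset V) :
    gridVerts A T I = ∑ i, ({A i} + ∑ j, I i j + {T i}) := by
  simp only [gridVerts, Finset.sum_add_distrib]
  abel

theorem Bisubdivision.exists_isPMOn_verts {ι : Type*} [Finite ι] [Nonempty ι]
    (L : Bisubdivision (completeBipartiteGraph ι ι) B) (hb : IsBipartitionOf B V1 V2)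
    (hA : ∀ i, L.bv (.inl i) ∈ V1) (hT : ∀ j, L.bv (.inr j) ∉ V1) :
    ∃ M, IsPMOn (fromEdgeSet L.edgeSet) L.verts M := by
  cases nonempty_fintype ι
  have hedges : ∀ i j, ∀ e ∈ (L.walk i j).edges, e ∈ (fromEdgeSet L.edgeSet).edgeSet := by
    intro i j e he
    rw [edgeSet_fromEdgeSet]
    exact ⟨⟨_, _, _, he⟩, B.not_isDiag_of_mem_edgeSet ((L.walk i j).edges_subset_edgeSet he)⟩
  let q i j := (L.walk i j).transfer _ (hedges i j)
  have hq : ∀ i j, innerVerts (q i j) = innerVerts (L.walk i j) := fun i j => by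
    rw [innerVerts, Walk.support_transfer, innerVerts]
  have hb' := hb.mono L.fromEdgeSet_le
  have hmatch := (hb'.pathGrid hA hT q).matchable
  simp only [hq] at hmatch
  rw [← gridVerts_eq_sum] at hmatch
  obtain ⟨M, hM⟩ := hb'.exists_isPMOn hmatch L.nodup_vertMultiset
  refine ⟨M, ?_⟩
  have hverts : L.verts = {v | v ∈ L.vertMultiset} := Set.ext fun v => L.mem_vertMultiset.symm
  rwa [hverts]

theorem Bisubdivision.conformalOn_of_matchable {ι : Type*} [Fintype ι] [Nonempty ι] [Fintype V]
    (L : Bisubdivision (completeBipartiteGraph ι ι) B) (hb : IsBipartitionOf B V1 V2)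
    (hA : ∀ i, L.bv (.inl i) ∈ V1) (hT : ∀ j, L.bv (.inr j) ∉ V1) {Z : Multiset V}
    (hZ : hb.bigraph.Matchable Z) (hU : Z + L.vertMultiset = Finset.univ.val) :
    L.ConformalOn Set.univ := by
  obtain ⟨hnd, hmem⟩ := nodup_of_add_eq_univ hU
  obtain ⟨M, hM⟩ := L.exists_isPMOn_verts hb hA hT
  obtain ⟨M', hM'⟩ := hb.exists_isPMOn hZ hnd
  have hverts : {v | v ∈ Z} = L.vertsᶜ := Set.ext fun v => by
    rw [Set.mem_ofPred_eq, hmem, L.mem_vertMultiset, Set.mem_compl_iff]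
  exact L.conformalOn_of_isPMOn hM (hverts ▸ hM')

theorem Bisubdivision.exists_matchable_compl [Fintype α] [Fintype β] [Nonempty α] [Nonempty β]
    [Fintype V] (L : Bisubdivision (completeBipartiteGraph α β) B) (hL : L.ConformalOn Set.univ)
    (hb : IsBipartitionOf B V1 V2) :
    ∃ Z, hb.bigraph.Matchable Z ∧ L.vertMultiset + Z = Finset.univ.val := by
  classical
  obtain ⟨μ, hm, hμ⟩ := L.exists_mate_compl hL
  have hverts : L.vertMultiset = Finset.univ.val.filter (· ∈ L.verts) :=
    (Multiset.Nodup.ext L.nodup_vertMultiset (Finset.univ.nodup.filter _)).2 fun v => by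
      simp [L.mem_vertMultiset]
  refine ⟨(Finset.univ.filter (· ∉ L.verts)).val, Mate.matchable hb hm (by simpa using hμ), ?_⟩
  rw [hverts, Finset.filter_val, Multiset.filter_add_not]

theorem Bisubdivision.exists_k33Model [Fintype V] (L : Bisubdivision K33 B)
    (hL : L.ConformalOn Set.univ) (hb : IsBipartitionOf B V1 V2) (h0 : L.bv (.inl 0) ∈ V1) :
    ∃ P Q R b p q Z, hb.bigraph.K33Model P Q R b p q ∧ hb.bigraph.Matchable Z ∧
      P + Q + R + {b} + {p} + {q} + Z = Finset.univ.val := by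
  have hT j := (L.mem_left_iff hb 0 j).1 h0
  have hA i := (L.mem_left_iff hb i 0).2 (hT 0)
  obtain ⟨Z, hZ, hU⟩ := L.exists_matchable_compl hL hb
  refine ⟨_, _, _, _, _, _, Z, (hb.pathGrid hA hT L.walk).k33Model, hZ, ?_⟩
  rw [← hU, vertMultiset, gridVerts_eq_sum]
  simp only [Fin.sum_univ_three, Function.comp_apply]
  abel

end Conformal

/-! ### Four-cycles in conformal bisubdivisions -/

section FourCycles

variable {B : SimpleGraph V} {V1 V2 : Set V}

theorem exists_split_walk {s t y : V} (p : B.Walk s t) (hy : y ∈ p.support) (hs : s ≠ y)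
    (ht : t ≠ y) : ∃ (q : B.Walk s y) (r : B.Walk t y),
      (p.support : Multiset V) = {s} + innerVerts q + {y} + innerVerts r + {t} := by
  classical
  refine ⟨p.takeUntil y hy, (p.dropUntil y hy).reverse, ?_⟩
  have htail : ((p.dropUntil y hy).support.tail : Multiset V) =
      innerVerts (p.dropUntil y hy) + {t} := by
    refine add_left_cancel (a := {y}) ?_
    rw [← add_assoc, ← coe_support_eq _ ht.symm, Multiset.singleton_add, Multiset.cons_coe,
      Walk.cons_tail_support]
  conv_lhs => rw [← p.take_spec hy, Walk.support_append, ← Multiset.coe_add]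
  rw [coe_support_eq _ hs, htail, innerVerts_reverse, ← add_assoc]

theorem IsBipartitionOf.exists_walk_innerVerts (hb : IsBipartitionOf B V1 V2) {x y : V}
    {I : Multiset V} (h : hb.bigraph.PathOn x y ({x} + I + {y})) (hxy : x ≠ y) :
    ∃ p : B.Walk x y, innerVerts p = I := by
  obtain ⟨p, hp⟩ := hb.exists_walk h
  rw [coe_support_eq p hxy] at hp
  exact ⟨p, add_left_cancel (add_right_cancel hp)⟩

theorem IsC4In.rotate {a1 b1 a2 b2 : V} (h : IsC4In B a1 b1 a2 b2) : IsC4In B b1 a2 b2 a1 :=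
  ⟨(List.nodup_rotate (l := [a1, b1, a2, b2]) (n := 1)).2 h.1, h.2.2.1, h.2.2.2.1, h.2.2.2.2, h.2.1⟩

theorem IsC4In.ne_left {a1 b1 a2 b2 : V} (h : IsC4In B a1 b1 a2 b2) : a1 ≠ a2 := by
  rintro rfl
  simpa using h.1

theorem IsC4In.ne_right {a1 b1 a2 b2 : V} (h : IsC4In B a1 b1 a2 b2) : b1 ≠ b2 :=
  h.rotate.ne_left

theorem C4edges_rotate (a1 b1 a2 b2 : V) : C4edges b1 a2 b2 a1 = C4edges a1 b1 a2 b2 := by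
  ext f
  simp only [C4edges, Set.mem_insert_iff, Set.mem_singleton_iff]
  tauto

theorem IsC4In.fourCycle {a1 b1 a2 b2 : V} (h : IsC4In B a1 b1 a2 b2)
    (hb : IsBipartitionOf B V1 V2) (ha1 : a1 ∈ V1) : hb.bigraph.FourCycle a1 a2 b1 b2 := by
  obtain ⟨-, h11, h12, h22, h21⟩ := h
  have ha2 : a2 ∈ V1 := (hb.2.2 h12.symm).2 ((hb.2.2 h11).1 ha1)
  exact ⟨⟨ha1, h11⟩, ⟨ha1, h21.symm⟩, ⟨ha2, h12.symm⟩, ⟨ha2, h22⟩⟩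

theorem exists_isC4In_of_isCycle {c : V} (C : B.Walk c c) (hC : C.IsCycle) (hlen : C.length = 4) :
    ∃ v1 v2 v3, IsC4In B c v1 v2 v3 ∧ ∀ f ∈ C.edges, f ∈ C4edges c v1 v2 v3 := by
  have hnd := hC.support_nodup
  match C, hlen with
  | .cons h1 (.cons h2 (.cons h3 (.cons h4 .nil))), _ =>
    refine ⟨_, _, _, ⟨?_, h1, h2, h3, h4⟩, by simp [C4edges]⟩
    exact (List.nodup_rotate (n := 1)).1 hnd

theorem IsBipartitionOf.exists_isC4In (hb : IsBipartitionOf B V1 V2) {c : V} (C : B.Walk c c)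
    (hC : C.IsCycle) (hlen : C.length = 4) :
    ∃ a b1 a' b2, a ∈ V1 ∧ IsC4In B a b1 a' b2 ∧ ∀ f ∈ C.edges, f ∈ C4edges a b1 a' b2 := by
  obtain ⟨v1, v2, v3, h, hCe⟩ := exists_isC4In_of_isCycle C hC hlen
  by_cases hc : c ∈ V1
  · exact ⟨c, v1, v2, v3, hc, h, hCe⟩
  · refine ⟨v1, v2, v3, c, (hb.2.2 h.2.1.symm).2 (hb.notMem_left.1 hc), h.rotate, ?_⟩
    rwa [C4edges_rotate]

variable [Fintype V]

theorem IsBipartitionOf.exists_conformal_of_walks {ι : Type*} [Fintype ι] [Nonempty ι]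
    (hb : IsBipartitionOf B V1 V2) {A T : ι → V} (hA : ∀ i, A i ∈ V1) (hT : ∀ j, T j ∉ V1)
    (p : ∀ i j, B.Walk (A i) (T j)) {Z : Multiset V} (hZ : hb.bigraph.Matchable Z)
    (hU : Z + gridVerts A T (fun i j => innerVerts (p i j)) = Finset.univ.val) :
    ∃ L : Bisubdivision (completeBipartiteGraph ι ι) B, L.ConformalOn Set.univ ∧
      ∀ i j, ∀ e ∈ (p i j).edges, e ∈ L.edgeSet := by
  have hnd : (Z + gridVerts A T fun i j => innerVerts (p i j)).Nodup := hU ▸ Finset.univ.nodup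
  have hgrid := nodup_gridVerts.1 (Multiset.nodup_add.1 hnd).2.1
  let L := Bisubdivision.ofGrid hgrid fun i j => (hb.odd_length_iff (p i j)).2
    fun h => hT j (h.1 (hA i))
  exact ⟨L, L.conformalOn_of_matchable hb hA hT hZ hU,
    fun i j e he => ⟨.inl i, .inr j, by simp, he⟩⟩

theorem IsBipartitionOf.exists_conformal_of_fourCycle (hb : IsBipartitionOf B V1 V2)
    {a a' b1 b2 x y : V} (hc : hb.bigraph.FourCycle a a' b1 b2) (hx : x ∈ V1) (hy : y ∉ V1)
    (q : B.Walk a y) (q' : B.Walk a' y) (r : B.Walk b1 x) (r' : B.Walk b2 x) (e : B.Walk x y)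
    {Z : Multiset V} (hZ : hb.bigraph.Matchable Z)
    (hU : ({a} + innerVerts q + {y} + innerVerts q' + {a'}) +
      ({b1} + innerVerts r + {x} + innerVerts r' + {b2}) + innerVerts e + Z = Finset.univ.val) :
    ∃ L : Bisubdivision K33 B, L.ConformalOn Set.univ ∧ C4edges a b1 a' b2 ⊆ L.edgeSet := by
  let A := ![a, a', x]
  let T := ![b1, b2, y]
  let I := ![![0, 0, innerVerts q], ![0, 0, innerVerts q'],
    ![innerVerts r, innerVerts r', innerVerts e]]
  have hA : ∀ i, A i ∈ V1 := by simp [A, Fin.forall_fin_succ, hx, hc.edge11.1, hc.edge21.1]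
  have hb1 : b1 ∉ V1 := hb.bigraph.white_right hc.edge11
  have hb2 : b2 ∉ V1 := hc.right_white
  have hT : ∀ j, T j ∉ V1 := by simp [T, Fin.forall_fin_succ, hy, hb1, hb2]
  have hwalk : ∀ i j, ∃ p : B.Walk (A i) (T j), innerVerts p = I i j := by
    intro i j
    fin_cases i <;> fin_cases j
    · exact ⟨hc.edge11.2.toWalk, rfl⟩
    · exact ⟨hc.edge12.2.toWalk, rfl⟩
    · exact ⟨q, rfl⟩
    · exact ⟨hc.edge21.2.toWalk, rfl⟩
    · exact ⟨hc.edge22.2.toWalk, rfl⟩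
    · exact ⟨q', rfl⟩
    · exact ⟨r.reverse, innerVerts_reverse r⟩
    · exact ⟨r'.reverse, innerVerts_reverse r'⟩
    · exact ⟨e, rfl⟩
  choose p hp using hwalk
  obtain ⟨L, hL, hE⟩ := hb.exists_conformal_of_walks hA hT p hZ (by
    simp only [hp]
    rw [← hU]
    simp only [gridVerts, Fin.sum_univ_three]
    change Z + ({a} + {a'} + {x} + ({b1} + {b2} + {y}) +
      (0 + 0 + _ + (0 + 0 + _) + (_ + _ + _))) = _
    abel)
  have hedge : ∀ i j, I i j = 0 → s(A i, T j) ∈ L.edgeSet := fun i j h => hE i j _ <|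
    mem_edges_of_innerVerts_eq_zero _ (ne_of_mem_of_not_mem (hA i) (hT j)) ((hp i j).trans h)
  refine ⟨L, hL, ?_⟩
  rintro f (rfl | rfl | rfl | rfl)
  · exact hedge 0 0 rfl
  · exact Sym2.eq_swap ▸ hedge 1 0 rfl
  · exact hedge 1 1 rfl
  · exact Sym2.eq_swap ▸ hedge 0 1 rfl

theorem IsBipartitionOf.exists_conformal_of_linked (hb : IsBipartitionOf B V1 V2)
    (hbrace : IsBrace B) {a a' b1 b2 : V} (hc : hb.bigraph.FourCycle a a' b1 b2) (ha : a ≠ a')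
    (hne : b1 ≠ b2) (h : hb.bigraph.Linked Finset.univ.val a a' b1 b2) :
    ∃ L : Bisubdivision K33 B, L.ConformalOn Set.univ ∧ C4edges a b1 a' b2 ⊆ L.edgeSet := by
  obtain ⟨_, _, ⟨G, Z1, hG, hZ1, rfl⟩, ⟨H, Z2, hH, hZ2, rfl⟩, hU⟩ := h
  obtain ⟨v, hvH, hv⟩ := hH.exists_mem_black hne hc.right_white
  obtain ⟨w, hwG, hw⟩ := hG.exists_mem_white ha hc.right_black
  have hb1 : b1 ∉ V1 := hb.bigraph.white_right hc.edge11
  have hexc : hb.bigraph.excess H = -1 := by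
    have hends := hH.excess
    rw [hb.bigraph.excess_white hb1, hb.bigraph.excess_white hc.right_white] at hends
    omega
  obtain ⟨x, hxH, hx, y, hyG, hy, I, Z, hD, hZ, hI⟩ := (hb.expanding hbrace).hasEar hvH hv hwG hw
    hexc (hZ1.add hZ2) (by rw [← hU]; abel)
  obtain ⟨p, rfl⟩ := hb.exists_walk hG
  obtain ⟨p', rfl⟩ := hb.exists_walk hH
  obtain ⟨q, q', hq⟩ := exists_split_walk p hyG (ne_of_mem_of_not_mem hc.left_black hy)
    (ne_of_mem_of_not_mem hc.right_black hy)
  obtain ⟨r, r', hr⟩ := exists_split_walk p' hxH (ne_of_mem_of_not_mem hx hb1).symm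
    (ne_of_mem_of_not_mem hx hc.right_white).symm
  obtain ⟨e, rfl⟩ := hb.exists_walk_innerVerts hI (ne_of_mem_of_not_mem hx hy)
  refine hb.exists_conformal_of_fourCycle hc hx hy q q' r r' e hZ ?_
  rw [← hq, ← hr, add_assoc, ← hD, ← hU]
  abel

end FourCycles

/-- in a brace containing `K₃,₃`, every 4-cycle is contained in a
conformal bisubdivision of `K₃,₃`. -/
theorem statement_2 {V : Type*} [Fintype V] [DecidableEq V] (B : SimpleGraph V)
    (hbip : IsBipartite B) (hbrace : IsBrace B) (hK : ContainsK33 B)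
    {c : V} (C : B.Walk c c) (hC : C.IsCycle) (hlen : C.length = 4) :
    ∃ L : Bisubdivision K33 B, L.ConformalOn Set.univ ∧ ∀ f ∈ C.edges, f ∈ L.edgeSet := by
  obtain ⟨V1, V2, hb⟩ := hbip
  obtain ⟨L, hL⟩ := hK
  wlog h0 : L.bv (.inl 0) ∈ V1 generalizing V1 V2
  · exact this V2 V1 hb.symm (hb.notMem_left.1 h0)
  obtain ⟨a, b1, a', b2, ha, hC4, hCe⟩ := hb.exists_isC4In C hC hlen
  have hc := hC4.fourCycle hb ha
  obtain ⟨P, Q, R, b, p, q, Z, hmodel, hZ, hU⟩ := L.exists_k33Model hL hb h0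
  have hlinked := hmodel.linked_of_matchable hZ hU (hb.expanding hbrace) hc hC4.ne_right.symm
    (Finset.mem_univ a) (Finset.mem_univ a') (Finset.mem_univ b1) (Finset.mem_univ b2)
  obtain ⟨L', hL', hE⟩ := hb.exists_conformal_of_linked hbrace hc hC4.ne_left hC4.ne_right hlinked
  exact ⟨L', hL', fun f hf => hE (hCe f hf)⟩

end Paper
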